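/- arXiv:1710.00298 — 2 statements merged into one kernel-verified Lean document; each statement's English description precedes it below -/
import Mathlib

section
/- If H is a hypergraph on n vertices that contains no isolated vertices and no edges of size one, then γ_g(H) ≤ (5/8)·n. -/
attribute [local instance 10] Classical.propDecidable

variable {V : Type}

/-- The closed neighborhood of a vertex in a hypergraph given by its edge set. -/
noncomputable def closedNbhd [Fintype V] (H : Finset (Finset V)) (v : V) : Finset V :=
  Finset.univ.filter (fun u => u = v ∨ ∃ e ∈ H, u ∈ e ∧ v ∈ e)

private lemma card_sdiff_union_lt [Fintype V] {S T : Finset V} (h : ¬ T ⊆ S) :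
    (Finset.univ \ (S ∪ T)).card < (Finset.univ \ S).card := by
  classical
  obtain ⟨u, huT, huS⟩ := Finset.not_subset.mp h
  apply Finset.card_lt_card
  rw [Finset.ssubset_def]
  constructor
  · exact Finset.sdiff_subset_sdiff (Finset.Subset.refl _) Finset.subset_union_left
  · intro hc
    have hu : u ∈ Finset.univ \ S := by simp [huS]
    have := hc hu
    simp [huT] at this

/-- Value of the domination game on a hypergraph: `S` is the set of vertices already
dominated, `dom = true` iff Dominator is the next player to move.  A legal move is a vertex
dominating at least one new vertex; Dominator minimizes, Staller maximizes the total
number of moves, and both play optimally. -/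
noncomputable def domGameVal [Fintype V] (H : Finset (Finset V)) (dom : Bool) (S : Finset V) :
    ℕ :=
  if h : (Finset.univ.filter fun v => ¬ closedNbhd H v ⊆ S).Nonempty then
    1 + (if dom then
        (Finset.univ.filter fun v => ¬ closedNbhd H v ⊆ S).attach.inf'
          (Finset.attach_nonempty_iff.mpr h)
          (fun v => domGameVal H false (S ∪ closedNbhd H v.1))
      else
        (Finset.univ.filter fun v => ¬ closedNbhd H v ⊆ S).attach.sup'
          (Finset.attach_nonempty_iff.mpr h)
          (fun v => domGameVal H true (S ∪ closedNbhd H v.1)))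
  else 0
termination_by (Finset.univ \ S).card
decreasing_by
  · exact card_sdiff_union_lt (Finset.mem_filter.mp v.2).2
  · exact card_sdiff_union_lt (Finset.mem_filter.mp v.2).2

/-- The game domination number (Dominator starts). -/
noncomputable def gammaGame [Fintype V] (H : Finset (Finset V)) : ℕ :=
  domGameVal H true ∅

section Aux
open Finset

noncomputable def NB [Fintype V] (G : SimpleGraph V) (p : V) : Finset V :=
  univ.filter (fun u => u = p ∨ G.Adj p u)

noncomputable def dw [Fintype V] (G : SimpleGraph V) (S : Finset V) (v : V) : ℕ :=
  (univ.filter fun u => G.Adj v u ∧ u ∉ S).card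

lemma mem_NB [Fintype V] {G : SimpleGraph V} {p u : V} : u ∈ NB G p ↔ u = p ∨ G.Adj p u := by
  simp [NB]

lemma dw_anti [Fintype V] {G : SimpleGraph V} {S T : Finset V} (h : S ⊆ T) (v : V) :
    dw G T v ≤ dw G S v := by
  apply card_le_card
  intro u
  simp only [mem_filter, mem_univ, true_and]
  exact fun hu => ⟨hu.1, fun hs => hu.2 (h hs)⟩

lemma dw_pos [Fintype V] {G : SimpleGraph V} {S : Finset V} {v : V} :
    0 < dw G S v ↔ ∃ u, G.Adj v u ∧ u ∉ S := by
  simp [dw, card_pos, Finset.Nonempty]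

lemma dw_zero [Fintype V] {G : SimpleGraph V} {S : Finset V} {v : V} :
    dw G S v = 0 ↔ ∀ u, G.Adj v u → u ∈ S := by
  simp [dw, filter_eq_empty_iff]

lemma dw_le_of [Fintype V] {G : SimpleGraph V} {S : Finset V} {v : V} (T : Finset V)
    (h : ∀ u, G.Adj v u → u ∉ S → u ∈ T) : dw G S v ≤ T.card := by
  apply card_le_card
  intro u
  simp only [mem_filter, mem_univ, true_and]
  exact fun hu => h u hu.1 hu.2

lemma le_dw_of [Fintype V] {G : SimpleGraph V} {S : Finset V} {v : V} (T : Finset V)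
    (h : ∀ u ∈ T, G.Adj v u ∧ u ∉ S) : T.card ≤ dw G S v := by
  apply card_le_card
  intro u hu
  simp only [mem_filter, mem_univ, true_and]
  exact h u hu

lemma dw_ge2 [Fintype V] {G : SimpleGraph V} {S : Finset V} {v a b : V}
    (ha : G.Adj v a) (ha' : a ∉ S) (hb : G.Adj v b) (hb' : b ∉ S) (hab : a ≠ b) :
    2 ≤ dw G S v := by
  have := le_dw_of (G := G) (S := S) (v := v) {a, b} (by
    intro u hu
    simp only [mem_insert, mem_singleton] at hu
    rcases hu with rfl | rfl
    · exact ⟨ha, ha'⟩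
    · exact ⟨hb, hb'⟩)
  rwa [card_pair hab] at this

lemma dw_ge3 [Fintype V] {G : SimpleGraph V} {S : Finset V} {v a b c : V}
    (ha : G.Adj v a) (ha' : a ∉ S) (hb : G.Adj v b) (hb' : b ∉ S) (hc : G.Adj v c) (hc' : c ∉ S)
    (hab : a ≠ b) (hac : a ≠ c) (hbc : b ≠ c) :
    3 ≤ dw G S v := by
  have := le_dw_of (G := G) (S := S) (v := v) {a, b, c} (by
    intro u hu
    simp only [mem_insert, mem_singleton] at hu
    rcases hu with rfl | rfl | rfl
    · exact ⟨ha, ha'⟩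
    · exact ⟨hb, hb'⟩
    · exact ⟨hc, hc'⟩)
  rwa [card_eq_three.mpr ⟨a, b, c, hab, hac, hbc, rfl⟩] at this

lemma dw_uniq [Fintype V] {G : SimpleGraph V} {S : Finset V} {v a b : V}
    (h : dw G S v ≤ 1)
    (ha : G.Adj v a) (ha' : a ∉ S) (hb : G.Adj v b) (hb' : b ∉ S) : a = b := by
  by_contra hab
  have := dw_ge2 ha ha' hb hb' hab
  omega

lemma dw_two_ex [Fintype V] {G : SimpleGraph V} {S : Finset V} {v a : V}
    (h : 2 ≤ dw G S v) : ∃ b, b ≠ a ∧ G.Adj v b ∧ b ∉ S := by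
  by_contra hc
  push Not at hc
  have := dw_le_of (G := G) (S := S) (v := v) {a} (by
    intro u hu hu'
    by_contra h2
    exact hu' (hc u (by simpa using h2) hu))
  simp at this
  omega

lemma dw_insert [Fintype V] {G : SimpleGraph V} {S : Finset V} {v y : V} (hy : y ∉ S) :
    dw G (insert y S) v + (if G.Adj v y then 1 else 0) = dw G S v := by
  by_cases h : G.Adj v y
  · rw [if_pos h, dw, dw, ← card_erase_add_one (s := univ.filter fun u => G.Adj v u ∧ u ∉ S) (a := y)
      (by simp [h, hy])]
    congr 2
    ext u
    simp only [mem_filter, mem_univ, true_and, mem_insert, mem_erase]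
    tauto
  · rw [if_neg h, dw, dw, add_zero]
    congr 1
    ext u
    simp only [mem_filter, mem_univ, true_and, mem_insert]
    constructor
    · tauto
    · rintro ⟨h1, h2⟩
      refine ⟨h1, ?_⟩
      rintro (rfl | h3)
      · exact h h1
      · exact h2 h3

lemma sum_adj_white [Fintype V] (G : SimpleGraph V) (S : Finset V) (y : V) (c : ℕ) :
    (∑ v, if G.Adj y v ∧ v ∉ S then c else 0) = c * dw G S y := by
  rw [← sum_filter, sum_const, dw, smul_eq_mul, mul_comm]

lemma mono_of_step (Q : Finset V → Prop) (hQ : ∀ S T, Q S → S ⊆ T → Q T) (f : Finset V → ℕ)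
    (hs : ∀ S, Q S → ∀ y, y ∉ S → f (insert y S) ≤ f S) :
    ∀ S T, Q S → S ⊆ T → f T ≤ f S := by
  intro S T hS hT
  have key : ∀ D : Finset V, f (S ∪ D) ≤ f S := by
    intro D
    induction D using Finset.induction_on with
    | empty => simp
    | insert a D ha ih =>
      by_cases h : a ∈ S ∪ D
      · have : S ∪ insert a D = S ∪ D := by
          rw [union_insert, insert_eq_self.mpr h]
        rw [this]; exact ih
      · rw [union_insert]
        exact (hs _ (hQ _ _ hS subset_union_left) a h).trans ih
  have := key T
  rwa [union_eq_right.mpr hT] at this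

/-- abstract game value -/
structure GV [Fintype V] (G : SimpleGraph V) (val : Finset V → ℕ) : Prop where
  full : val univ = 0
  step : ∀ S p X, ¬ NB G p ⊆ S → 16 ≤ X →
    (∀ q, ¬ NB G q ⊆ S ∪ NB G p → 16 * val (S ∪ NB G p ∪ NB G q) + 32 ≤ X) → 16 * val S ≤ X

lemma pot [Fintype V] {G : SimpleGraph V} {val : Finset V → ℕ} (hv : GV G val)
    (Inv : Finset V → Prop) (F : Finset V → ℕ) (hinv : ∀ S T, Inv S → S ⊆ T → Inv T)
    (hD : ∀ S, Inv S → S ≠ univ → 16 * val S ≤ F S ∨ ∃ p, ¬ NB G p ⊆ S ∧ ∃ a b, 16 ≤ a ∧ 32 ≤ a + b ∧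
      F (S ∪ NB G p) + a ≤ F S ∧
      ∀ q, ¬ NB G q ⊆ S ∪ NB G p → F (S ∪ NB G p ∪ NB G q) + b ≤ F (S ∪ NB G p)) :
    ∀ S, Inv S → 16 * val S ≤ F S := by
  intro S
  induction hn : (univ \ S).card using Nat.strong_induction_on generalizing S with
  | _ n ih =>
    intro hS
    by_cases hu : S = univ
    · rw [hu, hv.full]; simp
    rcases hD S hS hu with h | ⟨p, hp, a, b, ha, hab, h1, h2⟩
    · exact h
    · refine hv.step S p _ hp (by omega) ?_
      intro q hq
      have h3 := h2 q hq
      have hsub : S ⊆ S ∪ NB G p ∪ NB G q := by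
        rw [union_assoc]; exact subset_union_left
      have := ih (univ \ (S ∪ NB G p ∪ NB G q)).card (by
        rw [← hn]
        apply card_lt_card
        rw [ssubset_iff_subset_ne]
        refine ⟨sdiff_subset_sdiff (Subset.refl _) hsub, ?_⟩
        intro he
        obtain ⟨u, hu1, hu2⟩ := not_subset.mp hp
        have hu3 : u ∈ univ \ S := by simp [hu2]
        rw [← he] at hu3
        simp [hu1] at hu3) _ rfl (hinv _ _ hS hsub)
      omega

/-- sum comparison with pointwise gains -/
lemma sum_gain [Fintype V] (f f' d e : V → ℕ) (h : ∀ v, f' v + d v ≤ f v + e v) :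
    (∑ v, f' v) + ∑ v, d v ≤ (∑ v, f v) + ∑ v, e v := by
  rw [← sum_add_distrib, ← sum_add_distrib]
  exact sum_le_sum fun v _ => h v

noncomputable def w4 [Fintype V] (G : SimpleGraph V) (S : Finset V) (v : V) : ℕ :=
  if v ∈ S then 0 else if dw G S v = 0 then 16 else 12

noncomputable def F4 [Fintype V] (G : SimpleGraph V) (S : Finset V) : ℕ := ∑ v, w4 G S v

lemma F4_step [Fintype V] {G : SimpleGraph V} {S : Finset V} (h : ∀ v, v ∉ S → dw G S v ≤ 1)
    {y : V} (hy : y ∉ S) :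
    F4 G (insert y S) + 8 ≤ F4 G S ∧ (dw G S y = 0 → F4 G (insert y S) + 16 ≤ F4 G S) := by
  have key := sum_gain (w4 G S) (w4 G (insert y S)) (fun v => if v = y then w4 G S y else 0)
    (fun v => if G.Adj y v ∧ v ∉ S then 4 else 0) (by
      intro v
      by_cases hvy : v = y
      · subst hvy; simp [w4]
      · by_cases hvS : v ∈ S
        · simp [w4, hvS, hvy]
        · have h1 := dw_insert (G := G) (v := v) hy
          have h2 := h v hvS
          by_cases ha : G.Adj y v
          · have ha' := ha.symm
            simp only [w4, hvS, hvy, ha, ha', mem_insert, or_self, if_true, if_false, not_false_eq_true, and_self] at h1 ⊢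
            have h4 : dw G S v = 1 := by omega
            have h5 : dw G (insert y S) v = 0 := by omega
            simp [h4, h5]
          · have ha' : ¬ G.Adj v y := fun hh => ha hh.symm
            simp only [ha', if_false, add_zero] at h1
            simp [w4, hvS, hvy, ha, h1])
  rw [sum_adj_white] at key
  simp only [sum_ite_eq', mem_univ, if_true] at key
  have h3 := h y hy
  change F4 G (insert y S) + _ ≤ F4 G S + _ at key
  unfold w4 at key
  rw [if_neg hy] at key
  constructor
  · split_ifs at key <;> omega
  · intro h0
    rw [if_pos h0] at key
    omega

lemma L4 [Fintype V] {G : SimpleGraph V} {val : Finset V → ℕ} (hv : GV G val) (S : Finset V)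
    (h : ∀ v, v ∉ S → dw G S v ≤ 1) : 16 * val S ≤ F4 G S := by
  have hQ : ∀ S T : Finset V, (∀ v, v ∉ S → dw G S v ≤ 1) → S ⊆ T → (∀ v, v ∉ T → dw G T v ≤ 1) :=
    fun S T h hST v hvT => (dw_anti hST v).trans (h v fun hh => hvT (hST hh))
  have hm := mono_of_step (fun S => ∀ v, v ∉ S → dw G S v ≤ 1) hQ (F4 G)
    (fun S hS y hy => by have := (F4_step hS hy).1; omega)
  refine pot hv (fun S => ∀ v, v ∉ S → dw G S v ≤ 1) (F4 G) hQ ?_ S h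
  intro S hS hu
  right
  by_cases hx : ∃ v, v ∉ S ∧ dw G S v = 1
  · obtain ⟨v, hvS, hv1⟩ := hx
    refine ⟨v, fun hh => hvS (hh (by simp [mem_NB])), 24, 8, by norm_num, by norm_num, ?_, ?_⟩
    · obtain ⟨u, hu1, hu2⟩ := dw_pos.mp (by omega : 0 < dw G S v)
      have s1 := (F4_step hS hvS).1
      have hS1 := hQ S (insert v S) hS (subset_insert _ _)
      have huv : u ∉ insert v S := by
        simp [hu2, hu1.ne']
      have e1 := dw_insert (G := G) (S := S) (v := u) hvS
      rw [if_pos hu1.symm] at e1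
      have e2 := hS u hu2
      have s2 := (F4_step hS1 huv).2 (by omega)
      have s3 := hm (insert u (insert v S)) (S ∪ NB G v) (hQ _ _ hS1 (subset_insert _ _)) (by
        intro z hz
        simp only [mem_insert, mem_union, mem_NB] at hz ⊢
        rcases hz with rfl | rfl | h <;> tauto)
      omega
    · intro q hq
      obtain ⟨y, hy1, hy2⟩ := not_subset.mp hq
      have hS1 := hQ S (S ∪ NB G v) hS subset_union_left
      have s1 := (F4_step hS1 hy2).1
      have s3 := hm (insert y (S ∪ NB G v)) (S ∪ NB G v ∪ NB G q) (hQ _ _ hS1 (subset_insert _ _)) (by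
        intro z hz
        rw [mem_insert] at hz
        rw [mem_union]
        rcases hz with rfl | h <;> tauto)
      omega
  · push Not at hx
    have hx0 : ∀ v, v ∉ S → dw G S v = 0 := fun v hvS => by
      have := hS v hvS; have := hx v hvS; omega
    obtain ⟨v, hvS⟩ : ∃ v, v ∉ S := by
      by_contra hc; push Not at hc; exact hu (eq_univ_of_forall hc)
    refine ⟨v, fun hh => hvS (hh (by simp [mem_NB])), 16, 16, by norm_num, by norm_num, ?_, ?_⟩
    · have s1 := (F4_step hS hvS).2 (hx0 v hvS)
      have hS1 := hQ S (insert v S) hS (subset_insert _ _)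
      have s3 := hm (insert v S) (S ∪ NB G v) hS1 (by
        intro z hz
        simp only [mem_insert, mem_union, mem_NB] at hz ⊢
        tauto)
      omega
    · intro q hq
      obtain ⟨y, hy1, hy2⟩ := not_subset.mp hq
      have hS1 := hQ S (S ∪ NB G v) hS subset_union_left
      have hy3 : y ∉ S := fun hh => hy2 (mem_union_left _ hh)
      have s1 := (F4_step hS1 hy2).2 (by
        have := dw_anti (G := G) (S := S) (T := S ∪ NB G v) subset_union_left y
        have := hx0 y hy3; omega)
      have s3 := hm (insert y (S ∪ NB G v)) (S ∪ NB G v ∪ NB G q) (hQ _ _ hS1 (subset_insert _ _)) (by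
        intro z hz
        rw [mem_insert] at hz
        rw [mem_union]
        rcases hz with rfl | h <;> tauto)
      omega



def pr (G : SimpleGraph V) (S : Finset V) (w u v : V) : Prop :=
  G.Adj w u ∧ G.Adj u v ∧ v ≠ w ∧ u ∉ S ∧ v ∉ S ∧ (∀ z, G.Adj u z → z = w ∨ z = v) ∧
    (∀ z, G.Adj v z → z = u)

noncomputable def lc [Fintype V] (G : SimpleGraph V) (S : Finset V) (w : V) : ℕ :=
  (univ.filter fun u => ∃ v, pr G S w u v).card

def hasLeaf (G : SimpleGraph V) (S : Finset V) (w : V) : Prop :=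
  ∃ x, G.Adj w x ∧ x ∉ S ∧ ∀ z, G.Adj x z → z = w

def InPair (G : SimpleGraph V) (S : Finset V) (w p : V) : Prop :=
  ∃ u v, pr G S w u v ∧ (p = u ∨ p = v)

def spc [Fintype V] (G : SimpleGraph V) (S : Finset V) (w : V) : Prop :=
  (hasLeaf G S w ∧ 2 ≤ dw G S w) ∨ lc G S w = 2

noncomputable def wt1 [Fintype V] (G : SimpleGraph V) (S : Finset V) (v : V) : ℕ :=
  if v ∉ S then 10 else if dw G S v = 0 then 0 else if spc G S v then 8 else 6

noncomputable def Psi1 [Fintype V] (G : SimpleGraph V) (S : Finset V) : ℕ := ∑ v, wt1 G S v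

lemma pr_anti {G : SimpleGraph V} {S T : Finset V} (h : S ⊆ T) {w u v : V} (hp : pr G T w u v) :
    pr G S w u v :=
  ⟨hp.1, hp.2.1, hp.2.2.1, fun hh => hp.2.2.2.1 (h hh), fun hh => hp.2.2.2.2.1 (h hh),
    hp.2.2.2.2.2.1, hp.2.2.2.2.2.2⟩

lemma InPair_white {G : SimpleGraph V} {S : Finset V} {w p : V} (h : InPair G S w p) : p ∉ S := by
  obtain ⟨u, v, hp, rfl | rfl⟩ := h
  · exact hp.2.2.2.1
  · exact hp.2.2.2.2.1

lemma InPair_uniq {G : SimpleGraph V} {S : Finset V} {w w' p : V} (h : InPair G S w p)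
    (h' : InPair G S w' p) (hw : w ∈ S) (hw' : w' ∈ S) : w = w' := by
  obtain ⟨u, v, ⟨a1, a2, a3, a4, a5, a6, a7⟩, hp⟩ := h
  obtain ⟨u', v', ⟨b1, b2, b3, b4, b5, b6, b7⟩, hp'⟩ := h'
  rcases hp with rfl | rfl <;> rcases hp' with rfl | rfl
  · rcases a6 w' b1.symm with h | h
    · exact h.symm
    · rw [h] at hw'; exact absurd hw' a5
  · have h1 := b7 _ a1.symm
    have h2 := b7 _ a2
    exact absurd (h2.trans h1.symm) a3
  · have h1 := a7 _ b1.symm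
    have h2 := a7 _ b2
    exact absurd (h2.trans h1.symm) b3
  · have h1 := a7 _ b2.symm
    subst h1
    rcases a6 w' b1.symm with h | h
    · exact h.symm
    · exact absurd h.symm b3

lemma pr_keep [Fintype V] {G : SimpleGraph V} {S : Finset V} {w u v p : V} (h : pr G S w u v)
    (hw : p ≠ w) (hu : p ≠ u) (hv : p ≠ v) : pr G (S ∪ NB G p) w u v := by
  obtain ⟨a1, a2, a3, a4, a5, a6, a7⟩ := h
  refine ⟨a1, a2, a3, ?_, ?_, a6, a7⟩
  · simp only [mem_union, mem_NB, not_or]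
    refine ⟨a4, fun h => hu h.symm, fun h => ?_⟩
    rcases a6 p h.symm with h | h
    · exact hw h
    · exact hv h
  · simp only [mem_union, mem_NB, not_or]
    refine ⟨a5, fun h => hv h.symm, fun h => ?_⟩
    exact hu (a7 p h.symm)

lemma lc_anti [Fintype V] {G : SimpleGraph V} {S T : Finset V} (h : S ⊆ T) (w : V) :
    lc G T w ≤ lc G S w := by
  apply card_le_card
  intro u
  simp only [mem_filter, mem_univ, true_and]
  rintro ⟨v, hv⟩
  exact ⟨v, pr_anti h hv⟩

lemma lc_keep [Fintype V] {G : SimpleGraph V} {S : Finset V} {w p : V} (hw : p ≠ w)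
    (h : ¬ InPair G S w p) : lc G (S ∪ NB G p) w = lc G S w := by
  apply le_antisymm (lc_anti subset_union_left w)
  apply card_le_card
  intro u
  simp only [mem_filter, mem_univ, true_and]
  rintro ⟨v, hv⟩
  exact ⟨v, pr_keep hv hw (fun hh => h ⟨u, v, hv, Or.inl hh⟩) (fun hh => h ⟨u, v, hv, Or.inr hh⟩)⟩

lemma lc_le_dw [Fintype V] {G : SimpleGraph V} {S : Finset V} {w : V} : lc G S w ≤ dw G S w := by
  apply card_le_card
  intro u
  simp only [mem_filter, mem_univ, true_and]
  rintro ⟨v, hv⟩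
  exact ⟨hv.1, hv.2.2.2.1⟩

/-- facts at the start of phase two -/
structure Ph [Fintype V] (G : SimpleGraph V) (S0 : Finset V) : Prop where
  iso : ∀ v, ∃ u, G.Adj v u
  h1 : ∀ v, v ∉ S0 → dw G S0 v ≤ 2
  h3 : ∀ u v, u ∉ S0 → v ∉ S0 → G.Adj u v → dw G S0 u = 2 → dw G S0 v = 2
  hb3 : ∀ b, b ∈ S0 → dw G S0 b ≤ 3
  hK1 : ∀ b x, b ∈ S0 → x ∉ S0 → G.Adj b x → dw G S0 x = 0 → dw G S0 b ≤ 2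
  hK2 : ∀ b x y, b ∈ S0 → x ∉ S0 → y ∉ S0 → G.Adj b x → G.Adj b y → dw G S0 x = 0 →
    dw G S0 y = 0 → x = y
  hKl : ∀ b x, b ∈ S0 → x ∉ S0 → G.Adj b x → (∀ z, G.Adj x z → z = b) → dw G S0 b = 1
  h6 : ∀ b u v, b ∈ S0 → u ∉ S0 → v ∉ S0 → G.Adj b u → G.Adj b v → G.Adj u v →
    dw G S0 u = 1 → False

def Uv [Fintype V] (G : SimpleGraph V) (S0 : Finset V) (x : V) : Prop :=
  x ∉ S0 ∧ dw G S0 x = 0 ∧ ∀ b, G.Adj x b → dw G S0 b ≠ 1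

noncomputable def ww [Fintype V] (G : SimpleGraph V) (S0 S : Finset V) (v : V) : ℕ :=
  if v ∈ S then 0 else if dw G S0 v = 2 then 16 - 3 * dw G S v else
    if dw G S0 v = 1 then (if dw G S v = 0 then 16 else 10) else if Uv G S0 v then 14 else 16

def Qv [Fintype V] (G : SimpleGraph V) (S0 S : Finset V) (u : V) : Prop :=
  u ∉ S ∧ dw G S0 u = 1 ∧ dw G S u = 1

noncomputable def dK [Fintype V] (G : SimpleGraph V) (S0 S : Finset V) (b : V) : ℕ :=
  (univ.filter fun u => G.Adj b u ∧ Qv G S0 S u).card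

def flg [Fintype V] (G : SimpleGraph V) (S0 S : Finset V) (b : V) : Prop :=
  ∃ u, G.Adj b u ∧ u ∉ S ∧ dw G S0 u = 2 ∧ 1 ≤ dw G S u

def unb [Fintype V] (G : SimpleGraph V) (S0 S : Finset V) (b : V) : Prop :=
  ∃ x, G.Adj b x ∧ x ∉ S ∧ Uv G S0 x

noncomputable def wb [Fintype V] (G : SimpleGraph V) (S0 S : Finset V) (b : V) : ℕ :=
  if b ∉ S0 then 0 else if 2 ≤ dK G S0 S b then (if lc G S b = 2 then 8 else 6) else
    if dK G S0 S b = 1 ∨ flg G S0 S b then 4 else if unb G S0 S b then 2 else 0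

noncomputable def Wp [Fintype V] (G : SimpleGraph V) (S0 S : Finset V) : ℕ := ∑ v, ww G S0 S v
noncomputable def Bp [Fintype V] (G : SimpleGraph V) (S0 S : Finset V) : ℕ := ∑ v, wb G S0 S v

noncomputable def gn [Fintype V] (G : SimpleGraph V) (S0 S : Finset V) (y : V) : ℕ :=
  if dw G S0 y = 2 then 16 - 6 * dw G S y else if dw G S0 y = 1 then
    (if dw G S y = 0 then 16 else 4) else 14

lemma Wp_step [Fintype V] {G : SimpleGraph V} {S0 S : Finset V} (P : Ph G S0) (hS : S0 ⊆ S)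
    {y : V} (hy : y ∉ S) : Wp G S0 (insert y S) + gn G S0 S y ≤ Wp G S0 S := by
  have hy0 : y ∉ S0 := fun h => hy (hS h)
  have key := sum_gain (ww G S0 S) (ww G S0 (insert y S)) (fun v => if v = y then ww G S0 S y else 0)
    (fun v => if G.Adj y v ∧ v ∉ S then (if dw G S0 y = 2 then 3 else 6) else 0) (by
      intro v
      by_cases hvy : v = y
      · subst hvy; simp [ww]
      by_cases hvS : v ∈ S
      · simp [ww, hvS, hvy]
      have hv0 : v ∉ S0 := fun h => hvS (hS h)
      have h1 := dw_insert (G := G) (v := v) hy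
      have h2 := dw_anti (G := G) hS v
      have hP1 := P.h1 v hv0
      by_cases ha : G.Adj y v
      · have ha' := ha.symm
        have c1 := P.h3 y v hy0 hv0 ha
        have c2 := P.h3 v y hv0 hy0 ha'
        have c3 : 0 < dw G S0 y := dw_pos.mpr ⟨v, ha, hv0⟩
        have c4 : 0 < dw G S0 v := dw_pos.mpr ⟨y, ha', hy0⟩
        rw [if_pos ha'] at h1
        simp only [ww, hvS, hvy, ha, mem_insert, or_self, if_true, if_false, not_false_eq_true, and_self]
        by_cases e : dw G S0 v = 2
        · simp only [e, c2 e, if_true]; omega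
        · have e1 : dw G S0 v = 1 := by omega
          have e2 : dw G S0 y ≠ 2 := fun h => e (c1 h)
          simp only [e1, e2, if_true, if_false]
          split_ifs <;> omega
      · have ha' : ¬ G.Adj v y := fun hh => ha hh.symm
        simp only [ha', if_false, add_zero] at h1
        simp [ww, hvS, hvy, ha, h1])
  rw [sum_adj_white] at key
  simp only [sum_ite_eq', mem_univ, if_true] at key
  change Wp G S0 (insert y S) + _ ≤ Wp G S0 S + _ at key
  have h2 := dw_anti (G := G) hS y
  have hP1 := P.h1 y hy0
  unfold ww at key
  unfold gn
  rw [if_neg hy] at key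
  by_cases e : dw G S0 y = 2
  · simp only [e, if_true] at key ⊢; omega
  · by_cases e1 : dw G S0 y = 1
    · simp only [e1, if_true] at key ⊢
      split_ifs at key ⊢ <;> omega
    · have e2 : dw G S0 y = 0 := by omega
      have e3 : dw G S y = 0 := by omega
      simp only [e2, e3] at key ⊢
      split_ifs at key ⊢ <;> omega

lemma gn_ge4 [Fintype V] {G : SimpleGraph V} {S0 S : Finset V} (hS : S0 ⊆ S) (y : V) :
    4 ≤ gn G S0 S y := by
  have h2 := dw_anti (G := G) hS y
  unfold gn
  split_ifs <;> omega

lemma Wp_mono [Fintype V] {G : SimpleGraph V} {S0 S T : Finset V} (P : Ph G S0) (hS : S0 ⊆ S)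
    (hT : S ⊆ T) : Wp G S0 T ≤ Wp G S0 S :=
  mono_of_step (fun S => S0 ⊆ S) (fun _ _ h h' => h.trans h') (Wp G S0)
    (fun S hS y hy => by have := Wp_step P hS hy; omega) S T hS hT

lemma Wp_one [Fintype V] {G : SimpleGraph V} {S0 S T : Finset V} (P : Ph G S0) (hS : S0 ⊆ S)
    (hT : S ⊆ T) {y : V} (hy : y ∉ S) (hyT : y ∈ T) :
    Wp G S0 T + gn G S0 S y ≤ Wp G S0 S := by
  have h1 := Wp_step P hS hy
  have h2 := Wp_mono P (S := insert y S) (T := T) (hS.trans (subset_insert _ _))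
    (insert_subset hyT hT)
  omega

lemma Wp_two [Fintype V] {G : SimpleGraph V} {S0 S T : Finset V} (P : Ph G S0) (hS : S0 ⊆ S)
    (hT : S ⊆ T) {y z : V} (hy : y ∉ S) (hyT : y ∈ T) (hz : z ∉ S) (hzT : z ∈ T) (hyz : z ≠ y) :
    Wp G S0 T + gn G S0 S y + gn G S0 (insert y S) z ≤ Wp G S0 S := by
  have h1 := Wp_step P hS hy
  have h2 := Wp_one P (S := insert y S) (T := T) (hS.trans (subset_insert _ _))
    (insert_subset hyT hT) (y := z) (by simp [hz, hyz]) hzT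
  omega

lemma Qv_anti [Fintype V] {G : SimpleGraph V} {S0 S T : Finset V} (hS : S0 ⊆ S) (hT : S ⊆ T)
    {u : V} (h : Qv G S0 T u) : Qv G S0 S u := by
  obtain ⟨a, b, c⟩ := h
  have h1 := dw_anti (G := G) hS u
  have h2 := dw_anti (G := G) hT u
  exact ⟨fun hh => a (hT hh), b, by omega⟩

lemma dK_anti [Fintype V] {G : SimpleGraph V} {S0 S T : Finset V} (hS : S0 ⊆ S) (hT : S ⊆ T)
    (b : V) : dK G S0 T b ≤ dK G S0 S b := by
  apply card_le_card
  intro u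
  simp only [mem_filter, mem_univ, true_and]
  exact fun h => ⟨h.1, Qv_anti hS hT h.2⟩

lemma flg_anti [Fintype V] {G : SimpleGraph V} {S0 S T : Finset V} (hT : S ⊆ T)
    {b : V} (h : flg G S0 T b) : flg G S0 S b := by
  obtain ⟨u, a1, a2, a3, a4⟩ := h
  exact ⟨u, a1, fun hh => a2 (hT hh), a3, a4.trans (dw_anti hT u)⟩

lemma unb_anti [Fintype V] {G : SimpleGraph V} {S0 S T : Finset V} (hT : S ⊆ T)
    {b : V} (h : unb G S0 T b) : unb G S0 S b := by
  obtain ⟨u, a1, a2, a3⟩ := h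
  exact ⟨u, a1, fun hh => a2 (hT hh), a3⟩

lemma dK_zero [Fintype V] {G : SimpleGraph V} {S0 S : Finset V} {b : V}
    (h : ∀ u, G.Adj b u → u ∈ S) : dK G S0 S b = 0 := by
  simp only [dK, card_eq_zero, filter_eq_empty_iff, mem_univ, true_implies]
  rintro u ⟨h1, h2, _⟩
  exact h2 (h u h1)

lemma wb_zero [Fintype V] {G : SimpleGraph V} {S0 S : Finset V} {b : V}
    (h : ∀ u, G.Adj b u → u ∈ S) : wb G S0 S b = 0 := by
  have h1 : ¬ flg G S0 S b := fun ⟨u, a1, a2, _⟩ => a2 (h u a1)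
  have h2 : ¬ unb G S0 S b := fun ⟨u, a1, a2, _⟩ => a2 (h u a1)
  simp [wb, dK_zero h, h1, h2]

lemma wb_mono [Fintype V] {G : SimpleGraph V} {S0 S : Finset V} (hS : S0 ⊆ S) (p b : V) :
    wb G S0 (S ∪ NB G p) b ≤ wb G S0 S b + if b ∈ S0 ∧ InPair G S b p then 2 else 0 := by
  by_cases hb : b ∈ S0
  swap
  · simp [wb, hb]
  by_cases hpb : p = b
  · subst hpb
    rw [wb_zero]
    · omega
    · intro u hu; simp [mem_NB, hu]
  have h1 := dK_anti (G := G) hS (T := S ∪ NB G p) subset_union_left b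
  have h2 : flg G S0 (S ∪ NB G p) b → flg G S0 S b := flg_anti subset_union_left
  have h3 : unb G S0 (S ∪ NB G p) b → unb G S0 S b := unb_anti subset_union_left
  by_cases hi : InPair G S b p
  · simp only [wb, hb, hi, not_true_eq_false, if_false, and_self, if_true]
    split_ifs <;> first | omega | (exfalso; tauto) | (exfalso; grind)
  · rw [if_neg (by tauto)]
    have h4 := lc_keep hpb hi
    simp only [wb, hb, not_true_eq_false, if_false, h4]
    split_ifs <;> first | omega | (exfalso; tauto) | (exfalso; grind)

lemma Bp_mono [Fintype V] {G : SimpleGraph V} {S0 S : Finset V} (hS : S0 ⊆ S) (p : V)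
    (h : ∀ b, b ∈ S0 → ¬ InPair G S b p) : Bp G S0 (S ∪ NB G p) ≤ Bp G S0 S := by
  apply sum_le_sum
  intro b _
  have := wb_mono hS (G := G) p b
  rwa [if_neg (fun hh => h b hh.1 hh.2)] at this

lemma Bp_mono2 [Fintype V] {G : SimpleGraph V} {S0 S : Finset V} (hS : S0 ⊆ S) (p : V) :
    Bp G S0 (S ∪ NB G p) ≤ Bp G S0 S + 2 := by
  by_cases h : ∃ b, b ∈ S0 ∧ InPair G S b p
  · obtain ⟨b, hb, hp⟩ := h
    have := sum_gain (wb G S0 S) (wb G S0 (S ∪ NB G p)) (fun _ => 0) (fun v => if v = b then 2 else 0)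
      (by
        intro v
        have := wb_mono hS (G := G) p v
        by_cases hv : v ∈ S0 ∧ InPair G S v p
        · have e := InPair_uniq hv.2 hp (hS hv.1) (hS hb)
          rw [if_pos hv] at this
          simpa [e] using (e ▸ this)
        · rw [if_neg hv] at this
          omega)
    simpa [Bp] using this
  · push Not at h
    have := Bp_mono hS p h
    omega



lemma pr_Q [Fintype V] {G : SimpleGraph V} {S0 S : Finset V} (hS : S0 ⊆ S)
    {b u v : V} (hb : b ∈ S0) (h : pr G S b u v) : Qv G S0 S u ∧ Qv G S0 S v := by
  obtain ⟨a1, a2, a3, a4, a5, a6, a7⟩ := h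
  have d1 : ∀ T : Finset V, b ∈ T → v ∉ T → dw G T u = 1 := by
    intro T hT hT'
    have e1 : dw G T u ≤ 1 := by
      have := dw_le_of (G := G) (S := T) (v := u) {v} (by
        intro z hz hz'
        rcases a6 z hz with rfl | rfl
        · exact absurd hT hz'
        · simp)
      simpa using this
    have e2 : 0 < dw G T u := dw_pos.mpr ⟨v, a2, hT'⟩
    omega
  have d2 : ∀ T : Finset V, u ∉ T → dw G T v = 1 := by
    intro T hT'
    have e1 : dw G T v ≤ 1 := by
      have := dw_le_of (G := G) (S := T) (v := v) {u} (by
        intro z hz hz'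
        simp [a7 z hz])
      simpa using this
    have e2 : 0 < dw G T v := dw_pos.mpr ⟨u, a2.symm, hT'⟩
    omega
  exact ⟨⟨a4, d1 _ hb (fun h => a5 (hS h)), d1 _ (hS hb) a5⟩,
    ⟨a5, d2 _ (fun h => a4 (hS h)), d2 _ a4⟩⟩

lemma InPair_Q [Fintype V] {G : SimpleGraph V} {S0 S : Finset V} (hS : S0 ⊆ S)
    {b p : V} (hb : b ∈ S0) (h : InPair G S b p) : Qv G S0 S p := by
  obtain ⟨u, v, h, rfl | rfl⟩ := h
  · exact (pr_Q hS hb h).1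
  · exact (pr_Q hS hb h).2

lemma Q_partner [Fintype V] {G : SimpleGraph V} {S0 S : Finset V} (P : Ph G S0) (hS : S0 ⊆ S)
    {u : V} (h : Qv G S0 S u) : ∃ v, G.Adj u v ∧ Qv G S0 S v ∧ (∀ z, G.Adj u z → z ∉ S → z = v) := by
  obtain ⟨a, b, c⟩ := h
  obtain ⟨v, hv, hv'⟩ := dw_pos.mp (by omega : 0 < dw G S u)
  have a0 : u ∉ S0 := fun h => a (hS h)
  have hv0 : v ∉ S0 := fun h => hv' (hS h)
  refine ⟨v, hv, ⟨hv', ?_⟩, fun z hz hz' => dw_uniq (by omega) hz hz' hv hv'⟩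
  have e1 := P.h1 v hv0
  have e2 : 0 < dw G S v := dw_pos.mpr ⟨u, hv.symm, a⟩
  have e3 := dw_anti (G := G) hS v
  have e4 := P.h3 v u hv0 a0 hv.symm
  constructor <;> by_contra hh <;> omega

/-- all S0-blue facts for a white K2 -/
lemma Q_nb [Fintype V] {G : SimpleGraph V} {S0 S : Finset V} (hS : S0 ⊆ S)
    {u z : V} (h : Qv G S0 S u) (hz : G.Adj u z) (hzS : z ∈ S) : z ∈ S0 := by
  by_contra hz0
  obtain ⟨a, b, c⟩ := h
  obtain ⟨v, hv, hv'⟩ := dw_pos.mp (by omega : 0 < dw G S u)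
  have := dw_ge2 (G := G) (S := S0) hz hz0 hv (fun h => hv' (hS h)) (fun e => hv' (e ▸ hzS))
  omega

lemma W_Q [Fintype V] {G : SimpleGraph V} {S0 S : Finset V} (P : Ph G S0) (hS : S0 ⊆ S)
    {u : V} (h : Qv G S0 S u) : Wp G S0 (S ∪ NB G u) + 20 ≤ Wp G S0 S := by
  obtain ⟨v, hv, hv', _⟩ := Q_partner P hS h
  have := Wp_two P hS (T := S ∪ NB G u) subset_union_left (y := u) (z := v) h.1 (by simp [mem_NB]) hv'.1
    (by simp [mem_NB, hv]) hv.ne'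
  have e := dw_insert (G := G) (v := v) h.1
  rw [if_pos hv.symm, hv'.2.2] at e
  have g1 := gn_ge4 (G := G) hS u
  have g2 : gn G S0 (insert u S) v = 16 := by
    have e' : dw G (insert u S) v = 0 := by omega
    simp [gn, hv'.2.1, e']
  omega

lemma nopair_blue {G : SimpleGraph V} {S0 S : Finset V} {p : V}
    (h : p ∈ S) : ∀ b, b ∈ S0 → ¬ InPair G S b p := fun _ _ hh => InPair_white hh h

lemma Bp_blue [Fintype V] {G : SimpleGraph V} {S0 S : Finset V} (hS : S0 ⊆ S) {q : V} (hq : q ∈ S) :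
    Bp G S0 (S ∪ NB G q) + wb G S0 S q ≤ Bp G S0 S := by
  have := sum_gain (wb G S0 S) (wb G S0 (S ∪ NB G q)) (fun v => if v = q then wb G S0 S q else 0)
    (fun _ => 0) (by
      intro v
      by_cases hv : v = q
      · subst hv
        rw [wb_zero (S := S ∪ NB G v)]
        · simp
        · intro u hu; simp [mem_NB, hu]
      · have := wb_mono hS (G := G) q v
        rw [if_neg (fun hh => InPair_white hh.2 hq)] at this
        simpa [hv] using this)
  simpa [Bp] using this

lemma dK_pos [Fintype V] {G : SimpleGraph V} {S0 S : Finset V} {b u : V} (h : G.Adj b u)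
    (hu : Qv G S0 S u) : 0 < dK G S0 S b := by
  rw [dK, card_pos]; exact ⟨u, by simp [h, hu]⟩

/-- Staller gains at least 8 -/
lemma St8 [Fintype V] {G : SimpleGraph V} {S0 S : Finset V} (P : Ph G S0) (hS : S0 ⊆ S)
    {q : V} (hq : ¬ NB G q ⊆ S) :
    Wp G S0 (S ∪ NB G q) + Bp G S0 (S ∪ NB G q) + 8 ≤ Wp G S0 S + Bp G S0 S := by
  by_cases hI : ∃ b, b ∈ S0 ∧ InPair G S b q
  · obtain ⟨b, hb, hI⟩ := hI
    have h1 := W_Q P hS (InPair_Q hS hb hI)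
    have h2 := Bp_mono2 hS (G := G) q
    omega
  push Not at hI
  have hB := Bp_mono hS q hI
  have hsub : S ⊆ S ∪ NB G q := subset_union_left
  by_cases hqS : q ∈ S
  · obtain ⟨y, hy1, hy2⟩ := not_subset.mp hq
    have hqy : G.Adj q y := by
      rcases mem_NB.mp hy1 with rfl | h
      · exact absurd hqS hy2
      · exact h
    have hW := Wp_one P hS hsub hy2 (mem_union_right _ hy1)
    by_cases h8 : 8 ≤ gn G S0 S y
    · omega
    have hBq := Bp_blue hS (G := G) hqS
    have h4 := gn_ge4 hS (G := G) y
    have hy0 : y ∉ S0 := fun h => hy2 (hS h)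
    suffices 4 ≤ wb G S0 S q by omega
    have e1 := P.h1 y hy0
    have e2 := dw_anti (G := G) hS y
    have e3 : dw G S y = dw G S0 y ∧ 1 ≤ dw G S0 y := by
      unfold gn at h8
      split_ifs at h8 <;> omega
    have hq0 : q ∈ S0 := by
      by_contra hq0
      have e4 := dw_anti (G := G) (S := insert q S0) (T := S) (insert_subset hqS hS) y
      have e5 := dw_insert (G := G) (v := y) hq0
      rw [if_pos hqy.symm] at e5
      omega
    have : 1 ≤ dK G S0 S q ∨ flg G S0 S q := by
      by_cases e : dw G S0 y = 2
      · exact Or.inr ⟨y, hqy, hy2, e, by omega⟩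
      · exact Or.inl (dK_pos hqy ⟨hy2, by omega, by omega⟩)
    unfold wb
    rw [if_neg (by simpa using hq0)]
    split_ifs <;> first | omega | (exfalso; grind)
  · by_cases h0 : dw G S q = 0
    · have hW := Wp_one P hS hsub hqS (by simp [mem_NB])
      have : 14 ≤ gn G S0 S q := by
        unfold gn; rw [h0]; split_ifs <;> omega
      omega
    · obtain ⟨y, hy, hyS⟩ := dw_pos.mp (Nat.pos_of_ne_zero h0)
      have hW := Wp_two P hS hsub hqS (by simp [mem_NB]) hyS (by simp [mem_NB, hy]) hy.ne'
      have g1 := gn_ge4 hS (G := G) q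
      have g2 := gn_ge4 (hS.trans (subset_insert q S)) (G := G) y
      omega

/-- Staller gains at least 14 in the pure K2 stage -/
lemma St14 [Fintype V] {G : SimpleGraph V} {S0 S : Finset V} (P : Ph G S0) (hS : S0 ⊆ S)
    (hC : ∀ v, v ∉ S → dw G S0 v = 2 → dw G S v = 0)
    (hp : ∀ b, b ∈ S0 → dK G S0 S b = 1 → unb G S0 S b)
    {q : V} (hq : ¬ NB G q ⊆ S) :
    Wp G S0 (S ∪ NB G q) + Bp G S0 (S ∪ NB G q) + 14 ≤ Wp G S0 S + Bp G S0 S := by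
  by_cases hqQ : Qv G S0 S q
  · have h1 := W_Q P hS hqQ
    have h2 := Bp_mono2 hS (G := G) q
    omega
  have hI : ∀ b, b ∈ S0 → ¬ InPair G S b q := fun b hb h => hqQ (InPair_Q hS hb h)
  have hB := Bp_mono hS q hI
  have hsub : S ⊆ S ∪ NB G q := subset_union_left
  by_cases h14 : ∃ y, y ∈ NB G q ∧ y ∉ S ∧ 14 ≤ gn G S0 S y
  · obtain ⟨y, hy1, hy2, hy3⟩ := h14
    have hW := Wp_one P hS hsub hy2 (mem_union_right _ hy1)
    omega
  push Not at h14
  have hQ : ∀ y, y ∈ NB G q → y ∉ S → Qv G S0 S y := by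
    intro y hy hyS
    have hy0 : y ∉ S0 := fun h => hyS (hS h)
    have e0 := h14 y hy hyS
    have e1 := P.h1 y hy0
    have e2 := dw_anti (G := G) hS y
    have e3 := hC y hyS
    unfold gn at e0
    refine ⟨hyS, ?_⟩
    split_ifs at e0 <;> omega
  have hqS : q ∈ S := by
    by_contra h
    exact hqQ (hQ q (by simp [mem_NB]) h)
  obtain ⟨y, hy1, hy2⟩ := not_subset.mp hq
  have hqy : G.Adj q y := by
    rcases mem_NB.mp hy1 with rfl | h
    · exact absurd hqS hy2
    · exact h
  have hyQ := hQ y hy1 hy2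
  have hq0 : q ∈ S0 := Q_nb hS hyQ hqy.symm hqS
  have hd := dK_pos hqy hyQ
  have hd1 : dK G S0 S q ≠ 1 := by
    intro h
    obtain ⟨x, hx1, hx2, hx3⟩ := hp q hq0 h
    have := hQ x (by simp [mem_NB, hx1]) hx2
    have e := this.2.1
    rw [hx3.2.1] at e
    omega
  have hd2 : 1 < dK G S0 S q := by omega
  obtain ⟨z, hz, hzy⟩ := exists_mem_ne hd2 y
  simp only [mem_filter, mem_univ, true_and] at hz
  have hW := Wp_two P hS hsub hy2 (mem_union_right _ hy1) hz.2.1 (by simp [mem_NB, hz.1]) hzy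
  have g1 := gn_ge4 hS (G := G) y
  have g2 := gn_ge4 (hS.trans (subset_insert y S)) (G := G) z
  have hBq := Bp_blue hS (G := G) hqS
  have : 6 ≤ wb G S0 S q := by
    unfold wb
    rw [if_neg (by simpa using hq0), if_pos (by omega)]
    split_ifs <;> omega
  omega

/-- stage C move -/
lemma stC [Fintype V] {G : SimpleGraph V} {S0 S : Finset V} (P : Ph G S0) (hS : S0 ⊆ S)
    (hC : ∃ v, v ∉ S ∧ dw G S0 v = 2 ∧ dw G S v ≠ 0) :
    ∃ p, ¬ NB G p ⊆ S ∧
    Wp G S0 (S ∪ NB G p) + Bp G S0 (S ∪ NB G p) + 24 ≤ Wp G S0 S + Bp G S0 S := by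
  have hB : ∀ p, dw G S0 p = 2 → Bp G S0 (S ∪ NB G p) ≤ Bp G S0 S := by
    intro p hp
    apply Bp_mono hS p
    intro b hb h
    have := (InPair_Q hS hb h).2.1
    omega
  by_cases h2 : ∃ v, v ∉ S ∧ dw G S0 v = 2 ∧ dw G S v = 2
  · obtain ⟨v, hvS, hv0, hv⟩ := h2
    refine ⟨v, fun hh => hvS (hh (by simp [mem_NB])), ?_⟩
    have hv00 : v ∉ S0 := fun h => hvS (hS h)
    obtain ⟨a, ha, haS⟩ := dw_pos.mp (by omega : 0 < dw G S v)
    obtain ⟨b, hba, hb, hbS⟩ := dw_two_ex (a := a) (by omega : 2 ≤ dw G S v)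
    have k : ∀ c T, G.Adj v c → c ∉ S → insert v S ⊆ T → 10 ≤ gn G S0 T c := by
      intro c T hc hcS hT
      have hc0 : c ∉ S0 := fun h => hcS (hS h)
      have e1 := P.h3 v c hv00 hc0 hc hv0
      have e2 := dw_insert (G := G) (v := c) hvS
      rw [if_pos hc.symm] at e2
      have e3 := dw_anti (G := G) hT c
      have e4 := dw_anti (G := G) hS c
      unfold gn
      rw [if_pos e1]; omega
    have s1 := Wp_step P hS hvS
    have s2 := Wp_two P (S := insert v S) (T := S ∪ NB G v) (hS.trans (subset_insert v S))
      (insert_subset (by simp [mem_NB]) subset_union_left) (y := a) (z := b)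
      (by simp [haS, ha.ne']) (by simp [mem_NB, ha]) (by simp [hbS, hb.ne']) (by simp [mem_NB, hb]) hba
    have k1 := k a _ ha haS (Subset.refl _)
    have k2 := k b (insert a (insert v S)) hb hbS (subset_insert _ _)
    have k3 := gn_ge4 hS (G := G) v
    have := hB v hv0
    omega
  · push Not at h2
    obtain ⟨v, hvS, hv0, hv⟩ := hC
    refine ⟨v, fun hh => hvS (hh (by simp [mem_NB])), ?_⟩
    have hv00 : v ∉ S0 := fun h => hvS (hS h)
    obtain ⟨a, ha, haS⟩ := dw_pos.mp (by omega : 0 < dw G S v)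
    have ha0 : a ∉ S0 := fun h => haS (hS h)
    have e1 := P.h3 v a hv00 ha0 ha hv0
    have e2 := dw_insert (G := G) (v := a) hvS
    rw [if_pos ha.symm] at e2
    have e3 := dw_anti (G := G) hS a
    have e4 := dw_anti (G := G) hS v
    have e5 := h2 v hvS hv0
    have e6 := h2 a haS e1
    have hW := Wp_two P hS (T := S ∪ NB G v) subset_union_left hvS (by simp [mem_NB]) haS
      (by simp [mem_NB, ha]) ha.ne'
    have g1 : 10 ≤ gn G S0 S v := by unfold gn; rw [if_pos hv0]; omega
    have g2 : 16 ≤ gn G S0 (insert v S) a := by unfold gn; rw [if_pos e1]; omega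
    have := hB v hv0
    omega


lemma Q_loss [Fintype V] {G : SimpleGraph V} {S0 S : Finset V} (P : Ph G S0) (hS : S0 ⊆ S)
    {u v t : V} (hu : Qv G S0 S u) (hv : Qv G S0 S v) (huv : G.Adj u v)
    (ht : Qv G S0 S t) (ht' : ¬ Qv G S0 (S ∪ NB G u) t) : t = u ∨ t = v := by
  by_contra hc
  push Not at hc
  obtain ⟨s, hs, hsQ, hs'⟩ := Q_partner P hS ht
  have nu : ∀ z, G.Adj u z → z ∉ S → z = v := fun z hz hz' =>
    dw_uniq (by rw [hu.2.2]) hz hz' huv hv.1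
  have nv : ∀ z, G.Adj v z → z ∉ S → z = u := fun z hz hz' =>
    dw_uniq (by rw [hv.2.2]) hz hz' huv.symm hu.1
  have h1 : t ∉ S ∪ NB G u := by
    simp only [mem_union, mem_NB, not_or]
    exact ⟨ht.1, hc.1, fun h => hc.2 (nu t h ht.1)⟩
  have h2 : s ∉ S ∪ NB G u := by
    simp only [mem_union, mem_NB, not_or]
    refine ⟨hsQ.1, ?_, ?_⟩
    · rintro rfl
      exact hc.2 (nu t hs.symm ht.1)
    · intro h
      have := nu s h hsQ.1
      subst this
      exact hc.1 (nv t hs.symm ht.1)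
  apply ht'
  refine ⟨h1, ht.2.1, ?_⟩
  have e1 := dw_anti (G := G) (S := S) (T := S ∪ NB G u) subset_union_left t
  have e2 : 0 < dw G (S ∪ NB G u) t := dw_pos.mpr ⟨s, hs, h2⟩
  have := ht.2.2
  omega

lemma dK_drop [Fintype V] {G : SimpleGraph V} {S0 S : Finset V} (P : Ph G S0) (hS : S0 ⊆ S)
    {u v b : V} (hu : Qv G S0 S u) (hv : Qv G S0 S v) (huv : G.Adj u v) (hb : b ∈ S0)
    (hbu : G.Adj b u ∨ G.Adj b v) : dK G S0 (S ∪ NB G u) b + 1 = dK G S0 S b := by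
  have key : ∃ t, (t = u ∨ t = v) ∧ G.Adj b t ∧ ∀ s, (s = u ∨ s = v) → G.Adj b s → s = t := by
    have hu0 : u ∉ S0 := fun h => hu.1 (hS h)
    have hv0 : v ∉ S0 := fun h => hv.1 (hS h)
    rcases hbu with h | h
    · refine ⟨u, Or.inl rfl, h, ?_⟩
      rintro s (rfl | rfl) hs
      · rfl
      · exact (P.h6 b u s hb hu0 hv0 h hs huv hu.2.1).elim
    · refine ⟨v, Or.inr rfl, h, ?_⟩
      rintro s (rfl | rfl) hs
      · exact (P.h6 b s v hb hu0 hv0 hs h huv hu.2.1).elim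
      · rfl
  obtain ⟨t, ht, hbt, hts⟩ := key
  have htQ : Qv G S0 S t := by rcases ht with rfl | rfl <;> assumption
  have htQ' : t ∈ S ∪ NB G u := by rcases ht with rfl | rfl <;> simp [mem_NB, huv]
  rw [dK, dK, ← card_erase_add_one (s := univ.filter fun u => G.Adj b u ∧ Qv G S0 S u) (a := t)
    (by simp [hbt, htQ])]
  congr 2
  ext s
  simp only [mem_filter, mem_univ, true_and, mem_erase]
  constructor
  · rintro ⟨h1, h2⟩
    refine ⟨?_, h1, Qv_anti hS subset_union_left h2⟩
    rintro rfl
    exact h2.1 htQ'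
  · rintro ⟨h1, h2, h3⟩
    refine ⟨h2, ?_⟩
    by_contra hc
    exact h1 (hts s (Q_loss P hS hu hv huv h3 hc) h2)

lemma dK_same [Fintype V] {G : SimpleGraph V} {S0 S : Finset V} (P : Ph G S0) (hS : S0 ⊆ S)
    {u v b : V} (hu : Qv G S0 S u) (hv : Qv G S0 S v) (huv : G.Adj u v)
    (hbu : ¬ (G.Adj b u ∨ G.Adj b v)) : dK G S0 (S ∪ NB G u) b = dK G S0 S b := by
  rw [dK, dK]
  congr 1
  ext s
  simp only [mem_filter, mem_univ, true_and]
  constructor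
  · rintro ⟨h1, h2⟩
    exact ⟨h1, Qv_anti hS subset_union_left h2⟩
  · rintro ⟨h2, h3⟩
    refine ⟨h2, ?_⟩
    by_contra hc
    rcases Q_loss P hS hu hv huv h3 hc with rfl | rfl <;> tauto

lemma InPair_only [Fintype V] {G : SimpleGraph V} {S0 S : Finset V}  (hS : S0 ⊆ S)
    {u v b b' : V} (hu : Qv G S0 S u) (hv : Qv G S0 S v) (huv : G.Adj u v) (hb : b ∈ S0)
    (hb' : b' ∈ S0) (h : InPair G S b u) (hbu : G.Adj b' u ∨ G.Adj b' v) : b' = b := by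
  have hb1 := hS hb
  have hb2 := hS hb'
  obtain ⟨s, t, ⟨a1, a2, a3, a4, a5, a6, a7⟩, rfl | rfl⟩ := h
  · have hvt : v = t := by
      rcases a6 v huv with h | h
      · exact absurd (h ▸ hb1) hv.1
      · exact h
    subst hvt
    rcases hbu with h | h
    · rcases a6 b' h.symm with h | h
      · exact h
      · exact absurd (h ▸ hb2) a5
    · exact absurd (a7 b' h.symm ▸ hb2) a4
  · have hvs : v = s := a7 v huv
    subst hvs
    rcases hbu with h | h
    · exact absurd (a7 b' h.symm ▸ hb2) a4
    · rcases a6 b' h.symm with h | h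
      · exact h
      · exact absurd (h ▸ hb2) a5

lemma lc_le_dK [Fintype V] {G : SimpleGraph V} {S0 S : Finset V} (hS : S0 ⊆ S) {b : V}
    (hb : b ∈ S0) : lc G S b ≤ dK G S0 S b := by
  apply card_le_card
  intro u
  simp only [mem_filter, mem_univ, true_and]
  rintro ⟨v, hv⟩
  exact ⟨hv.1, (pr_Q hS hb hv).1⟩

/-- loss of B potential at marked vertices adjacent to the K2 played -/
lemma Bp_K2 [Fintype V] {G : SimpleGraph V} {S0 S : Finset V} (hS : S0 ⊆ S)
    {u v : V} (hu : Qv G S0 S u) (hv : Qv G S0 S v) (huv : G.Adj u v) (d : V → ℕ)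
    (b0 : V) (hb0 : b0 ∈ S0) (hbu : G.Adj b0 u ∨ G.Adj b0 v) (h0 : wb G S0 (S ∪ NB G u) b0 ≤ wb G S0 S b0)
    (hd : ∀ b, d b ≠ 0 → wb G S0 (S ∪ NB G u) b + d b ≤ wb G S0 S b) :
    Bp G S0 (S ∪ NB G u) + ∑ b, d b ≤ Bp G S0 S := by
  have := sum_gain (wb G S0 S) (wb G S0 (S ∪ NB G u)) d (fun _ => 0) (by
    intro b
    by_cases h : d b = 0
    · have := wb_mono hS (G := G) u b
      rw [h]
      by_cases hI : b ∈ S0 ∧ InPair G S b u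
      · have := InPair_only hS hu hv huv hI.1 hb0 hI.2 hbu
        subst this
        omega
      · rw [if_neg hI] at this; omega
    · have := hd b h
      omega)
  simpa [Bp] using this

lemma Bp_K2_one [Fintype V] {G : SimpleGraph V} {S0 S : Finset V} (hS : S0 ⊆ S)
    {u v : V} (hu : Qv G S0 S u) (hv : Qv G S0 S v) (huv : G.Adj u v) (g : ℕ)
    (b0 : V) (hb0 : b0 ∈ S0) (hbu : G.Adj b0 u ∨ G.Adj b0 v)
    (h0 : wb G S0 (S ∪ NB G u) b0 + g ≤ wb G S0 S b0) :
    Bp G S0 (S ∪ NB G u) + g ≤ Bp G S0 S := by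
  have := Bp_K2 hS hu hv huv (fun b => if b = b0 then g else 0) b0 hb0 hbu (by omega) (by
    intro b hb
    by_cases h : b = b0
    · subst h; simpa using h0
    · simp [h] at hb)
  simpa using this

lemma Bp_K2_two [Fintype V] {G : SimpleGraph V} {S0 S : Finset V} (hS : S0 ⊆ S)
    {u v : V} (hu : Qv G S0 S u) (hv : Qv G S0 S v) (huv : G.Adj u v) (g : ℕ)
    (b0 b1 : V) (hb0 : b0 ∈ S0) (hbu : G.Adj b0 u ∨ G.Adj b0 v) (hne : b1 ≠ b0)
    (h0 : wb G S0 (S ∪ NB G u) b0 + g ≤ wb G S0 S b0)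
    (h1 : wb G S0 (S ∪ NB G u) b1 + g ≤ wb G S0 S b1) :
    Bp G S0 (S ∪ NB G u) + 2 * g ≤ Bp G S0 S := by
  have := Bp_K2 hS hu hv huv (fun b => (if b = b0 then g else 0) + (if b = b1 then g else 0)) b0 hb0 hbu
    (by omega) (by
    intro b hb
    by_cases h : b = b0
    · subst h; simpa [hne.symm] using h0
    · by_cases h' : b = b1
      · subst h'; simpa [h] using h1
      · simp [h, h'] at hb)
  simp [sum_add_distrib] at this
  omega

/-- K2 stage, main counting -/
lemma F4_le [Fintype V] {G : SimpleGraph V} {S0 S : Finset V} (P : Ph G S0) (hS : S0 ⊆ S)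
    (hC : ∀ v, v ∉ S → dw G S0 v = 2 → dw G S v = 0)
    (hex : ∀ u v, Qv G S0 S u → Qv G S0 S v → G.Adj u v →
      ∃ b ∈ S0, (G.Adj b u ∨ G.Adj b v) ∧ dK G S0 S b = 2 ∧ lc G S b ≠ 2 ∧
        ∀ c ∈ S0, (G.Adj c u ∨ G.Adj c v) → c = b ∨ dK G S0 S c = 3) :
    F4 G S ≤ Wp G S0 S + Bp G S0 S := by
  classical
  -- sets
  set Q := univ.filter (fun u => Qv G S0 S u) with hQdef
  set B2 := univ.filter (fun b => b ∈ S0 ∧ dK G S0 S b = 2) with hB2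
  set B3 := univ.filter (fun b => b ∈ S0 ∧ dK G S0 S b = 3) with hB3
  have hpart : ∀ u, ∃ v, Qv G S0 S u → G.Adj u v ∧ Qv G S0 S v ∧ (∀ z, G.Adj u z → z ∉ S → z = v) := by
    intro u
    by_cases h : Qv G S0 S u
    · obtain ⟨v, hv⟩ := Q_partner P hS h
      exact ⟨v, fun _ => hv⟩
    · exact ⟨u, fun h' => absurd h' h⟩
  choose π hπ using hpart
  have hππ : ∀ u, Qv G S0 S u → π (π u) = u := by
    intro u hu
    obtain ⟨a1, a2, a3⟩ := hπ u hu
    exact ((hπ _ a2).2.2 u a1.symm hu.1).symm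
  have hinv : ∀ f : V → ℕ, ∑ u ∈ Q, f (π u) = ∑ u ∈ Q, f u := by
    intro f
    apply sum_nbij' π π
    · intro u hu; simp only [hQdef, mem_filter, mem_univ, true_and] at hu ⊢; exact (hπ u hu).2.1
    · intro u hu; simp only [hQdef, mem_filter, mem_univ, true_and] at hu ⊢; exact (hπ u hu).2.1
    · intro u hu; simp only [hQdef, mem_filter, mem_univ, true_and] at hu; exact hππ u hu
    · intro u hu; simp only [hQdef, mem_filter, mem_univ, true_and] at hu; exact hππ u hu
    · intro u hu; rfl
  let A : V → V → ℕ := fun b u => if G.Adj b u then 1 else 0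
  let c : V → ℕ := fun u => ∑ b ∈ B2, A b u
  let e : V → ℕ := fun u => ∑ b ∈ B3, A b u
  have hdk : ∀ b, ∑ u ∈ Q, A b u = dK G S0 S b := by
    intro b
    simp only [A, hQdef, dK]
    rw [← sum_filter, filter_filter, sum_const, smul_eq_mul, mul_one]
    congr 1
    ext u; simp [and_comm]
  have hc2 : ∑ u ∈ Q, c u = 2 * B2.card := by
    simp only [c]
    rw [sum_comm, sum_congr rfl (fun b hb => (hdk b).trans (by simp [hB2] at hb; exact hb.2)),
      sum_const, smul_eq_mul, mul_comm]
  have he3 : ∑ u ∈ Q, e u = 3 * B3.card := by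
    simp only [e]
    rw [sum_comm, sum_congr rfl (fun b hb => (hdk b).trans (by simp [hB3] at hb; exact hb.2)),
      sum_const, smul_eq_mul, mul_comm]
  have notboth : ∀ b ∈ S0, ∀ u, Qv G S0 S u → ¬ (G.Adj b u ∧ G.Adj b (π u)) := by
    rintro b hb u hu ⟨h1, h2⟩
    obtain ⟨a1, a2, a3⟩ := hπ u hu
    exact P.h6 b u (π u) hb (fun h => hu.1 (hS h)) (fun h => a2.1 (hS h)) h1 h2 a1 hu.2.1
  have hc1 : ∀ u ∈ Q, c u + c (π u) = 1 := by
    intro u hu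
    simp only [hQdef, mem_filter, mem_univ, true_and] at hu
    obtain ⟨a1, a2, a3⟩ := hπ u hu
    obtain ⟨b, hb, hbu, hb2, _, hbo⟩ := hex u (π u) hu a2 a1
    simp only [c]
    rw [← sum_add_distrib, sum_eq_single b]
    · have := notboth b hb u hu
      simp only [A]
      rcases hbu with h | h
      · have h' : ¬ G.Adj b (π u) := fun h' => this ⟨h, h'⟩
        simp [h, h']
      · have h' : ¬ G.Adj b u := fun h' => this ⟨h', h⟩
        simp [h, h']
    · intro b' hb' hne
      simp only [hB2, mem_filter, mem_univ, true_and] at hb'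
      have : ¬ (G.Adj b' u ∨ G.Adj b' (π u)) := by
        intro h
        rcases hbo b' hb'.1 h with h | h
        · exact hne h
        · omega
      push Not at this
      simp [A, this.1, this.2]
    · intro h
      exact absurd (by simp [hB2, hb, hb2]) h
  have hcard : Q.card = 4 * B2.card := by
    have h1 : ∑ u ∈ Q, (c u + c (π u)) = Q.card := by
      rw [sum_congr rfl hc1]; simp
    rw [sum_add_distrib, hinv c] at h1
    omega
  have hB23 : B2.card ≤ 3 * B3.card := by
    have h1 : ∀ b ∈ B2, 1 ≤ ∑ u ∈ Q, A b u * (e u + e (π u)) := by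
      intro b hb
      simp only [hB2, mem_filter, mem_univ, true_and] at hb
      -- find a non-live neighbour
      have hne : ∃ u, G.Adj b u ∧ Qv G S0 S u ∧ ¬ pr G S b u (π u) := by
        by_contra hcon
        push Not at hcon
        have hle := lc_le_dK (G := G) hS hb.1
        have hge : dK G S0 S b ≤ lc G S b := by
          apply card_le_card
          intro u
          simp only [mem_filter, mem_univ, true_and]
          rintro ⟨h1, h2⟩
          exact ⟨π u, hcon u h1 h2⟩
        -- lc = 2 contradicts
        obtain ⟨u, hu⟩ : (univ.filter fun u => G.Adj b u ∧ Qv G S0 S u).Nonempty := by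
          rw [← card_pos]; have := hb.2; unfold dK at this; omega
        simp only [mem_filter, mem_univ, true_and] at hu
        obtain ⟨a1, a2, a3⟩ := hπ u hu.2
        obtain ⟨b', hb', hbu', hb2', hl', hbo'⟩ := hex u (π u) hu.2 a2 a1
        rcases hbo' b hb.1 (Or.inl hu.1) with h | h
        · subst h; omega
        · omega
      obtain ⟨u, hbu, hu, hnp⟩ := hne
      obtain ⟨a1, a2, a3⟩ := hπ u hu
      obtain ⟨b', hb', hbu', hb2', hl', hbo'⟩ := hex u (π u) hu a2 a1
      have hbb : b = b' := by
        rcases hbo' b hb.1 (Or.inl hbu) with h | h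
        · exact h
        · omega
      have hbS := hS hb.1
      have hz : ∃ z, z ∈ S0 ∧ z ≠ b ∧ (G.Adj z u ∨ G.Adj z (π u)) := by
        by_contra hcon
        push Not at hcon
        apply hnp
        refine ⟨hbu, a1, fun h => a2.1 (h ▸ hbS), hu.1, a2.1, ?_, ?_⟩
        · intro z hz
          by_cases hzS : z ∈ S
          · have hz0 := Q_nb hS hu hz hzS
            left
            by_contra hzb
            exact (hcon z hz0 hzb).1 hz.symm
          · exact Or.inr (a3 z hz hzS)
        · intro z hz
          by_cases hzS : z ∈ S
          · have hz0 := Q_nb hS a2 hz hzS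
            have hzb : z ≠ b := by
              rintro rfl
              exact notboth z hz0 u hu ⟨hbu, hz.symm⟩
            exact absurd hz.symm (hcon z hz0 hzb).2
          · have := (hπ _ a2).2.2 z hz hzS
            rw [this, hππ u hu]
      obtain ⟨z, hz0, hzb, hzu⟩ := hz
      have hz3 : z ∈ B3 := by
        simp only [hB3, mem_filter, mem_univ, true_and]
        refine ⟨hz0, ?_⟩
        rcases hbo' z hz0 hzu with h | h
        · exact absurd (h.trans hbb.symm) hzb
        · exact h
      have huQ : u ∈ Q := by simp [hQdef, hu]
      calc 1 ≤ A b u * (e u + e (π u)) := by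
            have hA : A b u = 1 := by simp [A, hbu]
            rw [hA, one_mul]
            rcases hzu with h | h
            · have : A z u ≤ e u := single_le_sum (f := fun b => A b u) (fun _ _ => Nat.zero_le _) hz3
              have h2 : A z u = 1 := by simp [A, h]
              omega
            · have : A z (π u) ≤ e (π u) := single_le_sum (f := fun b => A b (π u)) (fun _ _ => Nat.zero_le _) hz3
              have h2 : A z (π u) = 1 := by simp [A, h]
              omega
        _ ≤ _ := single_le_sum (f := fun u => A b u * (e u + e (π u))) (fun _ _ => Nat.zero_le _) huQ
    have h2 : B2.card ≤ ∑ b ∈ B2, ∑ u ∈ Q, A b u * (e u + e (π u)) := by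
      rw [card_eq_sum_ones]; exact sum_le_sum h1
    rw [sum_comm] at h2
    have h3 : ∑ u ∈ Q, ∑ b ∈ B2, A b u * (e u + e (π u)) = ∑ u ∈ Q, e u := by
      calc _ = ∑ u ∈ Q, (c u * e u + c u * e (π u)) := by
            apply sum_congr rfl; intro u _; rw [← sum_mul, mul_add]
        _ = ∑ u ∈ Q, c u * e u + ∑ u ∈ Q, c u * e (π u) := sum_add_distrib
        _ = ∑ u ∈ Q, c u * e u + ∑ u ∈ Q, c (π u) * e u := by
            congr 1
            rw [← hinv (fun u => c u * e (π u))]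
            apply sum_congr rfl
            intro u hu
            simp only [hQdef, mem_filter, mem_univ, true_and] at hu
            simp only [hππ u hu]
        _ = ∑ u ∈ Q, e u := by
            rw [← sum_add_distrib]
            apply sum_congr rfl
            intro u hu
            rw [← add_mul, hc1 u hu, one_mul]
    omega
  -- white part
  let Uw : V → ℕ := fun x => if x ∉ S ∧ Uv G S0 x then 1 else 0
  have hw : F4 G S ≤ Wp G S0 S + (2 * Q.card + ∑ x, 2 * Uw x) := by
    have hq : 2 * Q.card = ∑ x, if Qv G S0 S x then 2 else 0 := by
      rw [← sum_filter, sum_const, smul_eq_mul, mul_comm]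
    rw [hq, ← sum_add_distrib]
    unfold F4 Wp
    rw [← sum_add_distrib]
    apply sum_le_sum
    intro v _
    by_cases hv : v ∈ S
    · simp [w4, hv]
    have h0 : v ∉ S0 := fun h => hv (hS h)
    have e1 := P.h1 v h0
    have e2 := dw_anti (G := G) hS v
    have e3 := hC v hv
    simp only [w4, ww, hv, if_false, Uw, not_false_eq_true, true_and]
    by_cases f2 : dw G S0 v = 2
    · simp [f2, e3 f2]
    by_cases f1 : dw G S0 v = 1
    · by_cases g0 : dw G S v = 0
      · simp [f1, g0]
      · have g1 : dw G S v = 1 := by omega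
        have : Qv G S0 S v := ⟨hv, f1, g1⟩
        simp [f1, g1, this]
        split_ifs <;> omega
    · have g0 : dw G S v = 0 := by omega
      simp only [f1, f2, g0, if_true, if_false]
      split_ifs <;> omega
  have hb : 6 * B2.card + 6 * B3.card + ∑ x, 2 * Uw x ≤ Bp G S0 S := by
    have h2 : 6 * B2.card = ∑ b, if b ∈ S0 ∧ dK G S0 S b = 2 then 6 else 0 := by
      rw [← sum_filter, sum_const, smul_eq_mul, mul_comm]
    have h3 : 6 * B3.card = ∑ b, if b ∈ S0 ∧ dK G S0 S b = 3 then 6 else 0 := by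
      rw [← sum_filter, sum_const, smul_eq_mul, mul_comm]
    have h4 : ∑ x, 2 * Uw x ≤ ∑ b, ∑ x, if b ∈ S0 then A b x * (2 * Uw x) else 0 := by
      rw [sum_comm]
      apply sum_le_sum
      intro x _
      by_cases hx : x ∉ S ∧ Uv G S0 x
      · obtain ⟨b, hb⟩ := P.iso x
        have hb0 : b ∈ S0 := dw_zero.mp hx.2.2.1 b hb
        have := single_le_sum (s := univ) (f := fun b => if b ∈ S0 then A b x * (2 * Uw x) else 0)
          (fun _ _ => Nat.zero_le _) (mem_univ b)
        refine le_trans ?_ this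
        simp [A, hb.symm, hb0]
      · simp [Uw, hx]
    refine le_trans (Nat.add_le_add_left h4 _) ?_
    rw [h2, h3, ← sum_add_distrib, ← sum_add_distrib]
    apply sum_le_sum
    intro b _
    by_cases hb0 : b ∈ S0
    swap
    · simp [hb0]
    by_cases hu : unb G S0 S b
    · obtain ⟨x, hx1, hx2, hx3⟩ := hu
      have hx0 : x ∉ S0 := hx3.1
      have hd2 := P.hK1 b x hb0 hx0 hx1 hx3.2.1
      have hdk1 : dK G S0 S b ≤ 1 := by
        have : dK G S0 S b + 1 ≤ dw G S0 b := by
          rw [dK, ← card_insert_of_notMem (a := x)]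
          · apply le_dw_of
            intro u hu
            simp only [mem_insert, mem_filter, mem_univ, true_and] at hu
            rcases hu with rfl | hu
            · exact ⟨hx1, hx0⟩
            · exact ⟨hu.1, fun h => hu.2.1 (hS h)⟩
          · simp only [mem_filter, mem_univ, true_and, not_and]
            intro _ hq
            have := hq.2.1
            rw [hx3.2.1] at this
            omega
        omega
      have hs : ∑ y, (if b ∈ S0 then A b y * (2 * Uw y) else 0) = A b x * (2 * Uw x) := by
        rw [sum_eq_single x]
        · simp [hb0]
        · intro y _ hyx
          rw [if_pos hb0]
          by_contra hc
          have ha : G.Adj b y := by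
            by_contra h; simp [A, h] at hc
          have hU : Uv G S0 y := by
            by_contra h; simp [Uw, h] at hc
          exact hyx (P.hK2 b y x hb0 hU.1 hx0 ha hx1 hU.2.1 hx3.2.1)
        · simp
      rw [hs]
      have hwb : 2 ≤ wb G S0 S b := by
        have : unb G S0 S b := ⟨x, hx1, hx2, hx3⟩
        unfold wb
        split_ifs <;> first | omega | (exfalso; tauto)
      rw [if_neg (by omega), if_neg (by omega)]
      have : A b x * (2 * Uw x) ≤ 2 := by simp only [A, Uw]; split_ifs <;> omega
      omega
    · have hs : ∑ y, (if b ∈ S0 then A b y * (2 * Uw y) else 0) = 0 := by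
        apply sum_eq_zero
        intro y _
        rw [if_pos hb0]
        by_contra hc
        have ha : G.Adj b y := by
          by_contra h; simp [A, h] at hc
        have hU : y ∉ S ∧ Uv G S0 y := by
          by_contra h; simp only [Uw, h, if_false] at hc; omega
        exact hu ⟨y, ha, hU.1, hU.2⟩
      rw [hs]
      unfold wb
      simp only [hb0, true_and, not_true_eq_false, if_false]
      split_ifs <;> omega
  omega


lemma L2 [Fintype V] {G : SimpleGraph V} {val : Finset V → ℕ} (hv : GV G val) {S0 : Finset V}
    (P : Ph G S0) : ∀ S, S0 ⊆ S → 16 * val S ≤ Wp G S0 S + Bp G S0 S := by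
  refine pot hv (fun S => S0 ⊆ S) (fun S => Wp G S0 S + Bp G S0 S) (fun _ _ h h' => h.trans h') ?_
  intro S hS _
  have hS8 : ∀ p q, ¬ NB G q ⊆ S ∪ NB G p → Wp G S0 (S ∪ NB G p ∪ NB G q) +
      Bp G S0 (S ∪ NB G p ∪ NB G q) + 8 ≤ Wp G S0 (S ∪ NB G p) + Bp G S0 (S ∪ NB G p) :=
    fun p q hq => St8 P (hS.trans subset_union_left) hq
  by_cases hC : ∃ v, v ∉ S ∧ dw G S0 v = 2 ∧ dw G S v ≠ 0
  · right
    obtain ⟨p, hp, h⟩ := stC P hS hC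
    exact ⟨p, hp, 24, 8, by norm_num, by norm_num, h, hS8 p⟩
  push Not at hC
  by_cases hg : ∃ u, Qv G S0 S u ∧ Bp G S0 (S ∪ NB G u) + 4 ≤ Bp G S0 S
  · right
    obtain ⟨u, hu, h⟩ := hg
    refine ⟨u, fun hh => hu.1 (hh (by simp [mem_NB])), 24, 8, by norm_num, by norm_num, ?_, hS8 u⟩
    have := W_Q P hS hu
    omega
  push Not at hg
  have hfl : ∀ T b, S ⊆ T → ¬ flg G S0 T b := by
    rintro T b hT ⟨u, h1, h2, h3, h4⟩
    have := hC u (fun h => h2 (hT h)) h3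
    have := dw_anti (G := G) hT u
    omega
  -- no pure b1
  have hpure : ∀ b, b ∈ S0 → dK G S0 S b = 1 → unb G S0 S b := by
    intro b hb h1
    by_contra hun
    obtain ⟨u, hu⟩ : (univ.filter fun u => G.Adj b u ∧ Qv G S0 S u).Nonempty := by
      rw [← card_pos]; unfold dK at h1; omega
    simp only [mem_filter, mem_univ, true_and] at hu
    obtain ⟨v, hv1, hv2, _⟩ := Q_partner P hS hu.2
    have hd := dK_drop P hS hu.2 hv2 hv1 hb (Or.inl hu.1)
    have h0 : dK G S0 (S ∪ NB G u) b = 0 := by omega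
    have hun' : ¬ unb G S0 (S ∪ NB G u) b := fun h => hun (unb_anti subset_union_left h)
    have := Bp_K2_one hS hu.2 hv2 hv1 4 b hb (Or.inl hu.1) (by
      simp [wb, hb, h0, h1, hun', hfl (S ∪ NB G u) b subset_union_left])
    have := hg u hu.2
    omega
  by_cases hX : ∃ u v, Qv G S0 S u ∧ Qv G S0 S v ∧ G.Adj u v ∧
      ∀ b ∈ S0, (G.Adj b u ∨ G.Adj b v) → dK G S0 S b ≠ 2
  · right
    obtain ⟨u, v, hu, hv', huv, hno⟩ := hX
    refine ⟨u, fun hh => hu.1 (hh (by simp [mem_NB])), 18, 14, by norm_num, by norm_num, ?_, ?_⟩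
    · have h1 := W_Q P hS hu
      have h2 := Bp_mono2 hS (G := G) u
      omega
    · intro q hq
      refine St14 P (hS.trans subset_union_left) ?_ ?_ hq
      · intro w hw hw2
        have := hC w (fun h => hw (mem_union_left _ h)) hw2
        have := dw_anti (G := G) (S := S) (T := S ∪ NB G u) subset_union_left w
        omega
      · intro b hb hb1
        by_cases hbu : G.Adj b u ∨ G.Adj b v
        · have := dK_drop P hS hu hv' huv hb hbu
          exact absurd (by omega) (hno b hb hbu)
        · have := dK_same P hS hu hv' huv hbu
          obtain ⟨x, hx1, hx2, hx3⟩ := hpure b hb (by omega)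
          refine ⟨x, hx1, ?_, hx3⟩
          have hu0 : u ∉ S0 := fun h => hu.1 (hS h)
          simp only [mem_union, mem_NB, not_or]
          refine ⟨hx2, ?_, ?_⟩
          · rintro rfl
            have := hu.2.1
            rw [hx3.2.1] at this
            omega
          · intro h
            exact hu0 (dw_zero.mp hx3.2.1 u h.symm)
  push Not at hX
  left
  refine (L4 hv S ?_).trans (F4_le P hS hC ?_)
  · intro v hvS
    have h0 : v ∉ S0 := fun h => hvS (hS h)
    have e1 := P.h1 v h0
    have e2 := dw_anti (G := G) hS v
    have e3 := hC v hvS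
    by_contra hh
    have : dw G S0 v = 2 := by omega
    have := e3 this
    omega
  · intro u v hu hv' huv
    obtain ⟨b, hb, hbu, hb2⟩ := hX u v hu hv' huv
    have hd := dK_drop P hS hu hv' huv hb hbu
    have hgu := hg u hu
    have hw4 : wb G S0 (S ∪ NB G u) b ≤ 4 := by
      unfold wb
      split_ifs <;> omega
    have hw6 : 6 ≤ wb G S0 S b := by
      unfold wb
      rw [if_neg (by simpa using hb), if_pos (by omega)]
      split_ifs <;> omega
    refine ⟨b, hb, hbu, hb2, ?_, ?_⟩
    · intro hl
      have : wb G S0 S b = 8 := by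
        unfold wb
        rw [if_neg (by simpa using hb), if_pos (by omega), if_pos hl]
      have := Bp_K2_one hS hu hv' huv 4 b hb hbu (by omega)
      omega
    · intro c hc hcu
      by_contra hcon
      push Not at hcon
      have hd' := dK_drop P hS hu hv' huv hc hcu
      have h3 : dK G S0 S c ≤ 3 := by
        refine le_trans ?_ (P.hb3 c hc)
        apply card_le_card
        intro t
        simp only [mem_filter, mem_univ, true_and]
        exact fun h => ⟨h.1, fun h' => h.2.1 (hS h')⟩
      have hcg : wb G S0 (S ∪ NB G u) c + 2 ≤ wb G S0 S c := by
        by_cases h2 : dK G S0 S c = 2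
        · have hd1 : dK G S0 (S ∪ NB G u) c = 1 := by omega
          simp only [wb, hc, h2, hd1, not_true_eq_false, if_false]
          norm_num
          split_ifs <;> omega
        · have h1 : dK G S0 S c = 1 := by have := hcon.2; omega
          have hd1 : dK G S0 (S ∪ NB G u) c = 0 := by omega
          simp only [wb, hc, h1, hd1, not_true_eq_false, if_false, hfl (S ∪ NB G u) c subset_union_left]
          norm_num
          split_ifs <;> omega
      have := Bp_K2_two hS hu hv' huv 2 b c hb hbu hcon.1 (by omega) hcg
      omega

lemma start2 [Fintype V] {G : SimpleGraph V} {S : Finset V} (P : Ph G S) :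
    Wp G S S + Bp G S S ≤ Psi1 G S := by
  let K : V → Prop := fun x => x ∉ S ∧ dw G S x = 0
  let sv : V → ℕ := fun b => if dw G S b = 1 then 6 else 2
  let df : V → ℕ := fun x => if K x then (if Uv G S x then 4 else 6) else 0
  let c : V → V → ℕ := fun x b => if K x ∧ G.Adj x b then sv b else 0
  have h1 : ∀ x, df x ≤ ∑ b, c x b := by
    intro x
    by_cases hK : K x
    · obtain ⟨b, hb⟩ := P.iso x
      have hall := dw_zero.mp hK.2
      by_cases hU : Uv G S x
      · have hb1 := hU.2.2 b hb
        have : ∃ b', b' ≠ b ∧ G.Adj x b' := by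
          by_contra hc
          push Not at hc
          exact hb1 (P.hKl b x (hall b hb) hK.1 hb.symm (fun z hz => by
            by_contra h; exact hc z h hz))
        obtain ⟨b', hne, hb'⟩ := this
        calc df x = ∑ b ∈ ({b, b'} : Finset V), 2 := by simp [df, hK, hU, card_pair hne.symm]
          _ ≤ ∑ b ∈ ({b, b'} : Finset V), c x b := by
            apply sum_le_sum
            intro z hz
            have hz : G.Adj x z := by
              simp only [mem_insert, mem_singleton] at hz
              rcases hz with rfl | rfl <;> assumption
            simp only [c, hK, hz, and_self, if_true, sv]
            split_ifs <;> omega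
          _ ≤ _ := sum_le_sum_of_subset (subset_univ _)
      · have : ∃ b, G.Adj x b ∧ dw G S b = 1 := by
          by_contra hc
          push Not at hc
          exact hU ⟨hK.1, hK.2, hc⟩
        obtain ⟨b', hb', hb1⟩ := this
        calc df x = c x b' := by simp [df, c, hK, hU, hb', sv, hb1]
          _ ≤ _ := single_le_sum (f := fun b => c x b) (fun _ _ => Nat.zero_le _) (mem_univ b')
    · simp [df, hK]
  have h2 : ∀ v, ww G S S v + wb G S S v + ∑ x, c x v ≤ wt1 G S v + df v := by
    intro v
    by_cases hvS : v ∉ S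
    · have hs : ∑ x, c x v = 0 := by
        apply sum_eq_zero
        intro x _
        simp only [c]
        rw [if_neg]
        rintro ⟨hK, ha⟩
        exact hvS (dw_zero.mp hK.2 v ha)
      rw [hs]
      have e1 := P.h1 v hvS
      have hw : wb G S S v = 0 := by simp [wb, hvS]
      rw [hw]
      simp only [ww, wt1, df, K, hvS, if_false, not_false_eq_true, if_true, true_and]
      by_cases e : dw G S v = 2
      · simp [e]
      · by_cases e' : dw G S v = 1
        · simp [e']
        · have e0 : dw G S v = 0 := by omega
          simp only [e0]
          norm_num
          split_ifs <;> omega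
    · push Not at hvS
      have hw : ww G S S v = 0 := by simp [ww, hvS]
      rw [hw]
      have hdle : dK G S S v ≤ dw G S v := by
        apply card_le_card
        intro t
        simp only [mem_filter, mem_univ, true_and]
        exact fun h => ⟨h.1, h.2.1⟩
      by_cases hx : ∃ x, K x ∧ G.Adj x v
      · obtain ⟨x, hK, hxv⟩ := hx
        have hd2 := P.hK1 v x hvS hK.1 hxv.symm hK.2
        have hs : ∑ y, c y v = sv v := by
          rw [sum_eq_single x]
          · simp [c, hK, hxv]
          · intro y _ hyx
            simp only [c]
            rw [if_neg]
            rintro ⟨hK', ha⟩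
            exact hyx (P.hK2 v y x hvS hK'.1 hK.1 ha.symm hxv.symm hK'.2 hK.2)
          · simp
        rw [hs]
        have hd1 : 0 < dw G S v := dw_pos.mpr ⟨x, hxv.symm, hK.1⟩
        have hwt : 6 ≤ wt1 G S v := by
          unfold wt1
          rw [if_neg (by simpa using hvS), if_neg (by omega)]
          split_ifs <;> omega
        have hdk1 : dK G S S v + 1 ≤ dw G S v := by
          rw [dK, ← card_insert_of_notMem (a := x)]
          · apply le_dw_of
            intro u hu
            simp only [mem_insert, mem_filter, mem_univ, true_and] at hu
            rcases hu with rfl | hu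
            · exact ⟨hxv.symm, hK.1⟩
            · exact ⟨hu.1, hu.2.1⟩
          · simp only [mem_filter, mem_univ, true_and, not_and]
            intro _ hq
            have := hq.2.1
            rw [hK.2] at this
            omega
        by_cases e1 : dw G S v = 1
        · have hf : ¬ flg G S S v := by
            rintro ⟨u, a1, a2, a3, _⟩
            have := dw_uniq (by omega) a1 a2 hxv.symm hK.1
            subst this
            have := hK.2
            omega
          have hu : ¬ unb G S S v := by
            rintro ⟨u, a1, a2, a3⟩
            exact a3.2.2 v a1.symm e1
          have h0 : dK G S S v = 0 := by omega
          have : wb G S S v = 0 := by simp [wb, h0, hf, hu]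
          simp only [sv, e1, if_true]
          omega
        · have : wb G S S v ≤ 4 := by
            unfold wb
            split_ifs <;> omega
          simp only [sv, e1, if_false]
          omega
      · have hs : ∑ y, c y v = 0 := by
          apply sum_eq_zero
          intro y _
          simp only [c]
          rw [if_neg]
          intro h
          exact hx ⟨y, h⟩
        rw [hs]
        by_cases e0 : dw G S v = 0
        · rw [wb_zero (dw_zero.mp e0)]
          omega
        · unfold wb wt1
          simp only [hvS, e0, not_true_eq_false, if_false]
          by_cases hl : lc G S v = 2
          · have : spc G S v := Or.inr hl
            simp only [this, if_true]
            split_ifs <;> omega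
          · simp only [hl, if_false]
            split_ifs <;> omega
  have h3 := sum_le_sum (fun v (_ : v ∈ (univ : Finset V)) => h2 v)
  have h4 := sum_le_sum (fun v (_ : v ∈ (univ : Finset V)) => h1 v)
  simp only [sum_add_distrib] at h3
  rw [sum_comm] at h4
  unfold Wp Bp Psi1
  omega


lemma P1 [Fintype V] {G : SimpleGraph V} {S S' : Finset V} (T : Finset V) (D : ℕ)
    (hm : ∀ v, v ∉ T → wt1 G S' v ≤ wt1 G S v)
    (hT : ∑ v ∈ T, wt1 G S' v + D ≤ ∑ v ∈ T, wt1 G S v) : Psi1 G S' + D ≤ Psi1 G S := by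
  unfold Psi1
  rw [← sum_sdiff (subset_univ T), ← sum_sdiff (f := wt1 G S) (subset_univ T)]
  have : ∑ v ∈ univ \ T, wt1 G S' v ≤ ∑ v ∈ univ \ T, wt1 G S v :=
    sum_le_sum fun v hv => hm v (by simpa using hv)
  omega

lemma P1_2 [Fintype V] {G : SimpleGraph V} {S S' : Finset V} {a b : V} (D : ℕ)
    (hm : ∀ v, wt1 G S' v ≤ wt1 G S v) (hab : a ≠ b)
    (hT : wt1 G S' a + wt1 G S' b + D ≤ wt1 G S a + wt1 G S b) : Psi1 G S' + D ≤ Psi1 G S := by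
  apply P1 {a, b} D (fun v _ => hm v)
  rwa [sum_pair hab, sum_pair hab]

lemma P1_3 [Fintype V] {G : SimpleGraph V} {S S' : Finset V} {a b c : V} (D : ℕ)
    (hm : ∀ v, v ≠ a → v ≠ b → v ≠ c → wt1 G S' v ≤ wt1 G S v) (hab : a ≠ b) (hac : a ≠ c) (hbc : b ≠ c)
    (hT : wt1 G S' a + wt1 G S' b + wt1 G S' c + D ≤ wt1 G S a + wt1 G S b + wt1 G S c) :
    Psi1 G S' + D ≤ Psi1 G S := by
  apply P1 {a, b, c} D (fun v hv => by
    simp only [mem_insert, mem_singleton, not_or] at hv; exact hm v hv.1 hv.2.1 hv.2.2)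
  have k : ∀ f : V → ℕ, ∑ v ∈ ({a, b, c} : Finset V), f v = f a + (f b + f c) := fun f => by
    rw [sum_insert (by simp [hab, hac]), sum_pair hbc]
  rw [k, k]
  omega

lemma P1_4 [Fintype V] {G : SimpleGraph V} {S S' : Finset V} {a b c d : V} (D : ℕ)
    (hm : ∀ v, wt1 G S' v ≤ wt1 G S v) (hab : a ≠ b) (hac : a ≠ c) (hbc : b ≠ c)
    (had : a ≠ d) (hbd : b ≠ d) (hcd : c ≠ d)
    (hT : wt1 G S' a + wt1 G S' b + wt1 G S' c + wt1 G S' d + D ≤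
      wt1 G S a + wt1 G S b + wt1 G S c + wt1 G S d) :
    Psi1 G S' + D ≤ Psi1 G S := by
  apply P1 {a, b, c, d} D (fun v _ => hm v)
  have k : ∀ f : V → ℕ, ∑ v ∈ ({a, b, c, d} : Finset V), f v = f a + (f b + (f c + f d)) := fun f => by
    rw [sum_insert (by simp [hab, hac, had]), sum_insert (by simp [hbc, hbd]), sum_pair hcd]
  rw [k, k]
  omega

lemma dw_three_ex [Fintype V] {G : SimpleGraph V} {S : Finset V} {v a b : V}
    (h : 3 ≤ dw G S v) : ∃ c, c ≠ a ∧ c ≠ b ∧ G.Adj v c ∧ c ∉ S := by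
  by_contra hc
  push Not at hc
  have := dw_le_of (G := G) (S := S) (v := v) {a, b} (by
    intro u hu hu'
    by_contra h2
    simp only [mem_insert, mem_singleton, not_or] at h2
    exact hu' (hc u h2.1 h2.2 hu))
  have := this.trans card_le_two
  omega

lemma wt_white [Fintype V] {G : SimpleGraph V} {S : Finset V} {v : V} (h : v ∉ S) :
    wt1 G S v = 10 := by simp [wt1, h]

lemma wt_zero [Fintype V] {G : SimpleGraph V} {S : Finset V} {v : V} (h : v ∈ S)
    (h0 : ∀ u, G.Adj v u → u ∈ S) : wt1 G S v = 0 := by simp [wt1, h, dw_zero.mpr h0]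

lemma wt_le8 [Fintype V] {G : SimpleGraph V} {S : Finset V} {v : V} (h : v ∈ S) :
    wt1 G S v ≤ 8 := by
  unfold wt1; rw [if_neg (by simpa using h)]; split_ifs <;> omega

lemma wt_le6 [Fintype V] {G : SimpleGraph V} {S : Finset V} {v : V} (h : v ∈ S) (hs : ¬ spc G S v) :
    wt1 G S v ≤ 6 := by
  unfold wt1; rw [if_neg (by simpa using h)]; split_ifs <;> omega

lemma wt_ge6 [Fintype V] {G : SimpleGraph V} {S : Finset V} {v : V} (h : 0 < dw G S v) :
    6 ≤ wt1 G S v := by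
  unfold wt1; split_ifs <;> omega

lemma wt_le10 [Fintype V] {G : SimpleGraph V} {S : Finset V} {v : V} :
    wt1 G S v ≤ 10 := by
  unfold wt1; split_ifs <;> omega

lemma hasLeaf_anti {G : SimpleGraph V} {S T : Finset V} (h : S ⊆ T) {w : V}
    (hp : hasLeaf G T w) : hasLeaf G S w := by
  obtain ⟨x, h1, h2, h3⟩ := hp
  exact ⟨x, h1, fun hh => h2 (h hh), h3⟩

lemma wt_mono [Fintype V] {G : SimpleGraph V} {S : Finset V} (p v : V) :
    wt1 G (S ∪ NB G p) v ≤ wt1 G S v + if v ∈ S ∧ InPair G S v p then 2 else 0 := by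
  by_cases hv : v ∈ S
  swap
  · rw [wt_white hv]; have := wt_le10 (G := G) (S := S ∪ NB G p) (v := v); omega
  have hv' : v ∈ S ∪ NB G p := mem_union_left _ hv
  by_cases hpv : p = v
  · subst hpv
    rw [wt_zero hv' (fun u hu => by simp [mem_NB, hu])]; omega
  have hd := dw_anti (G := G) (S := S) (T := S ∪ NB G p) subset_union_left v
  by_cases h0 : dw G (S ∪ NB G p) v = 0
  · rw [wt_zero hv' (dw_zero.mp h0)]; omega
  have h6 := wt_ge6 (G := G) (S := S) (v := v) (by omega)
  by_cases hs : spc G (S ∪ NB G p) v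
  swap
  · have := wt_le6 hv' hs; omega
  have h8 := wt_le8 (G := G) hv'
  by_cases hI : InPair G S v p
  · rw [if_pos ⟨hv, hI⟩]; omega
  have hl := lc_keep hpv hI
  have hs' : spc G S v := by
    rcases hs with ⟨h1, h2⟩ | h
    · exact Or.inl ⟨hasLeaf_anti subset_union_left h1, by omega⟩
    · exact Or.inr (by omega)
  have : wt1 G S v = 8 := by
    unfold wt1; rw [if_neg (by simpa using hv), if_neg (by omega), if_pos hs']
  omega

lemma wt_mono' [Fintype V] {G : SimpleGraph V} {S : Finset V} {p : V}
    (h : ∀ b, b ∈ S → ¬ InPair G S b p) (v : V) : wt1 G (S ∪ NB G p) v ≤ wt1 G S v := by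
  have := wt_mono (G := G) (S := S) p v
  rwa [if_neg (fun hh => h v hh.1 hh.2)] at this

lemma InPair_dw1 [Fintype V] {G : SimpleGraph V} {S : Finset V} {b p : V} (hb : b ∈ S)
    (h : InPair G S b p) : dw G S p = 1 := (InPair_Q (Subset.refl S) hb h).2.2

lemma nopair2 [Fintype V] {G : SimpleGraph V} {S : Finset V} {p : V} (h : 2 ≤ dw G S p) :
    ∀ b, b ∈ S → ¬ InPair G S b p := by
  intro b hb hI
  have := InPair_dw1 hb hI
  omega

def InA (G : SimpleGraph V) (S : Finset V) (b : V) : Prop :=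
  b ∉ S ∧ ∃ x y, G.Adj b x ∧ x ∉ S ∧ (∀ z, G.Adj x z → z = b) ∧ G.Adj b y ∧ y ∉ S ∧ y ≠ x

lemma InA_anti {G : SimpleGraph V} {S T : Finset V} (h : S ⊆ T) {b : V} (hb : InA G T b) :
    InA G S b := by
  obtain ⟨h0, x, y, h1, h2, h3, h4, h5, h6⟩ := hb
  exact ⟨fun hh => h0 (h hh), x, y, h1, fun hh => h2 (h hh), h3, h4, fun hh => h5 (h hh), h6⟩

/-- a special vertex that was white in S yields a member of A -/
lemma leaf_A [Fintype V] {G : SimpleGraph V} {S T : Finset V} (h : S ⊆ T) {w : V} (hw : w ∉ S)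
    (h1 : hasLeaf G T w) (h2 : 2 ≤ dw G T w) : InA G S w := by
  obtain ⟨x, a1, a2, a3⟩ := h1
  obtain ⟨y, hy, hy1, hy2⟩ := dw_two_ex (a := x) h2
  exact ⟨hw, x, y, a1, fun hh => a2 (h hh), a3, hy1, fun hh => hy2 (h hh), hy⟩

lemma pr_A {G : SimpleGraph V} {S T : Finset V} (h : S ⊆ T) {w u v : V} (hw : w ∉ S)
    (hp : pr G T w u v) : InA G S u := by
  obtain ⟨a1, a2, a3, a4, a5, a6, a7⟩ := hp
  exact ⟨fun hh => a4 (h hh), v, w, a2, fun hh => a5 (h hh), a7, a1.symm, hw, a3.symm⟩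

lemma lc_ex [Fintype V] {G : SimpleGraph V} {S : Finset V} {w : V} (h : lc G S w ≠ 0) :
    ∃ u v, pr G S w u v := by
  obtain ⟨u, hu⟩ := card_pos.mp (Nat.pos_of_ne_zero h)
  simp only [mem_filter, mem_univ, true_and] at hu
  exact ⟨u, hu⟩

lemma new6 [Fintype V] {G : SimpleGraph V} {S T : Finset V} (hA : ∀ b, ¬ InA G S b) (h : S ⊆ T)
    {v : V} (hv : v ∉ S) (hvT : v ∈ T) : wt1 G T v ≤ 6 := by
  apply wt_le6 hvT
  rintro (⟨h1, h2⟩ | h1)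
  · exact hA _ (leaf_A h hv h1 h2)
  · obtain ⟨u, w, hp⟩ := lc_ex (by omega : lc G T v ≠ 0)
    exact hA _ (pr_A h hv hp)

/-- Staller gain in phase one -/
lemma StP [Fintype V] {G : SimpleGraph V} {S : Finset V} {q : V} (hq : ¬ NB G q ⊆ S) :
    Psi1 G (S ∪ NB G q) + 8 ≤ Psi1 G S ∧
    (Psi1 G (S ∪ NB G q) + 10 ≤ Psi1 G S ∨ (q ∈ S ∧ ∃ w, G.Adj q w ∧ w ∉ S ∧
      spc G (S ∪ NB G q) w)) := by
  suffices h : Psi1 G (S ∪ NB G q) + 10 ≤ Psi1 G S ∨ (Psi1 G (S ∪ NB G q) + 8 ≤ Psi1 G S ∧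
      q ∈ S ∧ ∃ w, G.Adj q w ∧ w ∉ S ∧ spc G (S ∪ NB G q) w) by
    rcases h with h | ⟨h1, h2⟩
    · exact ⟨by omega, Or.inl h⟩
    · exact ⟨h1, Or.inr h2⟩
  by_cases hI : ∃ b, b ∈ S ∧ InPair G S b q
  · left
    obtain ⟨b, hb, hI⟩ := hI
    obtain ⟨u, v, hp, hquv⟩ := id hI
    obtain ⟨a1, a2, a3, a4, a5, a6, a7⟩ := hp
    have huS' : u ∈ S ∪ NB G q := by
      rcases hquv with rfl | rfl <;> simp [mem_NB, a2.symm]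
    have hvS' : v ∈ S ∪ NB G q := by
      rcases hquv with rfl | rfl <;> simp [mem_NB, a2]
    have z1 := wt_zero (G := G) huS' (fun z hz => by
      rcases a6 z hz with rfl | rfl
      · exact mem_union_left _ hb
      · exact hvS')
    have z2 := wt_zero (G := G) hvS' (fun z hz => by rw [a7 z hz]; exact huS')
    have w1 := wt_white (G := G) a4
    have w2 := wt_white (G := G) a5
    have m := wt_mono (G := G) (S := S) q b
    rw [if_pos ⟨hb, hI⟩] at m
    apply P1_3 (a := u) (b := v) (c := b) 10
    · intro t _ _ htb
      have := wt_mono (G := G) (S := S) q t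
      rwa [if_neg (fun hh => htb (InPair_uniq hh.2 hI hh.1 hb))] at this
    · exact a2.ne
    · exact a1.ne'
    · exact a3
    · omega
  push Not at hI
  have hm := wt_mono' hI
  by_cases hqS : q ∈ S
  · obtain ⟨y, hy1, hy2⟩ := not_subset.mp hq
    have hqy : G.Adj q y := by
      rcases mem_NB.mp hy1 with rfl | h
      · exact absurd hqS hy2
      · exact h
    have hyS' : y ∈ S ∪ NB G q := mem_union_right _ hy1
    have z1 := wt_zero (G := G) (S := S ∪ NB G q) (v := q) (mem_union_left _ hqS)
      (fun z hz => by simp [mem_NB, hz])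
    have g1 := wt_ge6 (G := G) (S := S) (v := q) (dw_pos.mpr ⟨y, hqy, hy2⟩)
    have w1 := wt_white (G := G) hy2
    have w2 := wt_le8 (G := G) hyS'
    by_cases hs : spc G (S ∪ NB G q) y
    · right
      exact ⟨P1_2 8 hm hqy.ne (by omega), hqS, y, hqy, hy2, hs⟩
    · left
      have w3 := wt_le6 hyS' hs
      exact P1_2 10 hm hqy.ne (by omega)
  · left
    apply P1 {q} 10 (fun v _ => hm v)
    rw [sum_singleton, sum_singleton, wt_white hqS, wt_zero (S := S ∪ NB G q)]
    · simp [mem_NB]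
    · intro z hz; simp [mem_NB, hz]

/-- phase two start facts -/
lemma mkPh [Fintype V] {G : SimpleGraph V} {S : Finset V} (iso : ∀ v, ∃ u, G.Adj v u)
    (hA : ∀ b, ¬ InA G S b)
    (hn : ∀ p, ¬ NB G p ⊆ S → ¬ (Psi1 G (S ∪ NB G p) + 22 ≤ Psi1 G S)) : Ph G S := by
  have leg : ∀ p y, G.Adj p y → y ∉ S → ¬ NB G p ⊆ S := fun p y h hy hh =>
    hy (hh (by simp [mem_NB, h]))
  have n6 : ∀ p y, G.Adj p y → y ∉ S → wt1 G (S ∪ NB G p) y ≤ 6 := fun p y h hy =>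
    new6 hA subset_union_left hy (by simp [mem_NB, h])
  have pz : ∀ p, (p ∈ S ∪ NB G p) := fun p => by simp [mem_NB]
  have self0 : ∀ p, wt1 G (S ∪ NB G p) p = 0 := fun p => wt_zero (pz p)
    (fun z hz => by simp [mem_NB, hz])
  have h1 : ∀ v, v ∉ S → dw G S v ≤ 2 := by
    intro v hv
    by_contra h
    obtain ⟨a, ha, haS⟩ := dw_pos.mp (by omega : 0 < dw G S v)
    obtain ⟨b, hba, hb, hbS⟩ := dw_two_ex (a := a) (by omega : 2 ≤ dw G S v)
    obtain ⟨c, hca, hcb, hc, hcS⟩ := dw_three_ex (a := a) (b := b) (by omega : 3 ≤ dw G S v)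
    apply hn v (leg v a ha haS)
    have t1 := n6 v a ha haS
    have t2 := n6 v b hb hbS
    have t3 := n6 v c hc hcS
    refine P1_4 (a := v) (b := a) (c := b) (d := c) 22 (wt_mono' (nopair2 (by omega))) ha.ne hb.ne hba.symm hc.ne
      hca.symm hcb.symm ?_
    rw [self0, wt_white hv, wt_white haS, wt_white hbS, wt_white hcS]
    omega
  have h3 : ∀ u v, u ∉ S → v ∉ S → G.Adj u v → dw G S u = 2 → dw G S v = 2 := by
    intro u v hu hv huv hu2
    by_contra h
    have e1 := h1 v hv
    obtain ⟨b, hbv, hb, hbS⟩ := dw_two_ex (a := v) (by omega : 2 ≤ dw G S u)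
    apply hn u (leg u v huv hv)
    have t2 := n6 u b hb hbS
    have t1 := wt_zero (G := G) (S := S ∪ NB G u) (v := v) (by simp [mem_NB, huv]) (by
      intro z hz
      by_cases hzS : z ∈ S
      · exact mem_union_left _ hzS
      · rw [dw_uniq (by omega) hz hzS huv.symm hu]; exact pz u)
    refine P1_3 (a := u) (b := v) (c := b) 22 (fun v _ _ _ => wt_mono' (nopair2 (by omega)) v)
      huv.ne hb.ne hbv.symm ?_
    rw [self0, t1, wt_white hv, wt_white hu, wt_white hbS]
    omega
  have bm : ∀ b, b ∈ S → ∀ v, wt1 G (S ∪ NB G b) v ≤ wt1 G S v := fun b hb =>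
    wt_mono' (nopair_blue hb)
  have kz : ∀ b x, G.Adj b x → dw G S x = 0 → wt1 G (S ∪ NB G b) x = 0 := by
    intro b x hbx hx
    exact wt_zero (by simp [mem_NB, hbx]) (fun z hz => mem_union_left _ (dw_zero.mp hx z hz))
  refine ⟨iso, h1, h3, ?_, ?_, ?_, ?_, ?_⟩
  · intro b hb
    by_contra h
    obtain ⟨y, hy, hyS⟩ := dw_pos.mp (by omega : 0 < dw G S b)
    apply hn b (leg b y hy hyS)
    have := sum_gain (wt1 G S) (wt1 G (S ∪ NB G b))
      (fun v => (if v = b then 6 else 0) + (if G.Adj b v ∧ v ∉ S then 4 else 0)) (fun _ => 0) (by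
        intro v
        by_cases hvb : v = b
        · subst hvb
          have := wt_ge6 (G := G) (S := S) (v := v) (by omega)
          rw [self0]
          simpa [hb] using this
        · by_cases hv : G.Adj b v ∧ v ∉ S
          · have := n6 b v hv.1 hv.2
            have := wt_white (G := G) hv.2
            simp only [hvb, hv, if_false, if_true, not_false_eq_true, and_self]
            omega
          · simpa [hvb, hv] using bm b hb v)
    rw [sum_add_distrib, sum_adj_white] at this
    simp only [sum_ite_eq', mem_univ, if_true, sum_const_zero] at this
    unfold Psi1
    omega
  · intro b x hb hx hbx hx0
    by_contra h
    obtain ⟨y, hyx, hy, hyS⟩ := dw_two_ex (a := x) (by omega : 2 ≤ dw G S b)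
    obtain ⟨c, hcx, hcy, hc, hcS⟩ := dw_three_ex (a := x) (b := y) (by omega : 3 ≤ dw G S b)
    apply hn b (leg b x hbx hx)
    have t1 := kz b x hbx hx0
    have t2 := n6 b y hy hyS
    have t3 := n6 b c hc hcS
    have t4 := wt_ge6 (G := G) (S := S) (v := b) (by omega)
    refine P1_4 (a := b) (b := x) (c := y) (d := c) 22 (bm b hb) hbx.ne hy.ne hyx.symm hc.ne
      hcx.symm hcy.symm ?_
    rw [self0, t1, wt_white hx, wt_white hyS, wt_white hcS]
    omega
  · intro b x y hb hx hy hbx hby hx0 hy0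
    by_contra hxy
    apply hn b (leg b x hbx hx)
    have t1 := kz b x hbx hx0
    have t2 := kz b y hby hy0
    have t4 := wt_ge6 (G := G) (S := S) (v := b) (dw_pos.mpr ⟨x, hbx, hx⟩)
    refine P1_3 (a := b) (b := x) (c := y) 22 (fun v _ _ _ => bm b hb v) hbx.ne hby.ne hxy ?_
    rw [self0, t1, t2, wt_white hx, wt_white hy]
    omega
  · intro b x hb hx hbx hl
    by_contra h
    have hpos : 0 < dw G S b := dw_pos.mpr ⟨x, hbx, hx⟩
    obtain ⟨y, hyx, hy, hyS⟩ := dw_two_ex (a := x) (by omega : 2 ≤ dw G S b)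
    apply hn b (leg b x hbx hx)
    have t1 := kz b x hbx (dw_zero.mpr fun u hu => by rw [hl u hu]; exact hb)
    have t2 := n6 b y hy hyS
    have hs : spc G S b := Or.inl ⟨⟨x, hbx, hx, hl⟩, by omega⟩
    have t4 : wt1 G S b = 8 := by
      unfold wt1; rw [if_neg (by simpa using hb), if_neg (by omega), if_pos hs]
    refine P1_3 (a := b) (b := x) (c := y) 22 (fun v _ _ _ => bm b hb v) hbx.ne hy.ne hyx.symm ?_
    rw [self0, t1, t4, wt_white hx, wt_white hyS]
    omega
  · intro b u v hb hu hv hbu hbv huv hu1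
    have e1 := h1 v hv
    have e2 := h3 v u hv hu huv.symm
    have e3 : 0 < dw G S v := dw_pos.mpr ⟨u, huv.symm, hu⟩
    have hv1 : dw G S v = 1 := by
      by_contra h
      have := e2 (by omega)
      omega
    apply hn b (leg b u hbu hu)
    have t1 := wt_zero (G := G) (S := S ∪ NB G b) (v := u) (by simp [mem_NB, hbu]) (by
      intro z hz
      by_cases hzS : z ∈ S
      · exact mem_union_left _ hzS
      · rw [dw_uniq (by omega) hz hzS huv hv]; simp [mem_NB, hbv])
    have t2 := wt_zero (G := G) (S := S ∪ NB G b) (v := v) (by simp [mem_NB, hbv]) (by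
      intro z hz
      by_cases hzS : z ∈ S
      · exact mem_union_left _ hzS
      · rw [dw_uniq (by omega) hz hzS huv.symm hu]; simp [mem_NB, hbu])
    have t4 := wt_ge6 (G := G) (S := S) (v := b) (dw_pos.mpr ⟨u, hbu, hu⟩)
    refine P1_3 (a := b) (b := u) (c := v) 22 (fun v _ _ _ => bm b hb v) hbu.ne hbv.ne huv.ne ?_
    rw [self0, t1, t2, wt_white hu, wt_white hv]
    omega


/-- exceptional configuration at b -/
def Exc [Fintype V] (G : SimpleGraph V) (S : Finset V) (b x y : V) : Prop :=
  b ∉ S ∧ x ∉ S ∧ y ∉ S ∧ G.Adj b x ∧ G.Adj b y ∧ x ≠ y ∧ (∀ z, G.Adj x z → z = b) ∧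
    (∀ z, G.Adj b z → z = x ∨ z = y) ∧ lc G S y = 3 ∧ dw G S y = 3

lemma InPair_deg [Fintype V] {G : SimpleGraph V} {S : Finset V} {w p : V} (h : InPair G S w p)
    (T : Finset V) : dw G T p ≤ 2 := by
  obtain ⟨u, v, ⟨a1, a2, a3, a4, a5, a6, a7⟩, rfl | rfl⟩ := h
  · exact (dw_le_of {w, v} (fun z hz _ => by
      rcases a6 z hz with rfl | rfl <;> simp)).trans card_le_two
  · exact (dw_le_of {u, w} (fun z hz _ => by simp [a7 z hz])).trans card_le_two

lemma wt_y6 [Fintype V] {G : SimpleGraph V} {S : Finset V} {v : V} (h : v ∈ S)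
    (hd : dw G S v ≤ 1) : wt1 G S v ≤ 6 := by
  apply wt_le6 h
  rintro (⟨_, h2⟩ | h1)
  · omega
  · have := lc_le_dw (G := G) (S := S) (w := v)
    omega

/-- playing the centre of three pairs -/
lemma play_center [Fintype V] {G : SimpleGraph V} {S : Finset V} {y : V} (hy : y ∉ S)
    (hl : 3 ≤ lc G S y) :
    Psi1 G (S ∪ NB G y) + 22 ≤ Psi1 G S ∧
      (4 ≤ dw G S y → Psi1 G (S ∪ NB G y) + 24 ≤ Psi1 G S) := by
  have hd := lc_le_dw (G := G) (S := S) (w := y)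
  have key := sum_gain (wt1 G S) (wt1 G (S ∪ NB G y))
      (fun v => (if v = y then 10 else 0) + ((if G.Adj y v ∧ v ∉ S then 2 else 0) +
        (if ∃ t, pr G S y v t then 2 else 0))) (fun _ => 0) (by
    intro v
    by_cases hvy : v = y
    · subst hvy
      have : ¬ ∃ t, pr G S v v t := by
        rintro ⟨t, ht⟩
        exact ht.1.ne rfl
      rw [wt_white hy, wt_zero (by simp [mem_NB]) (fun z hz => by simp [mem_NB, hz])]
      simp [this]
    by_cases hv : G.Adj y v ∧ v ∉ S
    · have hvS' : v ∈ S ∪ NB G y := by simp [mem_NB, hv.1]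
      have w1 := wt_white (G := G) hv.2
      have w2 := wt_le8 (G := G) hvS'
      by_cases hp : ∃ t, pr G S y v t
      · obtain ⟨t, ht⟩ := id hp
        obtain ⟨a1, a2, a3, a4, a5, a6, a7⟩ := ht
        have := wt_y6 (G := G) hvS' (by
          have := dw_le_of (G := G) (S := S ∪ NB G y) (v := v) {t} (by
            intro z hz hz'
            rcases a6 z hz with rfl | rfl
            · exact absurd (by simp [mem_NB]) hz'
            · simp)
          simpa using this)
        rw [if_neg hvy, if_pos hv, if_pos hp]
        omega
      · rw [if_neg hvy, if_pos hv, if_neg hp]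
        omega
    · have hp : ¬ ∃ t, pr G S y v t := by
        rintro ⟨t, ht⟩
        exact hv ⟨ht.1, ht.2.2.2.1⟩
      rw [if_neg hvy, if_neg hv, if_neg hp]
      simpa using wt_mono' (nopair2 (by omega)) v)
  rw [sum_add_distrib, sum_add_distrib, sum_adj_white] at key
  have k2 : (∑ v, if ∃ t, pr G S y v t then 2 else 0) = 2 * lc G S y := by
    rw [← sum_filter, sum_const, smul_eq_mul, mul_comm]; rfl
  rw [k2] at key
  simp only [sum_ite_eq', mem_univ, if_true, sum_const_zero] at key
  unfold Psi1
  constructor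
  · omega
  · intro; omega

/-- If A is nonempty then either a move gaining 24, or the exceptional configuration -/
lemma stA [Fintype V] {G : SimpleGraph V} {S : Finset V}
    (hn : ∀ p, ¬ NB G p ⊆ S → ¬ (Psi1 G (S ∪ NB G p) + 24 ≤ Psi1 G S)) :
    ∀ b, InA G S b → ∃ x y, Exc G S b x y := by
  have leg : ∀ p, p ∉ S → ¬ NB G p ⊆ S := fun p hp hh => hp (hh (by simp [mem_NB]))
  have pz : ∀ p, (p ∈ S ∪ NB G p) := fun p => by simp [mem_NB]
  have self0 : ∀ p, wt1 G (S ∪ NB G p) p = 0 := fun p => wt_zero (pz p)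
    (fun z hz => by simp [mem_NB, hz])
  have lf0 : ∀ p x, G.Adj p x → (∀ z, G.Adj x z → z = p) → wt1 G (S ∪ NB G p) x = 0 := by
    intro p x hpx hl
    exact wt_zero (by simp [mem_NB, hpx]) (fun z hz => by rw [hl z hz]; exact pz p)
  have hA2 : ∀ b, InA G S b → dw G S b ≤ 2 := by
    rintro b ⟨hb, x, y, hx, hxS, hl, hy, hyS, hyx⟩
    by_contra h
    obtain ⟨c, hcx, hcy, hc, hcS⟩ := dw_three_ex (a := x) (b := y) (by omega : 3 ≤ dw G S b)
    apply hn b (leg b hb)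
    have t1 := lf0 b x hx hl
    have t2 := wt_le8 (G := G) (S := S ∪ NB G b) (v := y) (by simp [mem_NB, hy])
    have t3 := wt_le8 (G := G) (S := S ∪ NB G b) (v := c) (by simp [mem_NB, hc])
    refine P1_4 (a := b) (b := x) (c := y) (d := c) 24 (wt_mono' (nopair2 (by omega))) hx.ne hy.ne
      hyx.symm hc.ne hcx.symm hcy.symm ?_
    rw [self0, t1, wt_white hb, wt_white hxS, wt_white hyS, wt_white hcS]
    omega
  intro b hbA
  obtain ⟨hb, x, y, hx, hxS, hl, hy, hyS, hyx⟩ := id hbA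
  have hb2 := hA2 b hbA
  have hb2' : 2 ≤ dw G S b := dw_ge2 hx hxS hy hyS hyx.symm
  have hyS' : y ∈ S ∪ NB G b := by simp [mem_NB, hy]
  have hsp : spc G (S ∪ NB G b) y := by
    by_contra hs
    apply hn b (leg b hb)
    have t1 := lf0 b x hx hl
    have t2 := wt_le6 hyS' hs
    refine P1_3 (a := b) (b := x) (c := y) 24 (fun v _ _ _ => wt_mono' (nopair2 (by omega)) v) hx.ne hy.ne
      hyx.symm ?_
    rw [self0, t1, wt_white hb, wt_white hxS, wt_white hyS]
    omega
  have ins : ∀ p T, p ∉ S → p ∈ T → S ⊆ T → G.Adj y p → dw G T y + 1 ≤ dw G S y := by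
    intro p T hp hpT hT ha
    have h1 := dw_insert (G := G) (v := y) hp
    rw [if_pos ha] at h1
    have h2 := dw_anti (G := G) (S := insert p S) (T := T) (insert_subset hpT hT) y
    omega
  have noleaf : ∀ p T, p ∉ S → p ∈ T → S ⊆ T → G.Adj y p →
      ¬ (hasLeaf G T y ∧ 2 ≤ dw G T y) := by
    rintro p T hp hpT hT ha ⟨h1, h2⟩
    have := hA2 y (leaf_A hT hyS h1 h2)
    have := ins p T hp hpT hT ha
    omega
  have hl2 : lc G (S ∪ NB G b) y = 2 := by
    rcases hsp with h | h
    · exact absurd h (noleaf b _ hb (pz b) subset_union_left hy.symm)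
    · exact h
  have hlge := lc_anti (G := G) (S := S) (T := S ∪ NB G b) subset_union_left y
  by_cases hlS : lc G S y = 2
  · exfalso
    obtain ⟨u, v, hp'⟩ := lc_ex (by omega : lc G (S ∪ NB G b) y ≠ 0)
    have hp := pr_anti subset_union_left hp'
    obtain ⟨a1, a2, a3, a4, a5, a6, a7⟩ := id hp
    apply hn u (leg u a4)
    have hyu : y ∈ S ∪ NB G u := by simp [mem_NB, a1.symm]
    have hlt : lc G (S ∪ NB G u) y < lc G S y := by
      apply card_lt_card
      rw [ssubset_iff_of_subset]
      · refine ⟨u, ?_, ?_⟩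
        · simp only [mem_filter, mem_univ, true_and]
          exact ⟨v, hp⟩
        · simp only [mem_filter, mem_univ, true_and, not_exists]
          intro t ht
          exact ht.2.2.2.1 (pz u)
      · intro t
        simp only [mem_filter, mem_univ, true_and]
        rintro ⟨s, hs⟩
        exact ⟨s, pr_anti subset_union_left hs⟩
    have hns : ¬ spc G (S ∪ NB G u) y := by
      rintro (h | h)
      · exact noleaf u _ a4 (pz u) subset_union_left a1 h
      · omega
    have t1 := lf0 u v a2 a7
    have t2 := wt_le6 hyu hns
    refine P1_3 (a := u) (b := v) (c := y) 24 (fun v' _ _ _ => wt_mono' (nopair2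
      (dw_ge2 a2 a5 a1.symm hyS a3)) v') a2.ne a1.ne' a3 ?_
    rw [self0, t1, wt_white a4, wt_white a5, wt_white hyS]
    omega
  · have hI : InPair G S y b := by
      by_contra hI
      have := lc_keep hy.ne hI
      omega
    have hpc := play_center (G := G) hyS (by omega)
    have hd3 : dw G S y ≤ 3 := by
      by_contra h
      exact hn y (leg y hyS) (hpc.2 (by omega))
    have hld := lc_le_dw (G := G) (S := S) (w := y)
    refine ⟨x, y, hb, hxS, hyS, hx, hy, hyx.symm, hl, ?_, by omega, by omega⟩
    obtain ⟨u, v, ⟨a1, a2, a3, a4, a5, a6, a7⟩, rfl | rfl⟩ := hI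
    · intro z hz
      rcases a6 z hz with h | h
      · exact Or.inr h
      · rcases a6 x hx with h' | h'
        · exact absurd h'.symm hyx
        · exact Or.inl (h.trans h'.symm)
    · exact absurd ((a7 y hy).trans (a7 x hx).symm) hyx

lemma excS [Fintype V] {G : SimpleGraph V} {S : Finset V}
    (hE : ∀ b, InA G S b → ∃ x y, Exc G S b x y) {y q : V} (hy3 : dw G S y = 3)
    (hq : ¬ NB G q ⊆ S ∪ NB G y) :
    Psi1 G (S ∪ NB G y ∪ NB G q) + 10 ≤ Psi1 G (S ∪ NB G y) := by
  rcases (StP hq).2 with h | ⟨hqS, w, hqw, hw, hs⟩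
  · exact h
  exfalso
  have hsub : S ⊆ S ∪ NB G y ∪ NB G q := by rw [union_assoc]; exact subset_union_left
  have hwS : w ∉ S := fun h => hw (mem_union_left _ h)
  rcases hs with ⟨h1, h2⟩ | h
  · obtain ⟨x0, y0, c1, c2, c3, c4, c5, c6, c7, c8, c9, c10⟩ := hE w (leaf_A hsub hwS h1 h2)
    -- q is x0 or y0, hence dominated, so at most one white neighbour remains
    have hle : dw G (S ∪ NB G y ∪ NB G q) w ≤ 1 := by
      have hqS2 : q ∈ S ∪ NB G y ∪ NB G q := mem_union_left _ hqS
      rcases c8 q hqw.symm with e | e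
      · have := dw_le_of (G := G) (S := S ∪ NB G y ∪ NB G q) (v := w) {y0} (by
          intro z hz hz'
          rcases c8 z hz with h | h
          · exact absurd (by rw [h, ← e]; exact hqS2) hz'
          · simp [h])
        simpa using this
      · have := dw_le_of (G := G) (S := S ∪ NB G y ∪ NB G q) (v := w) {x0} (by
          intro z hz hz'
          rcases c8 z hz with h | h
          · simp [h]
          · exact absurd (by rw [h, ← e]; exact hqS2) hz')
        simpa using this
    omega
  · obtain ⟨u, v, hp⟩ := lc_ex (by omega : lc G (S ∪ NB G y ∪ NB G q) w ≠ 0)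
    obtain ⟨x0, y0, c1, c2, c3, c4, c5, c6, c7, c8, c9, c10⟩ := hE u (pr_A hsub hwS hp)
    have hpS := pr_anti hsub hp
    have hy0 : y0 = w := by
      rcases hpS.2.2.2.2.2.1 y0 c5 with h | h
      · exact h
      · have := InPair_deg (G := G) (S := S) (w := w) (p := y0) ⟨u, v, hpS, Or.inr h⟩ S
        omega
    subst hy0
    have e1 : lc G (S ∪ NB G y) y0 = lc G S y0 := by
      apply lc_keep
      · rintro rfl
        exact hw (by simp [mem_NB])
      · intro hI
        have := InPair_deg hI S
        omega
    have e2 : lc G (S ∪ NB G y ∪ NB G q) y0 = lc G (S ∪ NB G y) y0 := by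
      apply lc_keep hqw.ne
      intro hI
      exact InPair_white hI hqS
    omega

lemma L1 [Fintype V] {G : SimpleGraph V} {val : Finset V → ℕ} (hv : GV G val)
    (iso : ∀ v, ∃ u, G.Adj v u) : ∀ S, 16 * val S ≤ Psi1 G S := by
  intro S
  refine pot hv (fun _ => True) (Psi1 G) (fun _ _ _ _ => trivial) ?_ S trivial
  intro S _ _
  by_cases h24 : ∃ p, ¬ NB G p ⊆ S ∧ Psi1 G (S ∪ NB G p) + 24 ≤ Psi1 G S
  · right
    obtain ⟨p, hp, h⟩ := h24
    exact ⟨p, hp, 24, 8, by norm_num, by norm_num, h, fun q hq => (StP hq).1⟩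
  push Not at h24
  have hE := stA (G := G) (S := S) (fun p hp h => by have := h24 p hp; omega)
  by_cases hA : ∃ b, InA G S b
  · right
    obtain ⟨b, hb⟩ := hA
    obtain ⟨x, y, c1, c2, c3, c4, c5, c6, c7, c8, c9, c10⟩ := hE b hb
    refine ⟨y, fun hh => c3 (hh (by simp [mem_NB])), 22, 10, by norm_num, by norm_num,
      (play_center c3 (by omega)).1, fun q hq => excS hE c10 hq⟩
  push Not at hA
  by_cases h22 : ∃ p, ¬ NB G p ⊆ S ∧ Psi1 G (S ∪ NB G p) + 22 ≤ Psi1 G S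
  · right
    obtain ⟨p, hp, h⟩ := h22
    refine ⟨p, hp, 22, 10, by norm_num, by norm_num, h, fun q hq => ?_⟩
    rcases (StP hq).2 with h | ⟨hqS, w, hqw, hw, hs⟩
    · exact h
    · exfalso
      have hsub : S ⊆ S ∪ NB G p ∪ NB G q := by rw [union_assoc]; exact subset_union_left
      have hwS : w ∉ S := fun h => hw (mem_union_left _ h)
      rcases hs with ⟨h1, h2⟩ | h
      · exact hA _ (leaf_A hsub hwS h1 h2)
      · obtain ⟨u, v, hp⟩ := lc_ex (by omega : lc G (S ∪ NB G p ∪ NB G q) w ≠ 0)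
        exact hA _ (pr_A hsub hwS hp)
  push Not at h22
  left
  have P := mkPh iso hA (fun p hp h => by have := h22 p hp; omega)
  exact (L2 hv P S (Subset.refl _)).trans (start2 P)

lemma L1_empty [Fintype V] {G : SimpleGraph V} {val : Finset V → ℕ} (hv : GV G val)
    (iso : ∀ v, ∃ u, G.Adj v u) : 16 * val ∅ ≤ 10 * Fintype.card V := by
  refine (L1 hv iso ∅).trans (le_of_eq ?_)
  unfold Psi1
  rw [sum_congr rfl (fun v _ => wt_white (by simp)), sum_const, smul_eq_mul, mul_comm]
  rfl


def hG (H : Finset (Finset V)) : SimpleGraph V where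
  Adj u v := u ≠ v ∧ ∃ e ∈ H, u ∈ e ∧ v ∈ e
  symm := ⟨fun _ _ ⟨h, e, he, hu, hv⟩ => ⟨h.symm, e, he, hv, hu⟩⟩
  loopless := ⟨fun _ h => h.1 rfl⟩

lemma NB_hG [Fintype V] (H : Finset (Finset V)) (v : V) : NB (hG H) v = closedNbhd H v := by
  ext u
  unfold NB closedNbhd
  simp only [mem_filter, mem_univ, true_and]
  constructor
  · rintro (h | ⟨_, e, he, hv, hu⟩)
    · exact Or.inl h
    · exact Or.inr ⟨e, he, hu, hv⟩
  · rintro (h | ⟨e, he, hu, hv⟩)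
    · exact Or.inl h
    · by_cases huv : u = v
      · exact Or.inl huv
      · exact Or.inr ⟨fun h => huv h.symm, e, he, hv, hu⟩

lemma GV_hG [Fintype V] (H : Finset (Finset V)) : GV (hG H) (fun S => domGameVal H true S) := by
  constructor
  · rw [domGameVal, dif_neg]
    rintro ⟨v, hv⟩
    exact (mem_filter.mp hv).2 (subset_univ _)
  · intro S p X hp hX hq
    simp only [NB_hG] at hp hq ⊢
    have hpm : p ∈ univ.filter (fun v => ¬ closedNbhd H v ⊆ S) := mem_filter.mpr ⟨mem_univ _, hp⟩
    have h1 : domGameVal H true S ≤ 1 + domGameVal H false (S ∪ closedNbhd H p) := by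
      rw [domGameVal, dif_pos ⟨p, hpm⟩, if_pos rfl]
      exact Nat.add_le_add_left (Finset.inf'_le
        (fun v : {x // x ∈ univ.filter (fun v => ¬ closedNbhd H v ⊆ S)} =>
          domGameVal H false (S ∪ closedNbhd H v.1)) (mem_attach _ ⟨p, hpm⟩)) 1
    have h2 : 16 * domGameVal H false (S ∪ closedNbhd H p) + 16 ≤ X := by
      by_cases hne : (univ.filter fun v => ¬ closedNbhd H v ⊆ S ∪ closedNbhd H p).Nonempty
      · rw [domGameVal, dif_pos hne, if_neg (by simp)]
        obtain ⟨q, -, hqe⟩ := Finset.exists_mem_eq_sup' (Finset.attach_nonempty_iff.mpr hne)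
          (fun v => domGameVal H true (S ∪ closedNbhd H p ∪ closedNbhd H v.1))
        rw [hqe]
        have := hq q.1 (mem_filter.mp q.2).2
        omega
      · rw [domGameVal, dif_neg hne]
        omega
    omega


end Aux

/-- if `H` is a hypergraph on `n` vertices with no isolated vertices and no
edges of size one, then `γ_g(H) ≤ (5/8) n`. -/
theorem stmt_7 (V : Type) [Fintype V] (H : Finset (Finset V))
    (hisol : ∀ v : V, ∃ u : V, u ≠ v ∧ ∃ e ∈ H, u ∈ e ∧ v ∈ e)
    (hedge : ∀ e ∈ H, e.card ≠ 1) :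
    (gammaGame H : ℝ) ≤ 5 / 8 * Fintype.card V := by
  have h := L1_empty (GV_hG H) (fun v => by
    obtain ⟨u, hu, e, he, h1, h2⟩ := hisol v
    exact ⟨u, hu.symm, e, he, h2, h1⟩)
  have h' : (16 : ℝ) * (gammaGame H : ℝ) ≤ 10 * (Fintype.card V : ℝ) := by
    unfold gammaGame
    exact_mod_cast h
  linarith
end

section
/- If H is a 3-uniform hypergraph on n vertices with no isolated vertices, then γ_g(H) ≤ (5/9)·n. -/
attribute [local instance 10] Classical.propDecidable

variable {V : Type}

namespace DG

variable [Fintype V]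

noncomputable def cn (G : SimpleGraph V) (v : V) : Finset V :=
  Finset.univ.filter (fun u => u = v ∨ G.Adj v u)

noncomputable def nb (G : SimpleGraph V) (S : Finset V) (v : V) : Finset V :=
  Finset.univ.filter (fun u => u ∉ S ∧ G.Adj v u)

noncomputable def wd (G : SimpleGraph V) (S : Finset V) (v : V) : ℕ := (nb G S v).card

noncomputable def wt (G : SimpleGraph V) (f : V → ℕ → ℤ) (S : Finset V) (x : V) : ℤ :=
  if x ∈ S then f x (wd G S x) else 15

noncomputable def Phi (G : SimpleGraph V) (f : V → ℕ → ℤ) (S : Finset V) : ℤ :=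
  ∑ x, wt G f S x

noncomputable def dr (G : SimpleGraph V) (f : V → ℕ → ℤ) (S T : Finset V) (x : V) : ℤ :=
  wt G f S x - wt G f T x

structure Good (f : V → ℕ → ℤ) : Prop where
  zero : ∀ x, f x 0 = 0
  mono : ∀ x a b, a ≤ b → f x a ≤ f x b
  le7 : ∀ x a, f x a ≤ 7

variable {G : SimpleGraph V} {f : V → ℕ → ℤ} {S T S0 L : Finset V}

lemma mem_cn {v u : V} : u ∈ cn G v ↔ u = v ∨ G.Adj v u := by simp [cn]

lemma mem_nb {v u : V} : u ∈ nb G S v ↔ u ∉ S ∧ G.Adj v u := by simp [nb]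

lemma nb_mono (h : S ⊆ T) (v : V) : nb G T v ⊆ nb G S v := by
  intro u hu
  rw [mem_nb] at hu ⊢
  exact ⟨fun hh => hu.1 (h hh), hu.2⟩

lemma wd_mono (h : S ⊆ T) (v : V) : wd G T v ≤ wd G S v :=
  Finset.card_le_card (nb_mono h v)

lemma wd_drop1 (h : S ⊆ T) {x a : V} (ha : a ∉ S) (haT : a ∈ T) (hx : G.Adj x a) :
    wd G T x + 1 ≤ wd G S x := by
  apply Finset.card_lt_card
  refine Finset.ssubset_iff_subset_ne.2 ⟨nb_mono h x, fun e => ?_⟩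
  have : a ∈ nb G S x := mem_nb.2 ⟨ha, hx⟩
  rw [← e, mem_nb] at this
  exact this.1 haT

lemma wd_drop2 (h : S ⊆ T) {x a b : V} (hab : a ≠ b) (ha : a ∉ S) (haT : a ∈ T) (hx : G.Adj x a)
    (hb : b ∉ S) (hbT : b ∈ T) (hxb : G.Adj x b) :
    wd G T x + 2 ≤ wd G S x := by
  have h1 : wd G (insert a S) x + 1 ≤ wd G S x :=
    wd_drop1 (Finset.subset_insert _ _) ha (Finset.mem_insert_self _ _) hx
  have h2 : wd G T x + 1 ≤ wd G (insert a S) x :=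
    wd_drop1 (Finset.insert_subset haT h) (a := b) (by simp [hb, hab.symm]) hbT hxb
  omega

lemma wd_zero {x : V} (h : ∀ u, G.Adj x u → u ∈ S) : wd G S x = 0 := by
  rw [wd, Finset.card_eq_zero, Finset.eq_empty_iff_forall_notMem]
  intro u hu
  rw [mem_nb] at hu
  exact hu.1 (h u hu.2)

lemma of_wd_zero {x : V} (h : wd G S x = 0) {u : V} (hu : G.Adj x u) : u ∈ S := by
  rw [wd, Finset.card_eq_zero, Finset.eq_empty_iff_forall_notMem] at h
  by_contra hc
  exact h u (mem_nb.2 ⟨hc, hu⟩)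

lemma wd_pos {x u : V} (hu : u ∉ S) (hx : G.Adj x u) : 1 ≤ wd G S x :=
  Finset.card_pos.2 ⟨u, mem_nb.2 ⟨hu, hx⟩⟩

lemma wd_two {x u v : V} (huv : u ≠ v) (hu : u ∉ S) (hx : G.Adj x u) (hv : v ∉ S)
    (hxv : G.Adj x v) : 2 ≤ wd G S x := by
  have : ({u, v} : Finset V) ⊆ nb G S x := by
    intro a ha
    simp at ha
    rcases ha with rfl | rfl
    · exact mem_nb.2 ⟨hu, hx⟩
    · exact mem_nb.2 ⟨hv, hxv⟩
  have h := Finset.card_le_card this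
  rwa [Finset.card_pair huv] at h

lemma ex_of_pos {x : V} (h : 1 ≤ wd G S x) : ∃ u, u ∉ S ∧ G.Adj x u := by
  obtain ⟨u, hu⟩ := Finset.card_pos.1 h
  exact ⟨u, mem_nb.1 hu⟩

lemma ex_other {x : V} (h : 2 ≤ wd G S x) (a : V) : ∃ u, u ≠ a ∧ u ∉ S ∧ G.Adj x u := by
  obtain ⟨u, hu, hne⟩ := Finset.exists_mem_ne h a
  exact ⟨u, hne, mem_nb.1 hu⟩

lemma ex_two {x : V} (h : 2 ≤ wd G S x) :
    ∃ u v, u ≠ v ∧ u ∉ S ∧ G.Adj x u ∧ v ∉ S ∧ G.Adj x v := by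
  obtain ⟨u, hu⟩ := ex_of_pos (by omega : 1 ≤ wd G S x)
  obtain ⟨v, hv⟩ := ex_other h u
  exact ⟨u, v, hv.1.symm, hu.1, hu.2, hv.2.1, hv.2.2⟩

lemma ex_third {x : V} (h : 3 ≤ wd G S x) (a b : V) :
    ∃ u, u ≠ a ∧ u ≠ b ∧ u ∉ S ∧ G.Adj x u := by
  by_contra hc
  push Not at hc
  have : nb G S x ⊆ {a, b} := by
    intro u hu
    rw [mem_nb] at hu
    by_contra h'
    simp at h'
    exact hc u h'.1 h'.2 hu.1 hu.2
  have := Finset.card_le_card this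
  have h2 := Finset.card_le_two (a := a) (b := b)
  rw [wd] at h
  omega

lemma eq_of_wd_le_one {x a b : V} (h : wd G S x ≤ 1) (ha : a ∉ S) (hxa : G.Adj x a)
    (hb : b ∉ S) (hxb : G.Adj x b) : a = b :=
  Finset.card_le_one.1 h a (mem_nb.2 ⟨ha, hxa⟩) b (mem_nb.2 ⟨hb, hxb⟩)

lemma wd_le_one {x a : V} (h : ∀ b, b ∉ S → G.Adj x b → b = a) : wd G S x ≤ 1 := by
  apply Finset.card_le_one.2
  intro b hb c hc
  rw [mem_nb] at hb hc
  rw [h b hb.1 hb.2, h c hc.1 hc.2]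

lemma wd_white (h3 : ∀ v, (cn G v \ S).card ≤ 3) {x : V} (hx : x ∉ S) : wd G S x ≤ 2 := by
  have : insert x (nb G S x) ⊆ cn G x \ S := by
    intro u hu
    simp only [Finset.mem_insert, mem_nb, Finset.mem_sdiff, mem_cn] at hu ⊢
    rcases hu with rfl | hu
    · exact ⟨Or.inl rfl, hx⟩
    · exact ⟨Or.inr hu.2, hu.1⟩
  have h := Finset.card_le_card this
  rw [Finset.card_insert_of_notMem (by simp [mem_nb])] at h
  have := h3 x
  rw [wd]; omega

lemma wd_any (h3 : ∀ v, (cn G v \ S).card ≤ 3) (x : V) : wd G S x ≤ 3 := by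
  refine le_trans (Finset.card_le_card ?_) (h3 x)
  intro u hu
  simp only [mem_nb, Finset.mem_sdiff, mem_cn] at hu ⊢
  exact ⟨Or.inr hu.2, hu.1⟩

lemma wt_mono (hf : Good f) (h : S ⊆ T) (x : V) : 0 ≤ dr G f S T x := by
  unfold dr wt
  have h1 := hf.mono x _ _ (wd_mono (G := G) h x)
  have h2 := hf.le7 x (wd G T x)
  by_cases hx : x ∈ S
  · simp [hx, h hx, h1]
  · by_cases hT : x ∈ T
    · simp [hx, hT]; omega
    · simp [hx, hT]

lemma Phi_fin (hf : Good f) (h : S ⊆ T) (A : Finset V) :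
    ∑ x ∈ A, dr G f S T x ≤ Phi G f S - Phi G f T := by
  rw [Phi, Phi, ← Finset.sum_sub_distrib]
  exact Finset.sum_le_sum_of_subset_of_nonneg (Finset.subset_univ _)
    (fun x _ _ => wt_mono hf h x)

lemma Phi_drop (hf : Good f) (h : S ⊆ T) (l : List V) (hl : l.Nodup) :
    (l.map (dr G f S T)).sum ≤ Phi G f S - Phi G f T := by
  have := Phi_fin (G := G) hf h l.toFinset
  rwa [List.sum_toFinset _ hl] at this

lemma Phi_nonneg (hf : Good f) (S : Finset V) : 0 ≤ Phi G f S := by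
  apply Finset.sum_nonneg
  intro x _
  unfold wt
  split_ifs
  · rw [← hf.zero x]; exact hf.mono x _ _ (Nat.zero_le _)
  · norm_num

/-- played vertex -/
lemma wd_played (S : Finset V) (v : V) : wd G (S ∪ cn G v) v = 0 :=
  wd_zero (fun u hu => by simp [mem_cn, hu])

lemma mem_played (S : Finset V) (v : V) : v ∈ S ∪ cn G v := by simp [mem_cn]

lemma mem_played' (S : Finset V) {v u : V} (h : G.Adj v u) : u ∈ S ∪ cn G v := by simp [mem_cn, h]

lemma sub_played (S : Finset V) (v : V) : S ⊆ S ∪ cn G v := Finset.subset_union_left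

lemma d15 (hf : Good f) {x : V} (hx : x ∉ S) (hT : x ∈ T) (h : wd G T x = 0) :
    15 ≤ dr G f S T x := by
  simp [dr, wt, hx, hT, h, hf.zero]

lemma d8 (hf : Good f) {x : V} (hx : x ∉ S) (hT : x ∈ T) : 8 ≤ dr G f S T x := by
  have := hf.le7 x (wd G T x)
  simp [dr, wt, hx, hT]; omega

/-- the two-phase weight function -/
noncomputable def fL (L : Finset V) (x : V) (k : ℕ) : ℤ :=
  if k = 0 then 0 else if x ∈ L then (if k = 1 then 5 else if k = 2 then 6 else 7)
  else (if k = 1 then 6 else 7)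

lemma good_fL (L : Finset V) : Good (fL L) := by
  constructor
  · intro x; simp [fL]
  · intro x a b h; unfold fL; split_ifs <;> omega
  · intro x a; unfold fL; split_ifs <;> omega

lemma d9 {x : V} (hx : x ∉ S) (hT : x ∈ T) (h : wd G T x ≤ 1) (hL : x ∉ L) :
    9 ≤ dr G (fL L) S T x := by
  simp only [dr, wt, hx, hT, fL, hL, if_true, if_false]; split_ifs <;> omega

lemma dL1 {x : V} (hx : x ∈ S) (hST : S ⊆ T) (hL : x ∈ L) (h : wd G T x + 1 ≤ wd G S x)
    (h3 : wd G S x ≤ 3) : 1 ≤ dr G (fL L) S T x := by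
  simp only [dr, wt, hx, hST hx, fL, hL, if_true]; split_ifs <;> omega

lemma dL2 {x : V} (hx : x ∈ S) (hST : S ⊆ T) (hL : x ∈ L) (h : wd G T x + 2 ≤ wd G S x)
    (h3 : wd G S x ≤ 3) : 2 ≤ dr G (fL L) S T x := by
  simp only [dr, wt, hx, hST hx, fL, hL, if_true]; split_ifs <;> omega

lemma dN1 {x : V} (hx : x ∈ S) (hST : S ⊆ T) (hL : x ∉ L) (h : wd G T x + 1 ≤ wd G S x)
    (h3 : wd G T x ≤ 1) : 1 ≤ dr G (fL L) S T x := by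
  simp only [dr, wt, hx, hST hx, fL, hL, if_true, if_false]; split_ifs <;> omega

lemma dR5 {x : V} (hx : x ∈ S) (hST : S ⊆ T) (h : wd G T x = 0) (h3 : 1 ≤ wd G S x) :
    5 ≤ dr G (fL L) S T x := by
  simp only [dr, wt, hx, hST hx, fL, h, if_true]; split_ifs <;> omega

lemma dR6 {x : V} (hx : x ∈ S) (hST : S ⊆ T) (h : wd G T x = 0) (h3 : 2 ≤ wd G S x) :
    6 ≤ dr G (fL L) S T x := by
  simp only [dr, wt, hx, hST hx, fL, h, if_true]; split_ifs <;> omega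

lemma dR7 {x : V} (hx : x ∈ S) (hST : S ⊆ T) (h : wd G T x = 0) (h3 : 3 ≤ wd G S x) :
    7 ≤ dr G (fL L) S T x := by
  simp only [dr, wt, hx, hST hx, fL, h, if_true]; split_ifs <;> omega

lemma dN6 {x : V} (hx : x ∈ S) (hST : S ⊆ T) (hL : x ∉ L) (h : wd G T x = 0)
    (h3 : 1 ≤ wd G S x) : 6 ≤ dr G (fL L) S T x := by
  simp only [dr, wt, hx, hST hx, fL, h, hL, if_true, if_false]; split_ifs <;> omega

lemma dN7 {x : V} (hx : x ∈ S) (hST : S ⊆ T) (hL : x ∉ L) (h : wd G T x = 0)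
    (h3 : 2 ≤ wd G S x) : 7 ≤ dr G (fL L) S T x := by
  simp only [dr, wt, hx, hST hx, fL, h, hL, if_true, if_false]; split_ifs <;> omega

/-- graph of the hypergraph -/
def Gr (H : Finset (Finset V)) : SimpleGraph V where
  Adj u v := u ≠ v ∧ ∃ e ∈ H, u ∈ e ∧ v ∈ e
  symm := ⟨fun u v h => ⟨h.1.symm, by obtain ⟨e, he, h1, h2⟩ := h.2; exact ⟨e, he, h2, h1⟩⟩⟩
  loopless := ⟨fun u h => h.1 rfl⟩

lemma closedNbhd_eq (H : Finset (Finset V)) (v : V) : closedNbhd H v = cn (Gr H) v := by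
  ext u
  rw [mem_cn]
  simp only [closedNbhd, Finset.mem_filter, Finset.mem_univ, true_and]
  show _ ↔ (u = v ∨ (v ≠ u ∧ ∃ e ∈ H, v ∈ e ∧ u ∈ e))
  constructor
  · rintro (h | ⟨e, he, h1, h2⟩)
    · exact Or.inl h
    · by_cases huv : u = v
      · exact Or.inl huv
      · exact Or.inr ⟨fun h => huv h.symm, e, he, h2, h1⟩
  · rintro (h | ⟨_, e, he, h1, h2⟩)
    · exact Or.inl h
    · exact Or.inr ⟨e, he, h2, h1⟩

lemma val_univ (H : Finset (Finset V)) (b : Bool) {S : Finset V} (h : ∀ v, cn (Gr H) v ⊆ S) :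
    domGameVal H b S = 0 := by
  rw [domGameVal, dif_neg]
  rintro ⟨v, hv⟩
  simp only [Finset.mem_filter, closedNbhd_eq] at hv
  exact hv.2 (h v)

lemma val_dom (H : Finset (Finset V)) {S : Finset V} {v : V} (h : ¬ cn (Gr H) v ⊆ S) :
    domGameVal H true S ≤ 1 + domGameVal H false (S ∪ cn (Gr H) v) := by
  have hv : v ∈ Finset.univ.filter (fun v => ¬ closedNbhd H v ⊆ S) := by
    simp [closedNbhd_eq, h]
  rw [domGameVal, dif_pos ⟨v, hv⟩, if_pos rfl, ← closedNbhd_eq]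
  apply Nat.add_le_add_left
  exact Finset.inf'_le (fun w : {x // x ∈ Finset.univ.filter (fun v => ¬ closedNbhd H v ⊆ S)} =>
    domGameVal H false (S ∪ closedNbhd H w.1)) (Finset.mem_attach _ ⟨v, hv⟩)

lemma val_stal (H : Finset (Finset V)) {S : Finset V} {n : ℕ}
    (h : ∀ v, ¬ cn (Gr H) v ⊆ S → 1 + domGameVal H true (S ∪ cn (Gr H) v) ≤ n) :
    domGameVal H false S ≤ n := by
  rw [domGameVal]
  split_ifs with hne hb
  · simp at hb
  · have hn : ∀ w ∈ (Finset.univ.filter (fun v => ¬ closedNbhd H v ⊆ S)).attach,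
        domGameVal H true (S ∪ closedNbhd H w.1) ≤ n - 1 := by
      intro w _
      have hw := (Finset.mem_filter.1 w.2).2
      rw [closedNbhd_eq] at hw ⊢
      have := h w.1 hw
      omega
    have h1 := Finset.sup'_le (Finset.attach_nonempty_iff.mpr hne) _ hn
    obtain ⟨v, hv⟩ := hne
    have hv := (Finset.mem_filter.1 hv).2
    rw [closedNbhd_eq] at hv
    have := h v hv
    omega
  · exact Nat.zero_le _

lemma phase_step (H : Finset (Finset V)) (F : Finset V → ℤ) (P : Finset V → Prop)
    (hF : ∀ S, 0 ≤ F S)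
    (hP : ∀ S T, S ⊆ T → P S → P T)
    (h : ∀ S, P S → (∃ x, x ∉ S) → (27 * (domGameVal H true S : ℤ) ≤ F S) ∨
      ∃ v, (∃ x, x ∉ S ∧ x ∈ cn (Gr H) v) ∧ F (S ∪ cn (Gr H) v) + 27 ≤ F S ∧
        ∀ u x, x ∉ S ∪ cn (Gr H) v → x ∈ cn (Gr H) u →
          F (S ∪ cn (Gr H) v ∪ cn (Gr H) u) + 54 ≤ F S) :
    ∀ S, P S → 27 * (domGameVal H true S : ℤ) ≤ F S := by
  suffices hs : ∀ n, ∀ S : Finset V, (Finset.univ \ S).card = n → P S →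
      27 * (domGameVal H true S : ℤ) ≤ F S from fun S => hs _ S rfl
  intro n
  induction n using Nat.strong_induction_on with
  | _ n ih =>
  intro S hn hPS
  by_cases hx : ∃ x, x ∉ S
  swap
  · push Not at hx
    rw [val_univ H true (fun v u _ => hx u)]
    simpa using hF S
  rcases h S hPS hx with h1 | ⟨v, ⟨x, hxS, hxv⟩, h27, h54⟩
  · exact h1
  have hvl : ¬ cn (Gr H) v ⊆ S := fun hh => hxS (hh hxv)
  have hd := val_dom H hvl
  have hs : domGameVal H false (S ∪ cn (Gr H) v) ≤ ((F S) / 27 - 1).toNat := by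
    apply val_stal
    intro u hu
    obtain ⟨y, hyu, hyS⟩ := Finset.not_subset.1 hu
    have h5 := h54 u y hyS hyu
    have hlt : (Finset.univ \ (S ∪ cn (Gr H) v ∪ cn (Gr H) u)).card < n := by
      rw [← hn]
      apply Finset.card_lt_card
      refine Finset.ssubset_iff_subset_ne.2 ⟨?_, ?_⟩
      · exact Finset.sdiff_subset_sdiff (Finset.Subset.refl _)
          (by rw [Finset.union_assoc]; exact Finset.subset_union_left)
      · intro e
        have : x ∈ Finset.univ \ S := by simp [hxS]
        rw [← e] at this
        simp [hxv] at this
    have := ih _ hlt _ rfl (hP S _ (by rw [Finset.union_assoc]; exact Finset.subset_union_left) hPS)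
    omega
  have := hF (S ∪ cn (Gr H) v)
  omega

end DG

namespace DG

variable [Fintype V] {G : SimpleGraph V} {f : V → ℕ → ℤ} {S T S0 L : Finset V}

def Step (G : SimpleGraph V) (f : V → ℕ → ℤ) (S : Finset V) : Prop :=
  ∃ v, (∃ x, x ∉ S ∧ x ∈ cn G v) ∧ Phi G f (S ∪ cn G v) + 27 ≤ Phi G f S ∧
    ∀ u x, x ∉ S ∪ cn G v → x ∈ cn G u →
      Phi G f (S ∪ cn G v ∪ cn G u) + 54 ≤ Phi G f S

structure Ctx (G : SimpleGraph V) (S0 L : Finset V) : Prop where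
  h3 : ∀ v, (cn G v \ S0).card ≤ 3
  tri : ∀ a b, G.Adj a b → ∃ c, G.Adj c a ∧ G.Adj c b
  iso : ∀ v, ∃ u, G.Adj v u
  LS : L ⊆ S0
  EC : ∀ x p, x ∉ S0 → p ∉ S0 → G.Adj x p → wd G S0 x = 2 →
    wd G S0 p = 2 ∧ ∃ u ∈ L, G.Adj u x ∧ G.Adj u p
  Etri : ∀ p v q u, p ∉ S0 → v ∉ S0 → q ∉ S0 → p ≠ q → G.Adj v p → G.Adj v q →
    u ∈ S0 → G.Adj u p → G.Adj u v → G.Adj u q → False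
  Etf : ∀ p v q, p ∉ S0 → v ∉ S0 → q ∉ S0 → G.Adj v p → G.Adj v q → G.Adj p q → False
  EK : ∀ x p, x ∉ S0 → p ∉ S0 → G.Adj x p → wd G S0 x = 1 →
    wd G S0 p = 1 ∧ ∃ u ∈ S0, u ∉ L ∧ wd G S0 u = 2 ∧ G.Adj u x ∧ G.Adj u p
  Eiso : ∀ x u, x ∉ S0 → wd G S0 x = 0 → u ∈ L → G.Adj u x → False
  EL : ∀ u ∈ L, ∃ a b, a ≠ b ∧ a ∉ S0 ∧ b ∉ S0 ∧ wd G S0 a = 2 ∧ wd G S0 b = 2 ∧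
    G.Adj u a ∧ G.Adj u b

lemma wd_four {x a b c d : V} (h : wd G S x ≤ 3) (hab : a ≠ b) (hac : a ≠ c) (had : a ≠ d)
    (hbc : b ≠ c) (hbd : b ≠ d) (hcd : c ≠ d)
    (ha : a ∉ S) (hb : b ∉ S) (hc : c ∉ S) (hd : d ∉ S)
    (xa : G.Adj x a) (xb : G.Adj x b) (xc : G.Adj x c) (xd : G.Adj x d) : False := by
  have : ({a, b, c, d} : Finset V) ⊆ nb G S x := by
    intro y hy
    simp at hy
    rcases hy with rfl | rfl | rfl | rfl <;> rw [mem_nb] <;> constructor <;> assumption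
  have h2 := Finset.card_le_card this
  have h4 : ({a, b, c, d} : Finset V).card = 4 := by
    rw [Finset.card_insert_of_notMem (by simp [hab, hac, had]),
      Finset.card_insert_of_notMem (by simp [hbc, hbd]), Finset.card_pair hcd]
  rw [wd] at h
  omega

namespace Ctx

lemma nL (C : Ctx G S0 L) (hS : S0 ⊆ S) {x : V} (hx : x ∉ S) : x ∉ L :=
  fun h => hx (hS (C.LS h))

lemma n0 (hS : S0 ⊆ S) {x : V} (hx : x ∉ S) : x ∉ S0 := fun h => hx (hS h)

lemma w3 (C : Ctx G S0 L) (hS : S0 ⊆ S) (x : V) : wd G S x ≤ 3 :=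
  (wd_mono hS x).trans (wd_any C.h3 x)

lemma w2 (C : Ctx G S0 L) (hS : S0 ⊆ S) {x : V} (hx : x ∉ S0) : wd G S x ≤ 2 :=
  (wd_mono hS x).trans (wd_white C.h3 hx)

lemma edge_blue (C : Ctx G S0 L) {x p : V} (hx : x ∉ S0) (hp : p ∉ S0) (h : G.Adj x p) :
    ∃ w ∈ S0, G.Adj w x ∧ G.Adj w p ∧ ∀ S T, S0 ⊆ S → S ⊆ T → x ∉ S → x ∈ T →
      1 ≤ dr G (fL L) S T w := by
  have h1 := wd_pos hp h
  have h2 := C.w2 (Finset.Subset.refl S0) hx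
  obtain h3 | h3 : wd G S0 x = 1 ∨ wd G S0 x = 2 := by omega
  · obtain ⟨_, u, hu, huL, hu2, hux, hup⟩ := C.EK x p hx hp h h3
    refine ⟨u, hu, hux, hup, ?_⟩
    intro S T hS hST hxS hxT
    have := wd_drop1 hST hxS hxT hux
    have := wd_mono (G := G) hS u
    exact dN1 (hS hu) hST huL (by omega) (by omega)
  · obtain ⟨_, u, hu, hux, hup⟩ := C.EC x p hx hp h h3
    refine ⟨u, C.LS hu, hux, hup, ?_⟩
    intro S T hS hST hxS hxT
    exact dL1 (hS (C.LS hu)) hST hu (wd_drop1 hST hxS hxT hux) (C.w3 hS u)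

lemma iso_two (C : Ctx G S0 L) (hS : S0 ⊆ S) {x : V} (hx : x ∉ S) (h0 : wd G S x = 0) :
    ∃ w1 w2, w1 ≠ w2 ∧ w1 ∈ S ∧ w2 ∈ S ∧ w1 ∉ L ∧ w2 ∉ L ∧ G.Adj w1 x ∧ G.Adj w2 x := by
  have hx0 := n0 hS hx
  have h2 := C.w2 (Finset.Subset.refl S0) hx0
  obtain h3 | h3 | h3 : wd G S0 x = 0 ∨ wd G S0 x = 1 ∨ wd G S0 x = 2 := by omega
  · obtain ⟨a, ha⟩ := C.iso x
    obtain ⟨c, hc1, hc2⟩ := C.tri x a ha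
    exact ⟨a, c, hc2.ne.symm, hS (of_wd_zero h3 ha), hS (of_wd_zero h3 hc1.symm),
      fun h => C.Eiso x a hx0 h3 h ha.symm, fun h => C.Eiso x c hx0 h3 h hc1, ha.symm, hc1⟩
  · obtain ⟨p, hp, hxp⟩ := ex_of_pos (by omega : 1 ≤ wd G S0 x)
    obtain ⟨_, u, hu, huL, hu2, hux, hup⟩ := C.EK x p hx0 hp hxp h3
    exact ⟨p, u, hup.ne.symm, of_wd_zero h0 hxp, hS hu, fun h => hp (C.LS h), huL, hxp.symm, hux⟩
  · obtain ⟨p, q, hpq, hp, hxp, hq, hxq⟩ := ex_two (by omega : 2 ≤ wd G S0 x)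
    exact ⟨p, q, hpq, of_wd_zero h0 hxp, of_wd_zero h0 hxq, fun h => hp (C.LS h),
      fun h => hq (C.LS h), hxp.symm, hxq.symm⟩

lemma stall15 (C : Ctx G S0 L) (hS : S0 ⊆ S) {u x : V} (hx : x ∉ S) (hxu : x ∈ cn G u) :
    Phi G (fL L) (S ∪ cn G u) + 15 ≤ Phi G (fL L) S := by
  have hg := good_fL L
  have hsub := sub_played (G := G) S u
  have hw := wd_played (G := G) S u
  have hxT : x ∈ S ∪ cn G u := Finset.mem_union_right _ hxu
  have hadj := @mem_played' _ _ G S u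
  by_cases hu : u ∈ S
  swap
  · have := Phi_drop (G := G) hg hsub [u] (by simp)
    have h1 := d15 hg hu (mem_played S u) hw
    simp at this
    omega
  have hux : G.Adj u x := by
    rcases mem_cn.1 hxu with h | h
    · subst h; exact absurd hu hx
    · exact h
  have hxne : u ≠ x := hux.ne
  have hx0 := n0 hS hx
  by_cases h2 : 2 ≤ wd G S u
  · obtain ⟨a, b, hab, ha, hua, hb, hub⟩ := ex_two h2
    have := Phi_drop (G := G) hg hsub [u, a, b] (by simp [hua.ne, hub.ne, hab])
    have h1 := dR6 (L := L) hu hsub hw h2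
    have h3 := d8 (G := G) hg ha (hadj hua)
    have h4 := d8 (G := G) hg hb (hadj hub)
    simp at this
    omega
  have h1 : wd G S u ≤ 1 := by omega
  have d5 := dR5 (L := L) hu hsub hw (wd_pos hx hux)
  generalize hT : S ∪ cn G u = T at *
  have hxw := C.w2 (hS.trans hsub) hx0
  obtain h3 | h3 | h3 : wd G T x = 0 ∨ wd G T x = 1 ∨ wd G T x = 2 := by omega
  · have := Phi_drop (G := G) hg hsub [u, x] (by simp [hxne])
    have h4 := d15 hg hx hxT h3
    simp at this
    omega
  · obtain ⟨p, hp, hxp⟩ := ex_of_pos (by omega : 1 ≤ wd G T x)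
    have hpS : p ∉ S := fun h => hp (hsub h)
    obtain ⟨w, hw0, hwx, hwp, hwd⟩ := C.edge_blue hx0 (n0 hS hpS) hxp
    have hwu : u ≠ w := by
      rintro rfl
      exact hxp.ne (eq_of_wd_le_one h1 hx hwx hpS hwp)
    have := Phi_drop (G := G) hg hsub [u, x, w] (by simp [hxne, hwu, hwx.ne.symm])
    have h4 := d9 (G := G) hx hxT (by omega) (C.nL hS hx)
    have h5 := hwd S T hS hsub hx hxT
    simp at this
    omega
  · obtain ⟨p, q, hpq, hp, hxp, hq, hxq⟩ := ex_two (by omega : 2 ≤ wd G T x)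
    have hpS : p ∉ S := fun h => hp (hsub h)
    have hqS : q ∉ S := fun h => hq (hsub h)
    obtain ⟨w, hw0, hwx, hwp, hwd⟩ := C.edge_blue hx0 (n0 hS hpS) hxp
    obtain ⟨w', hw0', hwx', hwq', hwd'⟩ := C.edge_blue hx0 (n0 hS hqS) hxq
    have hwu : u ≠ w := by
      rintro rfl
      exact hxp.ne (eq_of_wd_le_one h1 hx hwx hpS hwp)
    have hwu' : u ≠ w' := by
      rintro rfl
      exact hxq.ne (eq_of_wd_le_one h1 hx hwx' hqS hwq')
    have hww : w ≠ w' := by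
      rintro rfl
      exact C.Etri p x q w (n0 hS hpS) hx0 (n0 hS hqS) hpq hxp hxq hw0 hwp hwx hwq'
    have := Phi_drop (G := G) hg hsub [u, x, w, w']
      (by simp [hxne, hwu, hwu', hww, hwx.ne.symm, hwx'.ne.symm])
    have h4 := d8 (G := G) hg hx hxT
    have h5 := hwd S T hS hsub hx hxT
    have h6 := hwd' S T hS hsub hx hxT
    simp at this
    omega

lemma fin39 (C : Ctx G S0 L) (hS : S0 ⊆ S) {v x : V} (hx : x ∉ S) (hxv : x ∈ cn G v)
    (h : Phi G (fL L) (S ∪ cn G v) + 39 ≤ Phi G (fL L) S) : Step G (fL L) S := by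
  refine ⟨v, ⟨x, hx, hxv⟩, by omega, ?_⟩
  intro u y hy hyu
  have := C.stall15 (hS.trans (sub_played (G := G) S v)) hy hyu
  omega

lemma c1 (C : Ctx G S0 L) (hS : S0 ⊆ S) {v : V} (hv : v ∉ S) (h2 : 2 ≤ wd G S v) :
    Step G (fL L) S := by
  have hg := good_fL L
  have hsub := sub_played (G := G) S v
  have hw := wd_played (G := G) S v
  have hadj := @mem_played' _ _ G S v
  have hvT := mem_played (G := G) S v
  have hv0 := n0 hS hv
  apply C.fin39 hS hv (mem_cn.2 (Or.inl rfl))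
  generalize hT : S ∪ cn G v = T at *
  obtain ⟨p, q, hpq, hp, hvp, hq, hvq⟩ := ex_two h2
  have hp0 := n0 hS hp
  have hq0 := n0 hS hq
  have hv2 : wd G S0 v = 2 := by
    have := C.w2 (Finset.Subset.refl S0) hv0
    have := wd_mono (G := G) hS v
    omega
  obtain ⟨hp2, u1, hu1, hu1v, hu1p⟩ := C.EC v p hv0 hp0 hvp hv2
  obtain ⟨hq2, u2, hu2, hu2v, hu2q⟩ := C.EC v q hv0 hq0 hvq hv2
  obtain ⟨p', hp'v, hp', hpp'⟩ := ex_other (by omega : 2 ≤ wd G S0 p) v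
  obtain ⟨q', hq'v, hq', hqq'⟩ := ex_other (by omega : 2 ≤ wd G S0 q) v
  obtain ⟨hp'2, u3, hu3, hu3p, hu3p'⟩ := C.EC p p' hp0 hp' hpp' hp2
  obtain ⟨hq'2, u4, hu4, hu4q, hu4q'⟩ := C.EC q q' hq0 hq' hqq' hq2
  have s1 := C.LS hu1
  have s2 := C.LS hu2
  have s3 := C.LS hu3
  have s4 := C.LS hu4
  have n12 : u1 ≠ u2 := by
    rintro rfl
    exact C.Etri p v q u1 hp0 hv0 hq0 hpq hvp hvq s1 hu1p hu1v hu2q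
  have n14 : u1 ≠ u4 := by
    rintro rfl
    exact C.Etri p v q u1 hp0 hv0 hq0 hpq hvp hvq s1 hu1p hu1v hu4q
  have n23 : u2 ≠ u3 := by
    rintro rfl
    exact C.Etri p v q u2 hp0 hv0 hq0 hpq hvp hvq s2 hu3p hu2v hu2q
  have n13 : u1 ≠ u3 := by
    rintro rfl
    exact C.Etri v p p' u1 hv0 hp0 hp' hp'v.symm hvp.symm hpp' s1 hu1v hu1p hu3p'
  have n24 : u2 ≠ u4 := by
    rintro rfl
    exact C.Etri v q q' u2 hv0 hq0 hq' hq'v.symm hvq.symm hqq' s2 hu2v hu2q hu4q'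
  have n34 : u3 ≠ u4 := by
    rintro rfl
    have a1 : p' ≠ q := by
      rintro rfl
      exact C.Etf p v p' hp0 hv0 hp' hvp hvq hpp'
    have a2 : p ≠ q' := by
      rintro rfl
      exact C.Etf q v p hq0 hv0 hp0 hvq hvp hqq'
    by_cases a3 : p' = q'
    · subst a3
      exact C.Etri p p' q u3 hp0 hp' hq0 hpq hpp'.symm hqq'.symm s3 hu3p hu3p' hu4q
    · exact wd_four (C.w3 (Finset.Subset.refl S0) u3) hpp'.ne hpq a2 a1 a3 hqq'.ne hp0 hp' hq0 hq'
        hu3p hu3p' hu4q hu4q'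
  have := Phi_drop (G := G) hg hsub [v, p, q, u1, u2, u3, u4]
    (by simp [hvp.ne, hvq.ne, hpq, n12, n13, n14, n23, n24, n34, hu1v.ne.symm, hu2v.ne.symm,
          hu1p.ne.symm, hu2q.ne.symm, hu3p.ne.symm, hu4q.ne.symm]
        grind)
  have e1 := d15 hg hv hvT hw
  have e2 : 9 ≤ dr G (fL L) S T p := d9 hp (hadj hvp) (by
    have := wd_drop1 hsub hv hvT hvp.symm
    have := C.w2 hS hp0
    omega) (C.nL hS hp)
  have e3 : 9 ≤ dr G (fL L) S T q := d9 hq (hadj hvq) (by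
    have := wd_drop1 hsub hv hvT hvq.symm
    have := C.w2 hS hq0
    omega) (C.nL hS hq)
  have e4 := dL2 (hS s1) hsub hu1 (wd_drop2 hsub hvp.ne hv hvT hu1v hp (hadj hvp) hu1p) (C.w3 hS u1)
  have e5 := dL2 (hS s2) hsub hu2 (wd_drop2 hsub hvq.ne hv hvT hu2v hq (hadj hvq) hu2q) (C.w3 hS u2)
  have e6 := dL1 (hS s3) hsub hu3 (wd_drop1 hsub hp (hadj hvp) hu3p) (C.w3 hS u3)
  have e7 := dL1 (hS s4) hsub hu4 (wd_drop1 hsub hq (hadj hvq) hu4q) (C.w3 hS u4)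
  simp at this
  omega

lemma c2 (C : Ctx G S0 L) (hS : S0 ⊆ S) (h1 : ∀ x, x ∉ S → wd G S x ≤ 1)
    {v p : V} (hv : v ∉ S) (hp : p ∉ S) (hvp : G.Adj v p) (hv2 : wd G S0 v = 2) :
    Step G (fL L) S := by
  have hg := good_fL L
  have hv0 := n0 hS hv
  have hp0 := n0 hS hp
  obtain ⟨hp2, u1, hu1, hu1v, hu1p⟩ := C.EC v p hv0 hp0 hvp hv2
  have s1 := C.LS hu1
  have l2 := wd_two hvp.ne hv hu1v hp hu1p
  by_cases l3 : 3 ≤ wd G S u1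
  · obtain ⟨z, hzv, hzp, hz, hu1z⟩ := ex_third l3 v p
    apply C.fin39 hS hv (mem_cn.2 (Or.inr hu1v))
    have hsub := sub_played (G := G) S u1
    have hw := wd_played (G := G) S u1
    have hadj := @mem_played' _ _ G S u1
    generalize hT : S ∪ cn G u1 = T at *
    have := Phi_drop (G := G) hg hsub [u1, v, p, z]
      (by simp [hu1v.ne, hu1p.ne, hu1z.ne, hvp.ne, hzv.symm, hzp.symm])
    have e1 := dR7 (L := L) (hS s1) hsub hw l3
    have e2 : 15 ≤ dr G (fL L) S T v := d15 hg hv (hadj hu1v) (by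
      have := wd_drop1 hsub hp (hadj hu1p) hvp
      have := h1 v hv
      omega)
    have e3 : 15 ≤ dr G (fL L) S T p := d15 hg hp (hadj hu1p) (by
      have := wd_drop1 hsub hv (hadj hu1v) hvp.symm
      have := h1 p hp
      omega)
    have e4 := d8 (G := G) hg hz (hadj hu1z)
    simp at this
    omega
  apply C.fin39 hS hv (mem_cn.2 (Or.inl rfl))
  have hsub := sub_played (G := G) S v
  have hw := wd_played (G := G) S v
  have hadj := @mem_played' _ _ G S v
  have hvT := mem_played (G := G) S v
  generalize hT : S ∪ cn G v = T at *
  obtain ⟨v', hv'p, hv', hvv'⟩ := ex_other (by omega : 2 ≤ wd G S0 v) p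
  obtain ⟨p', hp'v, hp', hpp'⟩ := ex_other (by omega : 2 ≤ wd G S0 p) v
  have hp'S : p' ∈ S := by
    by_contra hc
    exact hp'v (eq_of_wd_le_one (h1 p hp) hc hpp' hv hvp.symm)
  obtain ⟨_, u2, hu2, hu2v, hu2v'⟩ := C.EC v v' hv0 hv' hvv' hv2
  obtain ⟨_, u3, hu3, hu3p, hu3p'⟩ := C.EC p p' hp0 hp' hpp' hp2
  have s2 := C.LS hu2
  have s3 := C.LS hu3
  have n12 : u1 ≠ u2 := by
    rintro rfl
    exact C.Etri p v v' u1 hp0 hv0 hv' hv'p.symm hvp hvv' s1 hu1p hu1v hu2v'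
  have n13 : u1 ≠ u3 := by
    rintro rfl
    exact C.Etri v p p' u1 hv0 hp0 hp' hp'v.symm hvp.symm hpp' s1 hu1v hu1p hu3p'
  have n23 : u2 ≠ u3 := by
    rintro rfl
    exact C.Etri p v v' u2 hp0 hv0 hv' hv'p.symm hvp hvv' s2 hu3p hu2v hu2v'
  have := Phi_drop (G := G) hg hsub [v, p, u1, u2, u3, p']
    (by simp [hvp.ne, n12, n13, n23]
        grind)
  have e1 := d15 hg hv hvT hw
  have e2 : 15 ≤ dr G (fL L) S T p := d15 hg hp (hadj hvp) (by
    have := wd_drop1 hsub hv hvT hvp.symm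
    have := h1 p hp
    omega)
  have e3 : 6 ≤ dr G (fL L) S T u1 := dR6 (hS s1) hsub (by
    have := wd_drop2 hsub hvp.ne hv hvT hu1v hp (hadj hvp) hu1p
    omega) l2
  have e4 := dL1 (hS s2) hsub hu2 (wd_drop1 hsub hv hvT hu2v) (C.w3 hS u2)
  have e5 := dL1 (hS s3) hsub hu3 (wd_drop1 hsub hp (hadj hvp) hu3p) (C.w3 hS u3)
  have e6 : 1 ≤ dr G (fL L) S T p' := by
    have a1 := wd_drop1 hsub hp (hadj hvp) hpp'.symm
    have a2 := C.w2 hS hp'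
    exact dN1 hp'S hsub (fun h => hp' (C.LS h)) a1 (by omega)
  simp at this
  omega

end Ctx
end DG

namespace DG

variable [Fintype V] {G : SimpleGraph V} {f : V → ℕ → ℤ} {S T S0 L : Finset V}

namespace Ctx

/-- adjacent whites of reduced type -/
lemma pair1 (C : Ctx G S0 L) (hS : S0 ⊆ S)
    (h2 : ∀ x p, x ∉ S → p ∉ S → G.Adj x p → wd G S0 x ≠ 2) {x p : V}
    (hx : x ∉ S) (hp : p ∉ S) (hxp : G.Adj x p) : wd G S0 x = 1 := by
  have := h2 x p hx hp hxp
  have := C.w2 (Finset.Subset.refl S0) (n0 hS hx)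
  have := wd_pos (n0 hS hp) hxp
  omega

lemma c3 (C : Ctx G S0 L) (hS : S0 ⊆ S) (h1 : ∀ x, x ∉ S → wd G S x ≤ 1)
    (h2 : ∀ x p, x ∉ S → p ∉ S → G.Adj x p → wd G S0 x ≠ 2)
    {z y : V} (hz : z ∉ S) (hy : y ∉ S) (hzy : G.Adj z y) : Step G (fL L) S := by
  have hg := good_fL L
  by_cases ha : ∃ z y w, z ∉ S ∧ y ∉ S ∧ G.Adj z y ∧ w ∈ S ∧ wd G S w = 1 ∧ G.Adj w z
  · clear hz hy hzy
    obtain ⟨z, y, w, hz, hy, hzy, hw, hw1, hwz⟩ := ha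
    obtain ⟨_, u', hu', hu'L, hu'2, hu'z, hu'y⟩ :=
      C.EK z y (n0 hS hz) (n0 hS hy) hzy (C.pair1 hS h2 hz hy hzy)
    have l2 := wd_two hzy.ne hz hu'z hy hu'y
    have l3 := wd_mono (G := G) hS u'
    apply C.fin39 hS hz (mem_cn.2 (Or.inl rfl))
    have hsub := sub_played (G := G) S z
    have hpw := wd_played (G := G) S z
    have hadj := @mem_played' _ _ G S z
    have hzT := mem_played (G := G) S z
    generalize hT : S ∪ cn G z = T at *
    have hne : u' ≠ w := by
      rintro rfl
      omega
    have := Phi_drop (G := G) hg hsub [z, y, u', w]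
      (by simp [hzy.ne, hne]
          grind)
    have e1 := d15 hg hz hzT hpw
    have e2 : 15 ≤ dr G (fL L) S T y := d15 hg hy (hadj hzy) (by
      have := wd_drop1 hsub hz hzT hzy.symm
      have := h1 y hy
      omega)
    have e3 : 7 ≤ dr G (fL L) S T u' := dN7 (hS hu') hsub hu'L (by
      have := wd_drop2 hsub hzy.ne hz hzT hu'z hy (hadj hzy) hu'y
      omega) l2
    have e4 : 5 ≤ dr G (fL L) S T w := dR5 hw hsub (by
      have := wd_drop1 hsub hz hzT hwz
      omega) (by omega)
    simp at this
    omega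
  by_cases hb : ∃ w x, w ∈ S ∧ x ∉ S ∧ G.Adj w x ∧ wd G S x = 0 ∧ 3 ≤ wd G S w
  · obtain ⟨w, x, hw, hx, hwx, hx0, hw3⟩ := hb
    obtain ⟨a, hax, _, ha', hwa⟩ := ex_third hw3 x x
    obtain ⟨b, hbx, hba, hb', hwb⟩ := ex_third hw3 x a
    apply C.fin39 hS hx (mem_cn.2 (Or.inr hwx))
    have hsub := sub_played (G := G) S w
    have hpw := wd_played (G := G) S w
    have hadj := @mem_played' _ _ G S w
    generalize hT : S ∪ cn G w = T at *
    have := Phi_drop (G := G) hg hsub [w, x, a, b]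
      (by simp [hwx.ne, hwa.ne, hwb.ne, hax.symm, hbx.symm, hba.symm])
    have e1 := dR7 (L := L) hw hsub hpw hw3
    have e2 : 15 ≤ dr G (fL L) S T x := d15 hg hx (hadj hwx) (by
      have := wd_mono (G := G) hsub x
      omega)
    have e3 := d9 ha' (hadj hwa) ((wd_mono (G := G) hsub a).trans (h1 a ha')) (C.nL hS ha')
    have e4 := d9 hb' (hadj hwb) ((wd_mono (G := G) hsub b).trans (h1 b hb')) (C.nL hS hb')
    simp at this
    omega
  push Not at ha hb
  have hz0 := n0 hS hz
  have hy0 := n0 hS hy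
  have hz1 := C.pair1 hS h2 hz hy hzy
  obtain ⟨hy1, u', hu', hu'L, hu'2, hu'z, hu'y⟩ := C.EK z y hz0 hy0 hzy hz1
  have l2 := wd_two hzy.ne hz hu'z hy hu'y
  have l3 := wd_mono (G := G) hS u'
  have hsub := sub_played (G := G) S z
  have hpw := wd_played (G := G) S z
  have hadj := @mem_played' _ _ G S z
  have hzT := mem_played (G := G) S z
  -- newly dominated vertices are z and y
  have hnew : ∀ a, a ∉ S → a ∈ S ∪ cn G z → a = z ∨ a = y := by
    intro a haS haT
    rcases Finset.mem_union.1 haT with h | h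
    · exact absurd h haS
    rcases mem_cn.1 h with h | h
    · exact Or.inl h
    · exact Or.inr (eq_of_wd_le_one (h1 z hz) haS h hy hzy)
  have hnadj : ∀ a x, a ∉ S → a ∈ S ∪ cn G z → x ∉ S ∪ cn G z → G.Adj a x → False := by
    intro a x haS haT hxT hax
    rcases hnew a haS haT with rfl | rfl
    · exact hxT (hadj hax)
    · have := eq_of_wd_le_one (h1 a hy) (fun h => hxT (hsub h)) hax hz hzy.symm
      subst this
      exact hxT hzT
  refine ⟨z, ⟨z, hz, mem_cn.2 (Or.inl rfl)⟩, ?_⟩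
  generalize hT : S ∪ cn G z = T at *
  have e1 := d15 hg hz hzT hpw
  have e2 : 15 ≤ dr G (fL L) S T y := d15 hg hy (hadj hzy) (by
    have := wd_drop1 hsub hz hzT hzy.symm
    have := h1 y hy
    omega)
  have e3 : 7 ≤ dr G (fL L) S T u' := dN7 (hS hu') hsub hu'L (by
    have := wd_drop2 hsub hzy.ne hz hzT hu'z hy (hadj hzy) hu'y
    omega) l2
  have g37 : Phi G (fL L) T + 37 ≤ Phi G (fL L) S := by
    have := Phi_drop (G := G) hg hsub [z, y, u']
      (by simp [hzy.ne]
          grind)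
    simp at this
    omega
  refine ⟨by omega, ?_⟩
  intro u x hx hxu
  have hsT := hS.trans hsub
  have hsub2 := sub_played (G := G) T u
  have hpw2 := wd_played (G := G) T u
  have hadj2 := @mem_played' _ _ G T u
  have huU := mem_played (G := G) T u
  have hxU : x ∈ T ∪ cn G u := Finset.mem_union_right _ hxu
  generalize hU : T ∪ cn G u = U at *
  have t1 : ∀ a, a ∉ T → wd G T a ≤ 1 := fun a haT =>
    (wd_mono (G := G) hsub a).trans (h1 a (fun h => haT (hsub h)))
  by_cases hu : u ∈ T
  swap
  · have huS : u ∉ S := fun h => hu (hsub h)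
    obtain h0 | h0 : wd G T u = 0 ∨ 1 ≤ wd G T u := by omega
    · have hS0 : wd G S u = 0 := by
        apply wd_zero
        intro a hau
        by_contra hc
        exact hnadj a u hc (of_wd_zero h0 hau) hu hau.symm
      obtain ⟨w1, w2, hw, hw1, hw2, hw1L, hw2L, hw1u, hw2u⟩ := C.iso_two hS huS hS0
      have := Phi_drop (G := G) hg hsub2 [u, w1, w2]
        (by simp [hw1u.ne.symm, hw2u.ne.symm, hw])
      have f1 := d15 hg hu huU hpw2
      have f2 : 1 ≤ dr G (fL L) T U w1 := by
        have := wd_drop1 hsub2 hu huU hw1u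
        have := hb w1 u hw1 huS hw1u hS0
        have := wd_mono (G := G) hsub w1
        exact dN1 (hsub hw1) hsub2 hw1L (by omega) (by omega)
      have f3 : 1 ≤ dr G (fL L) T U w2 := by
        have := wd_drop1 hsub2 hu huU hw2u
        have := hb w2 u hw2 huS hw2u hS0
        have := wd_mono (G := G) hsub w2
        exact dN1 (hsub hw2) hsub2 hw2L (by omega) (by omega)
      simp at this
      omega
    · obtain ⟨p, hp, hup⟩ := ex_of_pos h0
      have := Phi_drop (G := G) hg hsub2 [u, p] (by simp [hup.ne])
      have f1 := d15 hg hu huU hpw2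
      have f2 : 15 ≤ dr G (fL L) T U p := d15 hg hp (hadj2 hup) (by
        have := wd_drop1 hsub2 hu huU hup.symm
        have := t1 p hp
        omega)
      simp at this
      omega
  have hux : G.Adj u x := by
    rcases mem_cn.1 hxu with h | h
    · subst h; exact absurd hu hx
    · exact h
  by_cases hu2 : 2 ≤ wd G T u
  · obtain ⟨a, b, hab, ha', hua, hb', hub⟩ := ex_two hu2
    have := Phi_drop (G := G) hg hsub2 [u, a, b] (by simp [hua.ne, hub.ne, hab])
    have f1 := dR6 (L := L) hu hsub2 hpw2 hu2
    have f2 := d9 ha' (hadj2 hua) ((wd_mono (G := G) hsub2 a).trans (t1 a ha')) (C.nL hsT ha')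
    have f3 := d9 hb' (hadj2 hub) ((wd_mono (G := G) hsub2 b).trans (t1 b hb')) (C.nL hsT hb')
    simp at this
    omega
  have hu1 : wd G T u = 1 := by
    have := wd_pos hx hux
    omega
  have f1 := dR5 (L := L) hu hsub2 hpw2 (by omega)
  have hx1 := t1 x hx
  obtain h0 | h0 : wd G T x = 0 ∨ 1 ≤ wd G T x := by omega
  · have := Phi_drop (G := G) hg hsub2 [u, x] (by simp [hux.ne])
    have f2 : 15 ≤ dr G (fL L) T U x := d15 hg hx hxU (by
      have := wd_mono (G := G) hsub2 x
      omega)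
    simp at this
    omega
  obtain ⟨p, hp, hxp⟩ := ex_of_pos h0
  have hxS : x ∉ S := fun h => hx (hsub h)
  have hpS : p ∉ S := fun h => hp (hsub h)
  have huS : u ∈ S := by
    by_contra hc
    exact hnadj u x hc hu hx hux
  have hSu : 2 ≤ wd G S u := by
    have a1 := wd_pos hxS hux
    have a2 := ha x p u hxS hpS hxp huS
    by_contra hc
    exact a2 (by omega) hux
  obtain ⟨x2, hx2x, hx2S, hux2⟩ := ex_other hSu x
  have hx2T : x2 ∈ T := by
    by_contra hc
    exact hx2x (eq_of_wd_le_one (by omega) hc hux2 hx hux)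
  have hx21 : wd G S0 x2 = 1 := by
    rcases hnew x2 hx2S hx2T with rfl | rfl <;> assumption
  have hx01 := C.pair1 hS h2 hxS hpS hxp
  have huL : u ∉ L := by
    intro huL
    obtain ⟨a, b, hab, ha0, hb0, ha2, hb2, hua, hub⟩ := C.EL u huL
    refine wd_four (C.w3 (Finset.Subset.refl S0) u) hab (c := x) (d := x2) ?_ ?_ ?_ ?_ hx2x.symm
      ha0 hb0 (n0 hS hxS) (n0 hS hx2S) hua hub hux hux2 <;>
    · rintro rfl
      omega
  have huu' : u' ≠ u := by
    rintro rfl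
    have n1 : x ≠ z := by rintro rfl; exact hx hzT
    have n2 : x ≠ y := by rintro rfl; exact hx (hadj hzy)
    obtain ⟨c, hc⟩ : ∃ c, c = S0 := ⟨_, rfl⟩
    have : ({x, z, y} : Finset V) ⊆ nb G S0 u' := by
      intro b hb
      simp at hb
      rcases hb with rfl | rfl | rfl <;> rw [mem_nb]
      · exact ⟨n0 hS hxS, hux⟩
      · exact ⟨hz0, hu'z⟩
      · exact ⟨hy0, hu'y⟩
    have := Finset.card_le_card this
    rw [Finset.card_insert_of_notMem (by simp [n1, n2]), Finset.card_pair hzy.ne] at this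
    rw [wd] at hu'2
    omega
  have g38 : Phi G (fL L) T + 38 ≤ Phi G (fL L) S := by
    have := Phi_drop (G := G) hg hsub [z, y, u', u]
      (by simp [hzy.ne, huu']
          grind)
    have e4 : 1 ≤ dr G (fL L) S T u := dN1 huS hsub huL (by omega) (by omega)
    simp at this
    omega
  obtain ⟨w, hw0, hwx, hwp, hwd⟩ := C.edge_blue (n0 hS hxS) (n0 hS hpS) hxp
  have hwu : u ≠ w := by
    rintro rfl
    exact hxp.ne (eq_of_wd_le_one (by omega) hx hux hp hwp)
  have := Phi_drop (G := G) hg hsub2 [u, x, w] (by simp [hux.ne, hwu, hwx.ne.symm])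
  have k1 := dN6 hu hsub2 huL hpw2 (by omega)
  have k2 := d9 hx hxU ((wd_mono (G := G) hsub2 x).trans hx1) (C.nL hsT hx)
  have k3 := hwd T U hsT hsub2 hx hxU
  simp at this
  omega

lemma iso_other (C : Ctx G S0 L) (hS : S0 ⊆ S) {x : V} (hx : x ∉ S) (h0 : wd G S x = 0) (w : V) :
    ∃ a, a ≠ w ∧ a ∈ S ∧ a ∉ L ∧ G.Adj a x := by
  obtain ⟨w1, w2, hw, hw1, hw2, hw1L, hw2L, hw1u, hw2u⟩ := C.iso_two hS hx h0
  by_cases h : w1 = w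
  · exact ⟨w2, fun h' => hw (h.trans h'.symm), hw2, hw2L, hw2u⟩
  · exact ⟨w1, h, hw1, hw1L, hw1u⟩

lemma c4 (C : Ctx G S0 L) (hS : S0 ⊆ S) (h0 : ∀ x, x ∉ S → wd G S x = 0)
    (hx : ∃ x, x ∉ S) : Step G (fL L) S := by
  have hg := good_fL L
  by_cases h3 : ∃ w, w ∈ S ∧ w ∉ L ∧ 3 ≤ wd G S w
  · obtain ⟨w, hw, hwL, hw3⟩ := h3
    obtain ⟨x, _, _, hx', hwx⟩ := ex_third hw3 w w
    obtain ⟨a, hax, _, ha', hwa⟩ := ex_third hw3 x x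
    obtain ⟨b, hbx, hba, hb', hwb⟩ := ex_third hw3 x a
    apply C.fin39 hS hx' (mem_cn.2 (Or.inr hwx))
    have hsub := sub_played (G := G) S w
    have hpw := wd_played (G := G) S w
    have hadj := @mem_played' _ _ G S w
    generalize hT : S ∪ cn G w = T at *
    have h0' : ∀ x, x ∉ S → wd G T x = 0 := by
      intro x hx
      have := h0 x hx
      have := wd_mono (G := G) hsub x
      omega
    have := Phi_drop (G := G) hg hsub [w, x, a, b]
      (by simp [hwx.ne, hwa.ne, hwb.ne, hax.symm, hbx.symm, hba.symm])
    have e1 := dR7 (L := L) hw hsub hpw hw3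
    have e2 := d15 hg hx' (hadj hwx) (h0' _ hx')
    have e3 := d15 hg ha' (hadj hwa) (h0' _ ha')
    have e4 := d15 hg hb' (hadj hwb) (h0' _ hb')
    simp at this
    omega
  push Not at h3
  by_cases h2 : ∃ w, w ∈ S ∧ w ∉ L ∧ 2 ≤ wd G S w
  · obtain ⟨w, hw, hwL, hw2⟩ := h2
    obtain ⟨x, y, hxy, hx', hwx, hy', hwy⟩ := ex_two hw2
    obtain ⟨a, haw, haS, haL, hax⟩ := C.iso_other hS hx' (h0 x hx') w
    obtain ⟨b, hbw, hbS, hbL, hby⟩ := C.iso_other hS hy' (h0 y hy') w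
    apply C.fin39 hS hx' (mem_cn.2 (Or.inr hwx))
    have hsub := sub_played (G := G) S w
    have hpw := wd_played (G := G) S w
    have hadj := @mem_played' _ _ G S w
    generalize hT : S ∪ cn G w = T at *
    have h0' : ∀ x, x ∉ S → wd G T x = 0 := by
      intro x hx
      have := h0 x hx
      have := wd_mono (G := G) hsub x
      omega
    have e1 := dN7 (L := L) hw hsub hwL hpw hw2
    have e2 := d15 hg hx' (hadj hwx) (h0' _ hx')
    have e3 := d15 hg hy' (hadj hwy) (h0' _ hy')
    have a3 := h3 a haS haL
    have b3 := h3 b hbS hbL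
    by_cases hab : a = b
    · subst hab
      have := Phi_drop (G := G) hg hsub [w, x, y, a]
        (by simp [hwx.ne, hwy.ne, hxy, haw.symm, hax.ne.symm, hby.ne.symm])
      have a4 := wd_drop2 hsub hxy hx' (hadj hwx) hax hy' (hadj hwy) hby
      have e4 := dN7 (G := G) (L := L) haS hsub haL (by omega) (by omega)
      simp at this
      omega
    · have a4 := wd_drop1 hsub hx' (hadj hwx) hax
      have b4 := wd_drop1 hsub hy' (hadj hwy) hby
      have e4 := dN1 (L := L) haS hsub haL a4 (by omega)
      have e5 := dN1 (L := L) hbS hsub hbL b4 (by omega)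
      have := Phi_drop (G := G) hg hsub [w, x, y, a, b]
        (by simp [hwx.ne, hwy.ne, hxy, haw.symm, hbw.symm, hab, hax.ne.symm, hby.ne.symm]
            grind)
      simp at this
      omega
  push Not at h2
  have key : ∀ T U x, S ⊆ T → T ⊆ U → x ∉ T → x ∈ U →
      Phi G (fL L) U + 27 ≤ Phi G (fL L) T := by
    intro T U x hST hTU hxT hxU
    have hxS : x ∉ S := fun h => hxT (hST h)
    obtain ⟨w1, w2, hw, hw1, hw2, hw1L, hw2L, hw1u, hw2u⟩ := C.iso_two hS hxS (h0 x hxS)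
    have := Phi_drop (G := G) hg hTU [x, w1, w2]
      (by simp [hw1u.ne.symm, hw2u.ne.symm, hw])
    have f1 : 15 ≤ dr G (fL L) T U x := d15 hg hxT hxU (by
      have := wd_mono (G := G) (hST.trans hTU) x
      have := h0 x hxS
      omega)
    have f2 : 6 ≤ dr G (fL L) T U w1 := by
      have a1 := wd_drop1 hTU hxT hxU hw1u
      have a2 := h2 w1 hw1 hw1L
      have a3 := wd_mono (G := G) hST w1
      exact dN6 (hST hw1) hTU hw1L (by omega) (by omega)
    have f3 : 6 ≤ dr G (fL L) T U w2 := by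
      have a1 := wd_drop1 hTU hxT hxU hw2u
      have a2 := h2 w2 hw2 hw2L
      have a3 := wd_mono (G := G) hST w2
      exact dN6 (hST hw2) hTU hw2L (by omega) (by omega)
    simp at this
    omega
  obtain ⟨x, hx⟩ := hx
  have hsub := sub_played (G := G) S x
  have k1 := key S (S ∪ cn G x) x (Finset.Subset.refl S) hsub hx (mem_played S x)
  refine ⟨x, ⟨x, hx, mem_cn.2 (Or.inl rfl)⟩, k1, ?_⟩
  intro u y hy hyu
  have k2 := key (S ∪ cn G x) (S ∪ cn G x ∪ cn G u) y hsub (sub_played _ u) hy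
    (Finset.mem_union_right _ hyu)
  omega

lemma cstep (C : Ctx G S0 L) (hS : S0 ⊆ S) (hx : ∃ x, x ∉ S) : Step G (fL L) S := by
  by_cases h1 : ∃ v, v ∉ S ∧ 2 ≤ wd G S v
  · obtain ⟨v, hv, h⟩ := h1
    exact C.c1 hS hv h
  push Not at h1
  have h1' : ∀ x, x ∉ S → wd G S x ≤ 1 := fun x hx => by have := h1 x hx; omega
  by_cases h2 : ∃ x p, x ∉ S ∧ p ∉ S ∧ G.Adj x p ∧ wd G S0 x = 2
  · obtain ⟨x, p, hx, hp, hxp, h⟩ := h2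
    exact C.c2 hS h1' hx hp hxp h
  push Not at h2
  by_cases h3 : ∃ x p, x ∉ S ∧ p ∉ S ∧ G.Adj x p
  · obtain ⟨x, p, hx, hp, hxp⟩ := h3
    exact C.c3 hS h1' h2 hx hp hxp
  push Not at h3
  apply C.c4 hS _ hx
  intro x hx
  apply wd_zero
  intro u hxu
  by_contra hc
  exact h3 x u hx hc hxu

end Ctx

lemma phaseC (H : Finset (Finset V)) (C : Ctx (Gr H) S0 L) (hS : S0 ⊆ S) :
    27 * (domGameVal H true S : ℤ) ≤ Phi (Gr H) (fL L) S := by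
  refine phase_step H (Phi (Gr H) (fL L)) (fun S => S0 ⊆ S) (Phi_nonneg (good_fL L))
    (fun S T h h' => h'.trans h) ?_ S hS
  intro S hS hx
  exact Or.inr (C.cstep hS hx)

end DG

namespace DG

variable [Fintype V] {G : SimpleGraph V} {f : V → ℕ → ℤ} {S T S0 L : Finset V}

lemma wd_three {x a b c : V} (h : wd G S x ≤ 2) (hab : a ≠ b) (hac : a ≠ c) (hbc : b ≠ c)
    (ha : a ∉ S) (hb : b ∉ S) (hc : c ∉ S)
    (xa : G.Adj x a) (xb : G.Adj x b) (xc : G.Adj x c) : False := by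
  have : ({a, b, c} : Finset V) ⊆ nb G S x := by
    intro y hy
    simp at hy
    rcases hy with rfl | rfl | rfl <;> rw [mem_nb] <;> constructor <;> assumption
  have h2 := Finset.card_le_card this
  have h4 : ({a, b, c} : Finset V).card = 3 := by
    rw [Finset.card_insert_of_notMem (by simp [hab, hac]), Finset.card_pair hbc]
  rw [wd] at h
  omega

lemma stall14 {u x : V} (hx : x ∉ S) (hxu : x ∈ cn G u) :
    Phi G (fL ∅) (S ∪ cn G u) + 14 ≤ Phi G (fL ∅) S := by
  have hg := good_fL (∅ : Finset V)
  have hsub := sub_played (G := G) S u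
  have hw := wd_played (G := G) S u
  have hxT : x ∈ S ∪ cn G u := Finset.mem_union_right _ hxu
  by_cases hu : u ∈ S
  swap
  · have := Phi_drop (G := G) hg hsub [u] (by simp)
    have h1 := d15 hg hu (mem_played S u) hw
    simp at this
    omega
  have hux : G.Adj u x := by
    rcases mem_cn.1 hxu with h | h
    · subst h; exact absurd hu hx
    · exact h
  have := Phi_drop (G := G) hg hsub [u, x] (by simp [hux.ne])
  have h1 := dN6 (L := ∅) hu hsub (by simp) hw (wd_pos hx hux)
  have h3 := d8 (G := G) hg hx hxT
  simp at this
  omega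

lemma fin40 {v x : V} (hx : x ∉ S) (hxv : x ∈ cn G v)
    (h : Phi G (fL ∅) (S ∪ cn G v) + 40 ≤ Phi G (fL ∅) S) : Step G (fL ∅) S := by
  refine ⟨v, ⟨x, hx, hxv⟩, by omega, ?_⟩
  intro u y hy hyu
  have := stall14 hy hyu
  omega

lemma b1 (h3 : ∀ v, (cn G v \ S).card ≤ 3)
    (tri : ∀ a b, G.Adj a b → ∃ c, G.Adj c a ∧ G.Adj c b)
    {v p : V} (hv : v ∉ S) (hp : p ∉ S) (hvp : G.Adj v p) (hv2 : wd G S v = 2)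
    (hp1 : wd G S p = 1) : Step G (fL ∅) S := by
  have hg := good_fL (∅ : Finset V)
  obtain ⟨q, hqp, hq, hvq⟩ := ex_other (by omega : 2 ≤ wd G S v) p
  obtain ⟨c, hcp, hcv⟩ := tri p v hvp.symm
  have hc : c ∈ S := by
    by_contra hc
    exact hcv.ne (eq_of_wd_le_one (by omega) hc hcp.symm hv hvp.symm)
  apply fin40 hv (mem_cn.2 (Or.inl rfl))
  have hsub := sub_played (G := G) S v
  have hw := wd_played (G := G) S v
  have hadj := @mem_played' _ _ G S v
  have hvT := mem_played (G := G) S v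
  generalize hT : S ∪ cn G v = T at *
  have := Phi_drop (G := G) hg hsub [v, p, q, c]
    (by simp [hvp.ne, hvq.ne, hqp.symm]
        grind)
  have e1 := d15 hg hv hvT hw
  have e2 : 15 ≤ dr G (fL ∅) S T p := d15 hg hp (hadj hvp) (by
    have := wd_drop1 hsub hv hvT hvp.symm
    omega)
  have e3 : 9 ≤ dr G (fL ∅) S T q := d9 hq (hadj hvq) (by
    have := wd_drop1 hsub hv hvT hvq.symm
    have := wd_white h3 hq
    omega) (by simp)
  have e4 : 1 ≤ dr G (fL ∅) S T c := by
    have a1 := wd_drop2 hsub hvp.ne hv hvT hcv hp (hadj hvp) hcp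
    have a2 := wd_any h3 c
    exact dN1 hc hsub (by simp) (by omega) (by omega)
  simp at this
  omega

lemma b2 (h3 : ∀ v, (cn G v \ S).card ≤ 3)
    {v p q : V} (hv : v ∉ S) (hp : p ∉ S) (hq : q ∉ S) (hvp : G.Adj v p) (hvq : G.Adj v q)
    (hpq : G.Adj p q) : Step G (fL ∅) S := by
  have hg := good_fL (∅ : Finset V)
  apply fin40 hv (mem_cn.2 (Or.inl rfl))
  have hsub := sub_played (G := G) S v
  have hw := wd_played (G := G) S v
  have hadj := @mem_played' _ _ G S v
  have hvT := mem_played (G := G) S v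
  generalize hT : S ∪ cn G v = T at *
  have := Phi_drop (G := G) hg hsub [v, p, q] (by simp [hvp.ne, hvq.ne, hpq.ne])
  have e1 := d15 hg hv hvT hw
  have e2 : 15 ≤ dr G (fL ∅) S T p := d15 hg hp (hadj hvp) (by
    have := wd_drop2 hsub hvq.ne hv hvT hvp.symm hq (hadj hvq) hpq
    have := wd_white h3 hp
    omega)
  have e3 : 15 ≤ dr G (fL ∅) S T q := d15 hg hq (hadj hvq) (by
    have := wd_drop2 hsub hvp.ne hv hvT hvq.symm hp (hadj hvp) hpq.symm
    have := wd_white h3 hq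
    omega)
  simp at this
  omega

lemma b4 (h3 : ∀ v, (cn G v \ S).card ≤ 3)
    {v p q u : V} (hv : v ∉ S) (hp : p ∉ S) (hq : q ∉ S) (hpq : p ≠ q) (hvp : G.Adj v p)
    (hvq : G.Adj v q) (hu : u ∈ S) (hup : G.Adj u p) (huv : G.Adj u v) (huq : G.Adj u q) :
    Step G (fL ∅) S := by
  have hg := good_fL (∅ : Finset V)
  apply fin40 hv (mem_cn.2 (Or.inl rfl))
  have hsub := sub_played (G := G) S v
  have hw := wd_played (G := G) S v
  have hadj := @mem_played' _ _ G S v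
  have hvT := mem_played (G := G) S v
  generalize hT : S ∪ cn G v = T at *
  have := Phi_drop (G := G) hg hsub [v, p, q, u]
    (by simp [hvp.ne, hvq.ne, hpq, hup.ne.symm, huv.ne.symm, huq.ne.symm])
  have e1 := d15 hg hv hvT hw
  have e2 : 9 ≤ dr G (fL ∅) S T p := d9 hp (hadj hvp) (by
    have := wd_drop1 hsub hv hvT hvp.symm
    have := wd_white h3 hp
    omega) (by simp)
  have e3 : 9 ≤ dr G (fL ∅) S T q := d9 hq (hadj hvq) (by
    have := wd_drop1 hsub hv hvT hvq.symm
    have := wd_white h3 hq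
    omega) (by simp)
  have e4 : 7 ≤ dr G (fL ∅) S T u := by
    refine dN7 hu hsub (by simp) ?_ (wd_two hpq hp hup hq huq)
    apply wd_zero
    intro d hud
    by_contra hd
    have hdS : d ∉ S := fun h => hd (hsub h)
    have hn : ∀ y, y ∈ T → y ≠ d := by
      rintro y hy rfl
      exact hd hy
    exact wd_four (wd_any h3 u) hvp.ne hvq.ne (hn v hvT) hpq (hn p (hadj hvp)) (hn q (hadj hvq))
      hv hp hq hdS huv hup huq hud
  simp at this
  omega

lemma b5 (h3 : ∀ v, (cn G v \ S).card ≤ 3)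
    {z x v u : V} (hz : z ∉ S) (hz0 : wd G S z = 0) (hx : x ∉ S) (hv : v ∉ S) (hxv : G.Adj x v)
    (hu : u ∈ S) (huz : G.Adj u z) (hux : G.Adj u x) (huv : G.Adj u v) :
    Step G (fL ∅) S := by
  have hg := good_fL (∅ : Finset V)
  apply fin40 hx (mem_cn.2 (Or.inr hux))
  have hsub := sub_played (G := G) S u
  have hw := wd_played (G := G) S u
  have hadj := @mem_played' _ _ G S u
  generalize hT : S ∪ cn G u = T at *
  have zx : z ≠ x := by
    rintro rfl
    exact hv (of_wd_zero hz0 hxv)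
  have zv : z ≠ v := by
    rintro rfl
    exact hx (of_wd_zero hz0 hxv.symm)
  have := Phi_drop (G := G) hg hsub [u, z, x, v]
    (by simp [huz.ne, hux.ne, huv.ne, zx, zv, hxv.ne])
  have e1 := dN7 (L := ∅) hu hsub (by simp) hw (wd_two hxv.ne hx hux hv huv)
  have e2 : 15 ≤ dr G (fL ∅) S T z := d15 hg hz (hadj huz) (by
    have := wd_mono (G := G) hsub z
    omega)
  have e3 : 9 ≤ dr G (fL ∅) S T x := d9 hx (hadj hux) (by
    have := wd_drop1 hsub hv (hadj huv) hxv
    have := wd_white h3 hx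
    omega) (by simp)
  have e4 : 9 ≤ dr G (fL ∅) S T v := d9 hv (hadj huv) (by
    have := wd_drop1 hsub hx (hadj hux) hxv.symm
    have := wd_white h3 hv
    omega) (by simp)
  simp at this
  omega

lemma b6 {z y u : V} (hz : z ∉ S) (hy : y ∉ S) (hzy : G.Adj z y) (hz1 : wd G S z = 1)
    (hy1 : wd G S y = 1) (hu : u ∈ S) (huz : G.Adj u z) (huy : G.Adj u y) (hu3 : 3 ≤ wd G S u) :
    Step G (fL ∅) S := by
  have hg := good_fL (∅ : Finset V)
  obtain ⟨x, hxz, hxy, hx, hux⟩ := ex_third hu3 z y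
  apply fin40 hx (mem_cn.2 (Or.inr hux))
  have hsub := sub_played (G := G) S u
  have hw := wd_played (G := G) S u
  have hadj := @mem_played' _ _ G S u
  generalize hT : S ∪ cn G u = T at *
  have := Phi_drop (G := G) hg hsub [u, z, y, x]
    (by simp [huz.ne, hux.ne, huy.ne, hxz.symm, hxy.symm, hzy.ne])
  have e1 := dR7 (L := ∅) hu hsub hw hu3
  have e2 : 15 ≤ dr G (fL ∅) S T z := d15 hg hz (hadj huz) (by
    have := wd_drop1 hsub hy (hadj huy) hzy
    omega)
  have e3 : 15 ≤ dr G (fL ∅) S T y := d15 hg hy (hadj huy) (by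
    have := wd_drop1 hsub hz (hadj huz) hzy.symm
    omega)
  have e4 := d8 (G := G) hg hx (hadj hux)
  simp at this
  omega

noncomputable def LL (G : SimpleGraph V) (S : Finset V) : Finset V :=
  Finset.univ.filter (fun u => u ∈ S ∧ ∃ x v, x ∉ S ∧ v ∉ S ∧ G.Adj x v ∧ wd G S x = 2 ∧
    wd G S v = 2 ∧ G.Adj u x ∧ G.Adj u v)

lemma mem_LL {u : V} : u ∈ LL G S ↔ u ∈ S ∧ ∃ x v, x ∉ S ∧ v ∉ S ∧ G.Adj x v ∧ wd G S x = 2 ∧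
    wd G S v = 2 ∧ G.Adj u x ∧ G.Adj u v := by simp [LL]

lemma mkCtx (h3 : ∀ v, (cn G v \ S).card ≤ 3)
    (tri : ∀ a b, G.Adj a b → ∃ c, G.Adj c a ∧ G.Adj c b) (iso : ∀ v, ∃ u, G.Adj v u)
    (h : ¬ Step G (fL ∅) S) : Ctx G S (LL G S) where
  h3 := h3
  tri := tri
  iso := iso
  LS := fun u hu => (mem_LL.1 hu).1
  EC := by
    intro x p hx hp hxp hx2
    have h1 : wd G S p ≠ 1 := fun hh => h (b1 h3 tri hx hp hxp hx2 hh)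
    have h2 := wd_white h3 hp
    have h4 := wd_pos hx hxp.symm
    have h5 : wd G S p = 2 := by omega
    obtain ⟨c, hcx, hcp⟩ := tri x p hxp
    have hc : c ∈ S := by
      by_contra hc
      exact h (b2 h3 hx hp hc hxp hcx.symm hcp.symm)
    exact ⟨h5, c, mem_LL.2 ⟨hc, x, p, hx, hp, hxp, hx2, h5, hcx, hcp⟩, hcx, hcp⟩
  Etri := by
    intro p v q u hp hv hq hpq hvp hvq hu hup huv huq
    exact h (b4 h3 hv hp hq hpq hvp hvq hu hup huv huq)
  Etf := by
    intro p v q hp hv hq hvp hvq hpq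
    exact h (b2 h3 hv hp hq hvp hvq hpq)
  EK := by
    intro x p hx hp hxp hx1
    have h1 : wd G S p ≠ 2 := fun hh => h (b1 h3 tri hp hx hxp.symm hh hx1)
    have h2 := wd_white h3 hp
    have h4 := wd_pos hx hxp.symm
    have h5 : wd G S p = 1 := by omega
    obtain ⟨c, hcx, hcp⟩ := tri x p hxp
    have hc : c ∈ S := by
      by_contra hc
      exact hcp.ne (eq_of_wd_le_one (by omega) hc hcx.symm hp hxp)
    have h6 := wd_two hxp.ne hx hcx hp hcp
    have h7 : ¬ 3 ≤ wd G S c := fun hh => h (b6 hx hp hxp hx1 h5 hc hcx hcp hh)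
    refine ⟨h5, c, hc, ?_, by omega, hcx, hcp⟩
    intro hL
    obtain ⟨_, a, b, ha, hb, hab, ha2, hb2, hca, hcb⟩ := mem_LL.1 hL
    refine wd_three (a := x) (b := p) (c := a) (by omega) hxp.ne ?_ ?_ hx hp ha hcx hcp hca <;>
    · rintro rfl
      omega
  Eiso := by
    intro x u hx hx0 hu hux
    obtain ⟨hu', a, b, ha, hb, hab, ha2, hb2, hca, hcb⟩ := mem_LL.1 hu
    exact h (b5 h3 hx hx0 ha hb hab hu' hux hca hcb)
  EL := by
    intro u hu
    obtain ⟨hu', a, b, ha, hb, hab, ha2, hb2, hca, hcb⟩ := mem_LL.1 hu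
    exact ⟨a, b, hab.ne, ha, hb, ha2, hb2, hca, hcb⟩

lemma Phi_le {f g : V → ℕ → ℤ} (h : ∀ x k, f x k ≤ g x k) (S : Finset V) :
    Phi G f S ≤ Phi G g S := by
  apply Finset.sum_le_sum
  intro x _
  unfold wt
  split_ifs
  · exact h _ _
  · exact le_refl _

lemma phaseB (H : Finset (Finset V))
    (tri : ∀ a b, (Gr H).Adj a b → ∃ c, (Gr H).Adj c a ∧ (Gr H).Adj c b)
    (iso : ∀ v, ∃ u, (Gr H).Adj v u) (h3 : ∀ v, (cn (Gr H) v \ S).card ≤ 3) :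
    27 * (domGameVal H true S : ℤ) ≤ Phi (Gr H) (fL ∅) S := by
  refine phase_step H (Phi (Gr H) (fL ∅)) (fun S => ∀ v, (cn (Gr H) v \ S).card ≤ 3)
    (Phi_nonneg (good_fL ∅)) ?_ ?_ S h3
  · intro S T hST h v
    exact (Finset.card_le_card (Finset.sdiff_subset_sdiff (Finset.Subset.refl _) hST)).trans (h v)
  intro S h3 hx
  by_cases h : Step (Gr H) (fL ∅) S
  · exact Or.inr h
  left
  refine (phaseC H (mkCtx h3 tri iso h) (Finset.Subset.refl S)).trans (Phi_le ?_ S)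
  intro x k
  unfold fL
  simp only [Finset.notMem_empty, if_false]
  split_ifs <;> omega

def fA (_ : V) (k : ℕ) : ℤ := if k = 0 then 0 else 7

lemma good_fA : Good (fA : V → ℕ → ℤ) := by
  constructor
  · intro x; simp [fA]
  · intro x a b h; unfold fA; split_ifs <;> omega
  · intro x a; unfold fA; split_ifs <;> omega

lemma dA7 {x : V} (hx : x ∈ S) (hST : S ⊆ T) (h : wd G T x = 0) (h3 : 1 ≤ wd G S x) :
    7 ≤ dr G fA S T x := by
  simp only [dr, wt, hx, hST hx, fA, h, if_true]; split_ifs <;> omega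

lemma stallA {u x : V} (hx : x ∉ S) (hxu : x ∈ cn G u) :
    Phi G fA (S ∪ cn G u) + 15 ≤ Phi G fA S := by
  have hg := good_fA (V := V)
  have hsub := sub_played (G := G) S u
  have hw := wd_played (G := G) S u
  have hxT : x ∈ S ∪ cn G u := Finset.mem_union_right _ hxu
  by_cases hu : u ∈ S
  swap
  · have := Phi_drop (G := G) hg hsub [u] (by simp)
    have h1 := d15 hg hu (mem_played S u) hw
    simp at this
    omega
  have hux : G.Adj u x := by
    rcases mem_cn.1 hxu with h | h
    · subst h; exact absurd hu hx
    · exact h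
  have := Phi_drop (G := G) hg hsub [u, x] (by simp [hux.ne])
  have h1 := dA7 hu hsub hw (wd_pos hx hux)
  have h3 := d8 (G := G) hg hx hxT
  simp at this
  omega

lemma domA {v : V} (h : 4 ≤ (cn G v \ S).card) :
    Phi G fA (S ∪ cn G v) + 39 ≤ Phi G fA S := by
  have hg := good_fA (V := V)
  have hsub := sub_played (G := G) S v
  have hw := wd_played (G := G) S v
  have h8 : ∀ x ∈ (cn G v \ S).erase v, (8 : ℤ) ≤ dr G fA S (S ∪ cn G v) x := by
    intro x hx
    have hx := Finset.mem_sdiff.1 (Finset.mem_of_mem_erase hx)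
    exact d8 hg hx.2 (Finset.mem_union_right _ hx.1)
  have hsum := Finset.card_nsmul_le_sum _ (fun x => dr G fA S (S ∪ cn G v) x) _ h8
  have hins := Finset.sum_insert (f := dr G fA S (S ∪ cn G v))
    (Finset.notMem_erase v (cn G v \ S))
  have hp := Phi_fin (G := G) hg hsub (insert v ((cn G v \ S).erase v))
  rw [hins] at hp
  beta_reduce at hp hsum
  simp only [nsmul_eq_mul] at hsum
  by_cases hv : v ∈ S
  · have he : (cn G v \ S).erase v = cn G v \ S := Finset.erase_eq_of_notMem (by simp [hv])
    rw [he] at hsum hp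
    obtain ⟨x, hx⟩ := Finset.card_pos.1 (by omega : 0 < (cn G v \ S).card)
    rw [Finset.mem_sdiff, mem_cn] at hx
    have hvx : G.Adj v x := by
      rcases hx.1 with h | h
      · subst h; exact absurd hv hx.2
      · exact h
    have := dA7 hv hsub hw (wd_pos hx.2 hvx)
    omega
  · have := d15 hg hv (mem_played S v) hw
    have hc := Finset.card_erase_of_mem
      (show v ∈ cn G v \ S from Finset.mem_sdiff.2 ⟨mem_cn.2 (Or.inl rfl), hv⟩)
    omega

lemma phaseA (H : Finset (Finset V))
    (tri : ∀ a b, (Gr H).Adj a b → ∃ c, (Gr H).Adj c a ∧ (Gr H).Adj c b)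
    (iso : ∀ v, ∃ u, (Gr H).Adj v u) :
    27 * (domGameVal H true ∅ : ℤ) ≤ 15 * Fintype.card V := by
  have key : 27 * (domGameVal H true ∅ : ℤ) ≤ Phi (Gr H) fA ∅ := by
    refine phase_step H (Phi (Gr H) fA) (fun _ => True)
      (Phi_nonneg good_fA) (fun _ _ _ _ => trivial) ?_ ∅ trivial
    intro S _ _
    by_cases h : ∃ v, 4 ≤ (cn (Gr H) v \ S).card
    · right
      obtain ⟨v, hv⟩ := h
      have h1 := domA hv
      obtain ⟨x, hx⟩ := Finset.card_pos.1 (by omega : 0 < (cn (Gr H) v \ S).card)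
      rw [Finset.mem_sdiff] at hx
      refine ⟨v, ⟨x, hx.2, hx.1⟩, by omega, ?_⟩
      intro u y hy hyu
      have := stallA hy hyu
      omega
    · left
      push Not at h
      refine (phaseB H tri iso (fun v => by have := h v; omega)).trans (Phi_le ?_ S)
      intro x k
      unfold fL fA
      simp only [Finset.notMem_empty, if_false]
      split_ifs <;> omega
  refine key.trans (le_of_eq ?_)
  simp [Phi, wt, mul_comm]

lemma Gr_tri (H : Finset (Finset V)) (hu : ∀ e ∈ H, e.card = 3) (a b : V)
    (h : (Gr H).Adj a b) : ∃ c, (Gr H).Adj c a ∧ (Gr H).Adj c b := by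
  obtain ⟨hab, e, he, ha, hb⟩ := h
  have h1 := hu e he
  have : ∃ c ∈ e, c ≠ a ∧ c ≠ b := by
    by_contra hc
    push Not at hc
    have hsub : e ⊆ {a, b} := by
      intro c hce
      by_cases hca : c = a
      · simp [hca]
      · simp [hc c hce hca]
    have := Finset.card_le_card hsub
    have := Finset.card_le_two (a := a) (b := b)
    omega
  obtain ⟨c, hce, hca, hcb⟩ := this
  exact ⟨c, ⟨hca, e, he, hce, ha⟩, ⟨hcb, e, he, hce, hb⟩⟩

end DG

/-- if `H` is a 3-uniform hypergraph on `n` vertices with no isolated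
vertices, then `γ_g(H) ≤ (5/9) n`. -/
theorem stmt_9 (V : Type) [Fintype V] (H : Finset (Finset V))
    (huniform : ∀ e ∈ H, e.card = 3)
    (hisol : ∀ v : V, ∃ u : V, u ≠ v ∧ ∃ e ∈ H, u ∈ e ∧ v ∈ e) :
    (gammaGame H : ℝ) ≤ 5 / 9 * Fintype.card V := by
  have h := DG.phaseA H (DG.Gr_tri H huniform) (fun v => by
    obtain ⟨u, huv, e, he, h1, h2⟩ := hisol v
    exact ⟨u, huv.symm, e, he, h2, h1⟩)
  have h' : (27 : ℝ) * (domGameVal H true ∅ : ℝ) ≤ 15 * (Fintype.card V : ℝ) := by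
    exact_mod_cast h
  unfold gammaGame
  linarith
end
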